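/- arXiv:1608.01915 — 3 statements merged into one kernel-verified Lean document; each statement's English description precedes it below -/
import Mathlib

section
/- There exists a universal constant C ∈ (0,∞) with the following property. Let q ∈ [2,∞), n ∈ ℕ, and let (X,‖·‖_X) and (Y,‖·‖_Y) be Banach spaces with dim(X)=n and m_q(Y)<∞. Let |·| be a Hilbertian norm on X, identifying X with ℝ^n. Then for every γ ∈ (0,∞) and every smooth compactly supported function f:ℝ^n→Y: (∫_{ℝ^n} ∫_0^∞ fint_{x+tB_X} ‖f(y) − Taylor¹_x(H_{γt²}f)(y)‖_Y^q / t^{q+1} dy dt dx)^{1/q} ≤ C·[ (m_q(Y)/√γ)·(fint_{B_X} |x|^q·‖x·∇f‖_{L_q(ℝ^n;Y)}^q dx)^{1/q} + m_q(Y)·√(γn)·fint_{S^{n−1}} ‖σ·∇f‖_{L_q(ℝ^n;Y)} dσ ]. -/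
open MeasureTheory Metric Set ENNReal

noncomputable section

universe u

/-- `m` is an upper bound for the martingale cotype `q` constant `𝔪_q(Y)` of `Y`. -/
def MartCotypeBound (q : ℝ) (Y : Type*) [NormedAddCommGroup Y] [NormedSpace ℝ Y]
    [CompleteSpace Y] (m : ℝ) : Prop :=
  ∀ (Ω : Type) [MeasurableSpace Ω] (μ : Measure Ω) [IsProbabilityMeasure μ]
    (ℱ : Filtration ℕ ‹MeasurableSpace Ω›) (M : ℕ → Ω → Y), Martingale M ℱ μ →
    ∀ B : ℝ≥0∞, (∀ k, ∫⁻ ω, (‖M k ω‖₊ : ℝ≥0∞) ^ q ∂μ ≤ B) →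
      ∑' k : ℕ, ∫⁻ ω, (‖M (k + 1) ω - M k ω‖₊ : ℝ≥0∞) ^ q ∂μ ≤ ENNReal.ofReal m ^ q * B

/-- `N` is a norm on the real vector space `V`. -/
def IsNorm {V : Type*} [AddCommGroup V] [Module ℝ V] (N : V → ℝ) : Prop :=
  (∀ x, N x = 0 → x = 0) ∧ (∀ (a : ℝ) (x : V), N (a • x) = |a| * N x) ∧
    (∀ x y : V, N (x + y) ≤ N x + N y)

/-- The heat kernel `h_t(x) = (4πt)^{-n/2} e^{-|x|²/(4t)}` on `ℝⁿ`. -/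
def heatKernel (n : ℕ) (t : ℝ) (x : EuclideanSpace ℝ (Fin n)) : ℝ :=
  (4 * Real.pi * t) ^ (-(n : ℝ) / 2) * Real.exp (-‖x‖ ^ 2 / (4 * t))

/-- The heat evolute `H_t f = h_t ∗ f`. -/
def heat {n : ℕ} {Y : Type*} [NormedAddCommGroup Y] [NormedSpace ℝ Y]
    (t : ℝ) (f : EuclideanSpace ℝ (Fin n) → Y) (x : EuclideanSpace ℝ (Fin n)) : Y :=
  ∫ z, heatKernel n t z • f (x - z)

/-- The first-order Taylor polynomial `Taylor¹_x(g)(y) = g(x) + (y-x)·∇g(x)`. -/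
def taylor1 {n : ℕ} {Y : Type*} [NormedAddCommGroup Y] [NormedSpace ℝ Y]
    (g : EuclideanSpace ℝ (Fin n) → Y) (x y : EuclideanSpace ℝ (Fin n)) : Y :=
  g x + ∑ j, (y - x) j • fderiv ℝ g x (EuclideanSpace.single j 1)

/-- The directional derivative `(z·∇)f = Σ_j z_j ∂_j f`. -/
def dirDeriv {n : ℕ} {Y : Type*} [NormedAddCommGroup Y] [NormedSpace ℝ Y]
    (z : EuclideanSpace ℝ (Fin n)) (f : EuclideanSpace ℝ (Fin n) → Y)
    (y : EuclideanSpace ℝ (Fin n)) : Y :=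
  ∑ j, z j • fderiv ℝ f y (EuclideanSpace.single j 1)

lemma minkowski_lint {α β : Type*} [MeasurableSpace α] [MeasurableSpace β] (μ : Measure α)
    (ν : Measure β) [SFinite μ] [SFinite ν] {F : α → β → ℝ≥0∞}
    (hF : Measurable (Function.uncurry F)) {q : ℝ} (hq : 2 ≤ q) :
    (∫⁻ x, (∫⁻ w, F x w ∂ν) ^ q ∂μ) ^ (1 / q) ≤ ∫⁻ w, (∫⁻ x, F x w ^ q ∂μ) ^ (1 / q) ∂ν := by
  have hq0 : 0 < q := by linarith
  have hq1 : 1 < q := by linarith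
  set φ : β → ℝ≥0∞ := fun w => (∫⁻ x, F x w ^ q ∂μ) ^ (1 / q) with hφ
  have hφm : Measurable φ := by
    have : Measurable (fun w => ∫⁻ x, F x w ^ q ∂μ) := by
      apply Measurable.lintegral_prod_left
      exact hF.pow_const q
    exact this.pow_const _
  set Z := ∫⁻ w, φ w ∂ν with hZ
  by_cases hZt : Z = ∞
  · rw [hZt]; exact le_top
  have hpq : (Real.conjExponent q).HolderConjugate q := (Real.HolderConjugate.conjExponent hq1).symm
  set p := Real.conjExponent q with hp
  have hp0 : 0 < p := hpq.pos
  have hp1 : q / p = q - 1 := by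
    have := hpq.symm.sub_one_mul_conj
    field_simp
    linarith
  -- pointwise
  have hφq : ∀ w, φ w ^ q = ∫⁻ x, F x w ^ q ∂μ := by
    intro w
    simp only [hφ]
    rw [← ENNReal.rpow_mul, one_div, inv_mul_cancel₀ hq0.ne', ENNReal.rpow_one]
  have h0 : ∀ᵐ x ∂μ, ∀ᵐ w ∂ν, (φ w = 0 → F x w = 0) := by
    have hs : MeasurableSet {z : β × α | φ z.1 = 0 → F z.2 z.1 = 0} := by
      have h1 : MeasurableSet {z : β × α | φ z.1 = 0} :=
        (hφm.comp measurable_fst) (measurableSet_singleton 0)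
      have h2 : MeasurableSet {z : β × α | F z.2 z.1 = 0} :=
        (hF.comp measurable_swap) (measurableSet_singleton 0)
      have : {z : β × α | φ z.1 = 0 → F z.2 z.1 = 0} = {z : β × α | φ z.1 = 0}ᶜ ∪ {z : β × α | F z.2 z.1 = 0} := by
        ext z; simp [imp_iff_not_or]
      rw [this]; exact h1.compl.union h2
    refine (Measure.ae_ae_comm (p := fun w x => φ w = 0 → F x w = 0) hs).1 ?_
    refine Filter.Eventually.of_forall fun w => ?_
    by_cases hw : φ w = 0
    · have h3 := hφq w
      rw [hw, ENNReal.zero_rpow_of_pos hq0] at h3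
      have h4 := (lintegral_eq_zero_iff ((hF.comp (measurable_id.prodMk measurable_const) :
        Measurable fun x => F x w).pow_const q)).1 h3.symm
      filter_upwards [h4] with x hx _
      simpa [hq0.le, hq0, hq0.not_gt] using hx
    · exact Filter.Eventually.of_forall fun x h => absurd h hw
  have hfin : ∀ᵐ w ∂ν, φ w < ∞ := ae_lt_top hφm hZt
  have hmain : ∀ᵐ x ∂μ, (∫⁻ w, F x w ∂ν) ^ q ≤ Z ^ (q - 1) * ∫⁻ w, F x w ^ q * φ w ^ (-(q - 1)) ∂ν := by
    filter_upwards [h0] with x hx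
    have hFx : Measurable fun w => F x w := hF.comp (measurable_const.prodMk measurable_id)
    have e1 : ∫⁻ w, F x w ∂ν ≤ ∫⁻ w, ((fun w => φ w ^ (1 / p)) * (fun w => F x w * φ w ^ (-(1 / p)))) w ∂ν := by
      apply lintegral_mono_ae
      filter_upwards [hx, hfin] with w h1 h2
      by_cases hw : φ w = 0
      · simp [h1 hw]
      · simp only [Pi.mul_apply]
        rw [mul_left_comm, ← ENNReal.rpow_add _ _ hw h2.ne]
        simp
    have e2 := ENNReal.lintegral_mul_le_Lp_mul_Lq ν hpq (f := fun w => φ w ^ (1 / p))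
      (g := fun w => F x w * φ w ^ (-(1 / p))) (hφm.pow_const _).aemeasurable
      (hFx.mul (hφm.pow_const _)).aemeasurable
    have e3 := ENNReal.rpow_le_rpow (e1.trans e2) hq0.le
    refine e3.trans (le_of_eq ?_)
    rw [ENNReal.mul_rpow_of_nonneg _ _ hq0.le, ← ENNReal.rpow_mul, ← ENNReal.rpow_mul]
    have : 1 / q * q = 1 := by field_simp
    rw [this, ENNReal.rpow_one]
    have e4 : 1 / p * q = q - 1 := by rw [← hp1]; ring
    rw [e4]
    congr 1
    · congr 1
      rw [hZ]
      refine lintegral_congr fun w => ?_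
      rw [← ENNReal.rpow_mul]
      have : 1 / p * p = 1 := by field_simp
      rw [this, ENNReal.rpow_one]
    · refine lintegral_congr fun w => ?_
      rw [ENNReal.mul_rpow_of_nonneg _ _ hq0.le, ← ENNReal.rpow_mul]
      congr 2
      rw [neg_mul, e4]
  have hfinal : ∫⁻ x, (∫⁻ w, F x w ∂ν) ^ q ∂μ ≤ Z ^ q := by
    calc _ ≤ ∫⁻ x, Z ^ (q - 1) * ∫⁻ w, F x w ^ q * φ w ^ (-(q - 1)) ∂ν ∂μ := lintegral_mono_ae hmain
      _ = Z ^ (q - 1) * ∫⁻ x, ∫⁻ w, F x w ^ q * φ w ^ (-(q - 1)) ∂ν ∂μ := by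
          rw [lintegral_const_mul' _ _ (ENNReal.rpow_ne_top_of_nonneg (by linarith) hZt)]
      _ = Z ^ (q - 1) * ∫⁻ w, ∫⁻ x, F x w ^ q * φ w ^ (-(q - 1)) ∂μ ∂ν := by
          rw [lintegral_lintegral_swap]
          exact ((hF.pow_const q).mul ((hφm.comp measurable_snd).pow_const _)).aemeasurable
      _ ≤ Z ^ (q - 1) * ∫⁻ w, φ w ∂ν := by
          gcongr with w
          have hm : Measurable fun x => F x w ^ q := (hF.comp (measurable_id.prodMk measurable_const) :
            Measurable fun x => F x w).pow_const q
          rw [lintegral_mul_const _ hm, ← hφq]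
          by_cases hw : φ w = 0
          · rw [hw, ENNReal.zero_rpow_of_pos hq0]; simp
          by_cases hw2 : φ w = ∞
          · rw [hw2]; exact le_top
          rw [← ENNReal.rpow_add _ _ hw hw2]
          have : q + -(q - 1) = 1 := by ring
          rw [this, ENNReal.rpow_one]
      _ = Z ^ q := by
          rw [← hZ]
          nth_rewrite 2 [← ENNReal.rpow_one Z]
          rw [← ENNReal.rpow_add_of_nonneg _ _ (by linarith) zero_le_one]
          congr 1; ring
  calc _ ≤ (Z ^ q) ^ (1 / q) := ENNReal.rpow_le_rpow hfinal (by positivity)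
    _ = Z := by rw [← ENNReal.rpow_mul, mul_one_div_cancel hq0.ne', ENNReal.rpow_one]

lemma jensen_lint {α : Type*} [MeasurableSpace α] (μ : Measure α) [IsProbabilityMeasure μ]
    {F : α → ℝ≥0∞} (hF : AEMeasurable F μ) {q : ℝ} (hq : 2 ≤ q) :
    (∫⁻ x, F x ∂μ) ^ q ≤ ∫⁻ x, F x ^ q ∂μ := by
  have hq0 : 0 < q := by linarith
  have h := ENNReal.lintegral_mul_le_Lp_mul_Lq μ
    (Real.HolderConjugate.conjExponent (by linarith : 1 < q)) hF
    (aemeasurable_const (b := (1 : ℝ≥0∞)))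
  simp only [Pi.mul_apply, mul_one, ENNReal.one_rpow, lintegral_const, measure_univ] at h
  calc _ ≤ ((∫⁻ x, F x ^ q ∂μ) ^ (1 / q)) ^ q := ENNReal.rpow_le_rpow h hq0.le
    _ = _ := by rw [← ENNReal.rpow_mul, one_div, inv_mul_cancel₀ hq0.ne', ENNReal.rpow_one]

/-- The `L_q` norm. -/
def Nq {n : ℕ} {Y : Type*} [NormedAddCommGroup Y] (q : ℝ) (F : EuclideanSpace ℝ (Fin n) → Y) :
    ℝ≥0∞ := (∫⁻ x, ‖F x‖ₑ ^ q) ^ (1 / q)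

section
variable {n : ℕ} {Y : Type*} [NormedAddCommGroup Y] {q : ℝ}

local notation "𝔼" => EuclideanSpace ℝ (Fin n)

lemma Nq_eq (hq : 2 ≤ q) (F : 𝔼 → Y) : eLpNorm F (ENNReal.ofReal q) volume = Nq q F := by
  rw [eLpNorm_eq_eLpNorm' (by simp; linarith) ENNReal.ofReal_ne_top, ENNReal.toReal_ofReal (by linarith)]
  rfl

lemma Nq_rpow (hq : 2 ≤ q) (F : 𝔼 → Y) : Nq q F ^ q = ∫⁻ x, ‖F x‖ₑ ^ q := by
  rw [Nq, ← ENNReal.rpow_mul, one_div, inv_mul_cancel₀ (by linarith), ENNReal.rpow_one]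

lemma Nq_congr {F : 𝔼 → Y} {H : 𝔼 → Y} (h : ∀ x, ‖F x‖ₑ = ‖H x‖ₑ) : Nq q F = Nq q H := by
  simp only [Nq, h]

lemma Nq_mono (hq : 2 ≤ q) {F : 𝔼 → Y} {H : 𝔼 → Y} (h : ∀ x, ‖F x‖ₑ ≤ ‖H x‖ₑ) : Nq q F ≤ Nq q H := by
  unfold Nq
  gcongr with x
  exact h x

lemma Nq_add_le (hq : 2 ≤ q) {F H : 𝔼 → Y} (hF : AEStronglyMeasurable F volume)
    (hH : AEStronglyMeasurable H volume) :
    Nq q (fun x => F x + H x) ≤ Nq q F + Nq q H :=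
  eLpNorm'_add_le hF hH (by linarith)

lemma Nq_translate (F : 𝔼 → Y) (h : 𝔼) : Nq q (fun x => F (x + h)) = Nq q F := by
  unfold Nq
  congr 1
  exact lintegral_add_right_eq_self (fun x => ‖F x‖ₑ ^ q) h

lemma Nq_translate_sub (F : 𝔼 → Y) (h : 𝔼) : Nq q (fun x => F (x - h)) = Nq q F := by
  simpa [sub_eq_add_neg] using Nq_translate F (-h)

variable [NormedSpace ℝ Y]

lemma Nq_smul (hq : 2 ≤ q) (c : ℝ) (F : 𝔼 → Y) : Nq q (fun x => c • F x) = ‖c‖ₑ * Nq q F := by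
  have hq0 : 0 < q := by linarith
  unfold Nq
  simp only [enorm_smul, ENNReal.mul_rpow_of_nonneg _ _ hq0.le]
  rw [lintegral_const_mul' _ _ (ENNReal.rpow_ne_top_of_nonneg hq0.le enorm_ne_top),
    ENNReal.mul_rpow_of_nonneg _ _ (by positivity), ← ENNReal.rpow_mul, mul_one_div_cancel hq0.ne',
    ENNReal.rpow_one]

lemma Nq_integral_le (hq : 2 ≤ q) {W : Type*} [MeasurableSpace W] (ν : Measure W) [SFinite ν]
    {F : 𝔼 → W → Y} (hF : Measurable fun z : 𝔼 × W => ‖F z.1 z.2‖ₑ) :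
    Nq q (fun x => ∫ w, F x w ∂ν) ≤ ∫⁻ w, Nq q (fun x => F x w) ∂ν := by
  have hq0 : 0 < q := by linarith
  refine le_trans ?_ (minkowski_lint volume ν (F := fun x w => ‖F x w‖ₑ) hF hq)
  unfold Nq
  gcongr
  exact enorm_integral_le_lintegral_enorm _

lemma transl_bound [CompleteSpace Y] (hq : 2 ≤ q) {F : 𝔼 → Y} (hF : ContDiff ℝ 1 F) (h : 𝔼) :
    Nq q (fun x => F (x + h) - F x) ≤ Nq q (fun x => fderiv ℝ F x h) := by
  have hc : Continuous (fun z : 𝔼 × ℝ => fderiv ℝ F (z.1 + z.2 • h) h) := by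
    have := hF.continuous_fderiv one_ne_zero
    fun_prop
  have e : (fun x => F (x + h) - F x) = fun x => ∫ θ in Ioc (0:ℝ) 1, fderiv ℝ F (x + θ • h) h := by
    ext x
    rw [← intervalIntegral.integral_of_le zero_le_one]
    have := intervalIntegral.integral_eq_sub_of_hasDerivAt (a := 0) (b := 1)
      (f := fun θ : ℝ => F (x + θ • h)) (f' := fun θ => fderiv ℝ F (x + θ • h) h) ?_ ?_
    · rw [this]; simp
    · intro θ _
      have h1 : HasFDerivAt F (fderiv ℝ F (x + θ • h)) (x + θ • h) :=
        (hF.differentiable one_ne_zero _).hasFDerivAt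
      have h2 : HasDerivAt (fun θ : ℝ => x + θ • h) h θ := by
        simpa using ((hasDerivAt_id θ).smul_const h).const_add x
      exact h1.comp_hasDerivAt θ h2
    · exact (hc.comp (by fun_prop : Continuous fun θ : ℝ => (x, θ))).intervalIntegrable _ _
  rw [e]
  refine (Nq_integral_le hq _ (F := fun x (θ : ℝ) => fderiv ℝ F (x + θ • h) h) hc.enorm.measurable).trans ?_
  simp [Nq_translate (fun x => fderiv ℝ F x h)]

lemma taylor_bound [CompleteSpace Y] (hq : 2 ≤ q) {F : 𝔼 → Y} (hF : ContDiff ℝ 2 F) (h : 𝔼) :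
    Nq q (fun x => F (x + h) - F x - fderiv ℝ F x h) ≤
      Nq q (fun x => fderiv ℝ (fun y => fderiv ℝ F y h) x h) := by
  have hcd : Continuous (fderiv ℝ F) := hF.continuous_fderiv two_ne_zero
  have hc : Continuous (fun z : 𝔼 × ℝ => fderiv ℝ F (z.1 + z.2 • h) h - fderiv ℝ F z.1 h) := by
    fun_prop
  have hF1 : ContDiff ℝ 1 (fun y => fderiv ℝ F y h) :=
    (hF.fderiv_right (m := 1) (by norm_num)).clm_apply contDiff_const
  have e : (fun x => F (x + h) - F x - fderiv ℝ F x h) =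
      fun x => ∫ θ in Ioc (0:ℝ) 1, (fderiv ℝ F (x + θ • h) h - fderiv ℝ F x h) := by
    ext x
    rw [← intervalIntegral.integral_of_le zero_le_one]
    have := intervalIntegral.integral_eq_sub_of_hasDerivAt (a := 0) (b := 1)
      (f := fun θ : ℝ => F (x + θ • h) - θ • fderiv ℝ F x h)
      (f' := fun θ => fderiv ℝ F (x + θ • h) h - fderiv ℝ F x h) ?_ ?_
    · rw [this]; simp; abel
    · intro θ _
      have h1 : HasFDerivAt F (fderiv ℝ F (x + θ • h)) (x + θ • h) :=
        (hF.differentiable two_ne_zero _).hasFDerivAt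
      have h2 : HasDerivAt (fun θ : ℝ => x + θ • h) h θ := by
        simpa using ((hasDerivAt_id θ).smul_const h).const_add x
      have h3 : HasDerivAt (fun θ : ℝ => θ • fderiv ℝ F x h) (fderiv ℝ F x h) θ := by
        simpa using ((hasDerivAt_id θ).smul_const (fderiv ℝ F x h))
      exact (h1.comp_hasDerivAt θ h2).sub h3
    · exact (hc.comp (by fun_prop : Continuous fun θ : ℝ => (x, θ))).intervalIntegrable _ _
  rw [e]
  refine (Nq_integral_le hq _ (F := fun x (θ : ℝ) => fderiv ℝ F (x + θ • h) h - fderiv ℝ F x h)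
    hc.enorm.measurable).trans ?_
  have key : ∀ θ ∈ Ioc (0:ℝ) 1, Nq q (fun x => fderiv ℝ F (x + θ • h) h - fderiv ℝ F x h) ≤
      Nq q (fun x => fderiv ℝ (fun y => fderiv ℝ F y h) x h) := by
    intro θ hθ
    refine (transl_bound hq hF1 (θ • h)).trans ?_
    refine Nq_mono hq fun x => ?_
    rw [map_smul, enorm_smul]
    refine mul_le_of_le_one_left' ?_
    rw [← ofReal_norm, Real.norm_of_nonneg hθ.1.le]
    simpa using hθ.2
  calc _ ≤ ∫⁻ θ in Ioc (0:ℝ) 1, Nq q (fun x => fderiv ℝ (fun y => fderiv ℝ F y h) x h) :=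
        setLIntegral_mono' measurableSet_Ioc key
    _ = _ := by simp

lemma Nq_telescope (hq : 2 ≤ q) (X : ℕ → 𝔼 → Y) (hX : ∀ k, Continuous (X k))
    (h0 : Filter.Tendsto (fun k => Nq q (X k)) Filter.atTop (nhds 0)) :
    Nq q (X 0) ≤ ∑' k, Nq q (fun x => X k x - X (k + 1) x) := by
  have hK : ∀ K, Nq q (X 0) ≤ (∑' k, Nq q (fun x => X k x - X (k + 1) x)) + Nq q (X K) := by
    intro K
    have : Nq q (X 0) ≤ (∑ k ∈ Finset.range K, Nq q (fun x => X k x - X (k + 1) x)) + Nq q (X K) := by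
      induction K with
      | zero => simp
      | succ K ih =>
        refine ih.trans ?_
        rw [Finset.sum_range_succ, add_assoc]
        gcongr
        have := Nq_add_le hq (F := fun x => X K x - X (K + 1) x) (H := X (K + 1))
          ((hX K).sub (hX (K+1))).aestronglyMeasurable (hX (K+1)).aestronglyMeasurable
        simpa using this
    exact this.trans (by gcongr; exact ENNReal.sum_le_tsum _)
  refine ge_of_tendsto' (x := Filter.atTop) ?_ hK
  simpa using (tendsto_const_nhds (x := (∑' k, Nq q (fun x => X k x - X (k + 1) x)))).add h0

end

/-- Shift-sum lemma. -/
lemma shift_sum {q : ℝ} (hq : 2 ≤ q) {A B : ℝ → ℝ≥0∞} (hB : Measurable B) (c : ℕ → ℝ≥0∞) (d : ℕ → ℝ)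
    (h : ∀ u, A u ≤ ∑' k, c k * B (u + d k)) :
    (∫⁻ u, A u ^ q) ^ (1 / q) ≤ (∑' k, c k) * (∫⁻ u, B u ^ q) ^ (1 / q) := by
  have hq0 : 0 < q := by linarith
  have h1 := minkowski_lint (volume : Measure ℝ) (Measure.count : Measure ℕ)
    (F := fun u k => c k * B (u + d k)) (measurable_from_prod_countable_left fun k => by
      simp only [Function.uncurry]
      exact (hB.comp (by fun_prop)).const_mul _) hq
  simp only [lintegral_count] at h1
  calc _ ≤ (∫⁻ u, (∑' k, c k * B (u + d k)) ^ q) ^ (1 / q) := by gcongr with u; exact h u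
    _ ≤ _ := h1
    _ = ∑' k, c k * (∫⁻ u, B u ^ q) ^ (1 / q) := by
      congr 1; ext k
      simp only [ENNReal.mul_rpow_of_nonneg _ _ hq0.le]
      have hm : Measurable fun u => B (u + d k) ^ q :=
        (hB.comp (by fun_prop : Measurable fun u => u + d k)).pow_const q
      rw [lintegral_const_mul _ hm,
        lintegral_add_right_eq_self (fun u => B u ^ q), ENNReal.mul_rpow_of_nonneg _ _ (by positivity),
        ← ENNReal.rpow_mul, mul_one_div_cancel hq0.ne', ENNReal.rpow_one]
    _ = _ := ENNReal.tsum_mul_right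

/-- Averages over geometric scales. -/
lemma lintegral_le_of_tsum {φ : ℝ → ℝ≥0∞} {L : ℝ} (hL : 0 < L) (hφ : Measurable φ) {M : ℝ≥0∞}
    (h : ∀ u, ∀ K : ℕ, ∑ k ∈ Finset.range K, φ (u - k * L) ≤ M) :
    ∫⁻ u, φ u ≤ ENNReal.ofReal L * M := by
  have h2 : ∀ u, ∑' k : ℤ, φ (u + k * L) ≤ M := by
    intro u
    rw [ENNReal.tsum_eq_iSup_sum]
    refine iSup_le fun s => ?_
    obtain ⟨N, hN⟩ : ∃ N : ℕ, ∀ k ∈ s, -(N:ℤ) ≤ k ∧ k ≤ N := by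
      refine ⟨s.sup Int.natAbs, fun k hk => ?_⟩
      have := Finset.le_sup (f := Int.natAbs) hk
      omega
    refine le_trans ?_ (h (u + N * L) (2 * N + 1))
    have : ∑ k ∈ s, φ (u + k * L) = ∑ k ∈ s.image (fun k => ((N:ℤ) - k).toNat), φ (u + N * L - k * L) := by
      rw [Finset.sum_image]
      · refine Finset.sum_congr rfl fun k hk => ?_
        congr 1
        have h3 : ((((N:ℤ) - k).toNat : ℕ) : ℝ) = (N:ℝ) - k := by
          have h4 : ((((N:ℤ) - k).toNat : ℕ) : ℤ) = (N:ℤ) - k := by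
            have := hN k hk; omega
          exact_mod_cast h4
        rw [h3]; ring
      · intro a ha b hb hab
        have := hN a ha; have := hN b hb
        simp only at hab
        omega
    rw [this]
    refine Finset.sum_le_sum_of_subset fun k hk => ?_
    obtain ⟨j, hj, rfl⟩ := Finset.mem_image.1 hk
    have := hN j hj
    simp only [Finset.mem_range]; omega
  have h3 := (isAddFundamentalDomain_Ioc hL 0).lintegral_eq_tsum' φ
  rw [h3]
  have e : ∀ g : AddSubgroup.zmultiples L, Measurable fun u => φ (-g +ᵥ u) := by
    intro g
    apply hφ.comp
    show Measurable fun u => ((-g : AddSubgroup.zmultiples L) : ℝ) + u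
    fun_prop
  rw [← lintegral_tsum fun g => (e g).aemeasurable]
  have h4 : ∀ u, ∑' g : AddSubgroup.zmultiples L, φ (-g +ᵥ u) ≤ M := by
    intro u
    refine le_trans (le_of_eq ?_) (h2 u)
    let eq : ℤ ≃ AddSubgroup.zmultiples L := 
      Equiv.ofBijective (fun k : ℤ => (⟨-(k * L), ⟨-k, by simp⟩⟩ : AddSubgroup.zmultiples L)) (by
        constructor
        · intro a b hab
          have hab' := congrArg Subtype.val hab
          simp only [neg_inj] at hab'
          exact_mod_cast mul_right_cancel₀ hL.ne' hab'
        · rintro ⟨x, k, rfl⟩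
          exact ⟨-k, by simp⟩)
    rw [← eq.tsum_eq]
    refine tsum_congr fun k => ?_
    congr 1
    show ((-(eq k) : AddSubgroup.zmultiples L) : ℝ) + u = _
    have : ((eq k : AddSubgroup.zmultiples L) : ℝ) = -(k * L) := rfl
    rw [NegMemClass.coe_neg, this]; ring
  calc _ ≤ ∫⁻ u in Ioc 0 (0 + L), M := lintegral_mono h4
    _ = _ := by simp [mul_comm]

section
variable {n : ℕ}
local notation "𝔼" => EuclideanSpace ℝ (Fin n)

lemma heatKernel_pos (x : 𝔼) {t : ℝ} (ht : 0 < t) : 0 < heatKernel n t x := by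
  unfold heatKernel; positivity

lemma heatKernel_contDiff : ContDiff ℝ (⊤ : ℕ∞) (heatKernel n 1) := by
  unfold heatKernel
  have : ContDiff ℝ (⊤ : ℕ∞) fun x : 𝔼 => ‖x‖ ^ 2 := contDiff_norm_sq ℝ
  fun_prop

/-- Gaussian measure with density the heat kernel at time one. -/
def GM (n : ℕ) : Measure (EuclideanSpace ℝ (Fin n)) :=
  volume.withDensity (fun z => ENNReal.ofReal (heatKernel n 1 z))

lemma GM_integral {Y : Type*} [NormedAddCommGroup Y] [NormedSpace ℝ Y] (F : 𝔼 → Y) :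
    ∫ w, F w ∂(GM n) = ∫ z, heatKernel n 1 z • F z := by
  rw [GM, integral_withDensity_eq_integral_toReal_smul]
  · refine integral_congr_ae (Filter.Eventually.of_forall fun z => ?_)
    simp only
    rw [ENNReal.toReal_ofReal (heatKernel_pos z one_pos).le]
  · exact heatKernel_contDiff.continuous.measurable.ennreal_ofReal
  · simp

lemma heatKernel_integral : ∫ z : 𝔼, heatKernel n 1 z = 1 := by
  unfold heatKernel
  rw [integral_const_mul]
  have h := GaussianFourier.integral_rexp_neg_mul_sq_norm (V := 𝔼) (b := 1/4) (by norm_num)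
  have e : ∀ z : 𝔼, -‖z‖ ^ 2 / (4 * 1) = -(1/4) * ‖z‖^2 := fun z => by ring
  simp_rw [e]
  rw [h, finrank_euclideanSpace_fin, mul_one, show Real.pi / (1/4) = 4 * Real.pi by ring,
    ← Real.rpow_add (by positivity)]
  ring_nf
  simp

lemma heatKernel_integrable : Integrable (heatKernel n 1) := by
  by_contra h
  have := integral_undef h
  rw [heatKernel_integral] at this
  exact one_ne_zero this

instance GM_prob : IsProbabilityMeasure (GM n) := by
  constructor
  rw [GM, withDensity_apply _ MeasurableSet.univ, Measure.restrict_univ,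
    ← ofReal_integral_eq_lintegral_ofReal heatKernel_integrable
      (Filter.Eventually.of_forall fun z => (heatKernel_pos z one_pos).le), heatKernel_integral]
  simp

lemma GM_charFun (ξ : 𝔼) : charFun (GM n) ξ = Complex.exp (-‖ξ‖ ^ 2) := by
  rw [charFun_apply, GM_integral]
  have h := GaussianFourier.integral_cexp_neg_mul_sq_norm_add_of_euclideanSpace
    (b := (1/4 : ℂ)) (by norm_num) Complex.I ξ
  have e : ∀ z : 𝔼, heatKernel n 1 z • Complex.exp ((inner ℝ z ξ : ℝ) * Complex.I) =
     (((4 * Real.pi) ^ (-(n : ℝ) / 2) : ℝ) : ℂ) *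
       Complex.exp (-(1/4 : ℂ) * ‖z‖ ^ 2 + Complex.I * (inner ℝ ξ z : ℝ)) := by
    intro z
    rw [Complex.exp_add, real_inner_comm ξ z, Complex.real_smul, heatKernel]
    push_cast
    rw [mul_one, mul_one, mul_assoc]
    congr 2
    · congr 1; ring
    · rw [mul_comm]
  simp_rw [e]
  rw [integral_const_mul, h]
  have h2 : ((Real.pi : ℂ) / (1/4 : ℂ)) ^ ((Fintype.card (Fin n) : ℂ) / 2) =
      (((4 * Real.pi) ^ ((n : ℝ) / 2) : ℝ) : ℂ) := by
    rw [Complex.ofReal_cpow (by positivity)]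
    simp
    ring_nf
  rw [h2, ← mul_assoc, ← Complex.ofReal_mul, ← Real.rpow_add (by positivity)]
  have : -(n:ℝ) / 2 + n / 2 = 0 := by ring
  rw [this, Real.rpow_zero, Complex.ofReal_one, one_mul]
  congr 1
  rw [Complex.I_sq]; ring

lemma GM_law {a b c : ℝ} (h : a ^ 2 + b ^ 2 = c ^ 2) :
    ((GM n).prod (GM n)).map (fun p => a • p.1 + b • p.2) = (GM n).map (fun w => c • w) := by
  have : IsProbabilityMeasure (((GM n).prod (GM n)).map (fun p => a • p.1 + b • p.2)) :=
    Measure.isProbabilityMeasure_map (by fun_prop)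
  have : IsProbabilityMeasure ((GM n).map (fun w => c • w)) :=
    Measure.isProbabilityMeasure_map (by fun_prop)
  apply Measure.ext_of_charFun
  ext ξ
  rw [charFun_map_smul, GM_charFun, charFun_apply, integral_map (by fun_prop) (by fun_prop)]
  have e : ∀ p : 𝔼 × 𝔼, Complex.exp ((inner ℝ (a • p.1 + b • p.2) ξ : ℝ) * Complex.I) =
     Complex.exp ((inner ℝ p.1 (a • ξ) : ℝ) * Complex.I) *
      Complex.exp ((inner ℝ p.2 (b • ξ) : ℝ) * Complex.I) := by
    intro p
    rw [← Complex.exp_add, inner_add_left, real_inner_smul_left, real_inner_smul_left,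
      inner_smul_right, inner_smul_right]
    push_cast
    ring_nf
  simp_rw [e]
  rw [integral_prod_mul (fun w => Complex.exp ((inner ℝ w (a • ξ) : ℝ) * Complex.I))
    (fun w => Complex.exp ((inner ℝ w (b • ξ) : ℝ) * Complex.I)), ← charFun_apply, ← charFun_apply,
    GM_charFun, GM_charFun, ← Complex.exp_add]
  congr 1
  simp only [norm_smul, Real.norm_eq_abs]
  rw [← Complex.ofReal_pow, ← Complex.ofReal_pow, ← Complex.ofReal_pow, mul_pow, mul_pow, mul_pow,
    sq_abs, sq_abs, sq_abs, ← h]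
  push_cast; ring

lemma GM_map_inner (z : 𝔼) : (GM n).map (fun w => (inner ℝ w z : ℝ)) =
    ProbabilityTheory.gaussianReal 0 (2 * ‖z‖₊ ^ 2) := by
  have : IsProbabilityMeasure ((GM n).map (fun w => (inner ℝ w z : ℝ))) :=
    Measure.isProbabilityMeasure_map (by fun_prop)
  apply Measure.ext_of_charFun
  ext t
  rw [charFun_apply_real, integral_map (by fun_prop) (by fun_prop),
    ProbabilityTheory.charFun_gaussianReal]
  have := GM_charFun (t • z)
  rw [charFun_apply] at this
  simp_rw [inner_smul_right] at this
  push_cast at this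
  rw [this, norm_smul]
  congr 1
  push_cast
  rw [mul_pow, ← Complex.ofReal_pow ‖t‖, Real.norm_eq_abs, sq_abs]
  push_cast
  ring

lemma GM_inner_memLp (z : 𝔼) : MemLp (fun w => (inner ℝ w z : ℝ)) 2 (GM n) := by
  have h := ProbabilityTheory.memLp_id_gaussianReal (μ := 0) (v := 2 * ‖z‖₊ ^ 2) 2
  rw [← GM_map_inner, memLp_map_measure_iff (by fun_prop) (by fun_prop)] at h
  exact h

lemma GM_inner_sq (z : 𝔼) : ∫ w, (inner ℝ w z : ℝ) ^ 2 ∂(GM n) = 2 * ‖z‖ ^ 2 := by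
  have h := ProbabilityTheory.variance_id_gaussianReal (μ := 0) (v := 2 * ‖z‖₊ ^ 2)
  rw [ProbabilityTheory.variance_of_integral_eq_zero (by fun_prop)
    (by simp [ProbabilityTheory.integral_id_gaussianReal]), ← GM_map_inner,
    integral_map (by fun_prop) (by fun_prop)] at h
  simpa using h

lemma lint_le_of_sq {α : Type*} [MeasurableSpace α] (μ : Measure α) [IsProbabilityMeasure μ]
    {F : α → ℝ} (hF : MemLp F 2 μ) {v : ℝ} (hv : 0 ≤ v) (h : ∫ x, F x ^ 2 ∂μ ≤ v ^ 2) :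
    ∫⁻ x, ‖F x‖ₑ ∂μ ≤ ENNReal.ofReal v := by
  have h1 := jensen_lint μ (F := fun x => ‖F x‖ₑ) hF.1.enorm (q := 2) le_rfl
  have h2 : ∫⁻ x, ‖F x‖ₑ ^ (2:ℝ) ∂μ ≤ ENNReal.ofReal v ^ (2:ℝ) := by
    rw [ENNReal.ofReal_rpow_of_nonneg hv (by norm_num)]
    simp only [ENNReal.rpow_ofNat, Real.rpow_ofNat]
    refine le_trans (le_of_eq ?_) (ENNReal.ofReal_le_ofReal h)
    rw [ofReal_integral_eq_lintegral_ofReal hF.integrable_sq (Filter.Eventually.of_forall fun x => sq_nonneg _)]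
    refine lintegral_congr fun x => ?_
    rw [← ofReal_norm, ← ENNReal.ofReal_pow (norm_nonneg _), Real.norm_eq_abs, sq_abs]
  exact (ENNReal.rpow_le_rpow_iff (by norm_num : (0:ℝ) < 2)).1 (h1.trans h2)

lemma GM_lint_inner (z : 𝔼) : ∫⁻ w, ‖(inner ℝ w z : ℝ)‖ₑ ∂(GM n) ≤ ENNReal.ofReal (2 * ‖z‖) := by
  refine lint_le_of_sq _ (GM_inner_memLp z) (by positivity) ?_
  rw [GM_inner_sq]
  nlinarith [sq_nonneg ‖z‖]

lemma norm_sq_eq_sum_inner (w : 𝔼) :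
    ‖w‖ ^ 2 = ∑ j, (inner ℝ w (EuclideanSpace.single j 1) : ℝ) ^ 2 := by
  rw [EuclideanSpace.real_norm_sq_eq]
  simp [EuclideanSpace.inner_single_right]

lemma GM_norm_memLp : MemLp (fun w : 𝔼 => ‖w‖) 2 (GM n) := by
  rw [memLp_two_iff_integrable_sq (by fun_prop)]
  simp_rw [norm_sq_eq_sum_inner]
  exact integrable_finsetSum _ fun j _ => (GM_inner_memLp _).integrable_sq

lemma GM_lint_norm : ∫⁻ w : 𝔼, ‖w‖ₑ ∂(GM n) ≤ ENNReal.ofReal (2 * Real.sqrt n) := by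
  have := lint_le_of_sq (GM n) GM_norm_memLp (v := 2 * Real.sqrt n) (by positivity) ?_
  · simpa using this
  · simp_rw [norm_sq_eq_sum_inner]
    rw [integral_finsetSum _ fun j _ => (GM_inner_memLp _).integrable_sq]
    simp_rw [GM_inner_sq]
    simp only [EuclideanSpace.norm_single, norm_one, one_pow, mul_one, Finset.sum_const,
      Finset.card_univ, Fintype.card_fin, nsmul_eq_mul]
    rw [mul_pow, Real.sq_sqrt (by positivity)]
    nlinarith [(Nat.cast_nonneg n : (0:ℝ) ≤ n)]

/-- the averaging operator `H_{a²}` -/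
def PP {Y : Type*} [NormedAddCommGroup Y] [NormedSpace ℝ Y] (a : ℝ) (F : 𝔼 → Y) (x : 𝔼) : Y :=
  ∫ w, F (x - a • w) ∂(GM n)

lemma heat_eq {Y : Type*} [NormedAddCommGroup Y] [NormedSpace ℝ Y] {a : ℝ} (ha : 0 < a) (f : 𝔼 → Y) :
    heat (a ^ 2) f = PP a f := by
  ext x
  rw [heat, PP, GM_integral]
  have h := Measure.integral_comp_smul (volume : Measure 𝔼) (fun z => heatKernel n (a^2) z • f (x - z)) a
  have hk : ∀ w : 𝔼, heatKernel n (a^2) (a • w) = (a ^ n)⁻¹ * heatKernel n 1 w := by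
    intro w
    simp only [heatKernel, norm_smul, mul_pow, Real.norm_eq_abs, sq_abs, mul_one]
    rw [Real.mul_rpow (by positivity) (by positivity)]
    have e1 : (a ^ 2) ^ (-(n:ℝ) / 2) = (a ^ n)⁻¹ := by
      rw [← Real.rpow_natCast a 2, ← Real.rpow_mul ha.le, ← Real.rpow_natCast a n, ← Real.rpow_neg ha.le]
      congr 1; push_cast; ring
    have e2 : -(a ^ 2 * ‖w‖ ^ 2) / (4 * a ^ 2) = -‖w‖^2 / 4 := by field_simp
    rw [e1, e2]; ring
  simp_rw [hk, mul_smul] at h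
  rw [integral_smul, finrank_euclideanSpace_fin, abs_of_pos (by positivity)] at h
  exact (smul_right_injective Y (by positivity : (a^n)⁻¹ ≠ 0) h).symm

end

section
variable {n : ℕ} {Y : Type*} [NormedAddCommGroup Y]
local notation "𝔼" => EuclideanSpace ℝ (Fin n)

/-- continuous and bounded -/
structure BC (F : 𝔼 → Y) : Prop where
  cont : Continuous F
  bdd : ∃ C, ∀ x, ‖F x‖ ≤ C

lemma BC.sub {F H : 𝔼 → Y} (hF : BC F) (hH : BC H) : BC (fun x => F x - H x) := by
  obtain ⟨C, hC⟩ := hF.bdd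
  obtain ⟨D, hD⟩ := hH.bdd
  exact ⟨hF.cont.sub hH.cont, C + D, fun x => (norm_sub_le _ _).trans (add_le_add (hC x) (hD x))⟩

lemma BC.of_compact {F : 𝔼 → Y} (hF : Continuous F) (h : HasCompactSupport F) : BC F :=
  ⟨hF, h.exists_bound_of_continuous hF⟩

variable [NormedSpace ℝ Y]

lemma BC.integrable {F : 𝔼 → Y} (hF : BC F) (x : 𝔼) (a : ℝ) :
    Integrable (fun w => F (x - a • w)) (GM n) := by
  obtain ⟨C, hC⟩ := hF.bdd
  have := hF.cont
  exact Integrable.of_bound (Continuous.aestronglyMeasurable (by fun_prop)) C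
    (Filter.Eventually.of_forall fun w => hC _)

lemma PP_cont {F : 𝔼 → Y} (hF : BC F) : Continuous fun p : ℝ × 𝔼 => PP p.1 F p.2 := by
  obtain ⟨C, hC⟩ := hF.bdd
  have := hF.cont
  unfold PP
  refine continuous_of_dominated (bound := fun _ => C) (fun p => Continuous.aestronglyMeasurable (by fun_prop))
    (fun p => Filter.Eventually.of_forall fun w => hC _) (integrable_const C)
    (Filter.Eventually.of_forall fun w => by fun_prop)

lemma PP_bc {F : 𝔼 → Y} (hF : BC F) (a : ℝ) : BC (PP a F) := by
  refine ⟨(PP_cont hF).comp (by fun_prop : Continuous fun x : 𝔼 => (a, x)), ?_⟩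
  obtain ⟨C, hC⟩ := hF.bdd
  refine ⟨C, fun x => ?_⟩
  unfold PP
  have := norm_integral_le_of_norm_le_const (μ := GM n) (f := fun w => F (x - a • w)) (C := C)
    (Filter.Eventually.of_forall fun w => hC _)
  simpa using this

lemma PP_zero [CompleteSpace Y] (F : 𝔼 → Y) : PP 0 F = F := by
  ext x; simp [PP]

lemma PP_sub {F H : 𝔼 → Y} (hF : BC F) (hH : BC H) (a : ℝ) (x : 𝔼) :
    PP a (fun y => F y - H y) x = PP a F x - PP a H x :=
  integral_sub (hF.integrable x a) (hH.integrable x a)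

lemma PP_PP [CompleteSpace Y] {F : 𝔼 → Y} (hF : BC F) {a b c : ℝ} (h : a ^ 2 + b ^ 2 = c ^ 2) :
    PP a (PP b F) = PP c F := by
  ext x
  have hc := hF.cont
  have h1 : PP c F x = ∫ v, F (x - v) ∂((GM n).map (fun w => c • w)) := by
    rw [integral_map (by fun_prop) (Continuous.aestronglyMeasurable (by fun_prop))]; rfl
  rw [h1, ← GM_law h, integral_map (by fun_prop) (Continuous.aestronglyMeasurable (by fun_prop)),
    integral_prod]
  · simp only [PP, sub_sub]
  · obtain ⟨C, hC⟩ := hF.bdd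
    exact Integrable.of_bound (Continuous.aestronglyMeasurable (by fun_prop)) C
      (Filter.Eventually.of_forall fun w => hC _)

lemma Nq_PP_le {q : ℝ} (hq : 2 ≤ q) {F : 𝔼 → Y} (hF : BC F) (a : ℝ) : Nq q (PP a F) ≤ Nq q F := by
  have := hF.cont
  refine (Nq_integral_le hq (GM n) (F := fun x w => F (x - a • w))
    (Continuous.measurable (by fun_prop))).trans ?_
  simp [Nq_translate_sub]

/-- `C¹` bounded with bounded derivative -/
structure BC1 (F : 𝔼 → Y) : Prop where
  cd : ContDiff ℝ 1 F
  bc : BC F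
  bcd : BC (fderiv ℝ F)

lemma BC.clm {F : 𝔼 → 𝔼 →L[ℝ] Y} (hF : BC F) (z : 𝔼) : BC (fun y => F y z) := by
  obtain ⟨C, hC⟩ := hF.bdd
  have := hF.cont
  refine ⟨by fun_prop, C * ‖z‖, fun x => ((F x).le_opNorm z).trans ?_⟩
  gcongr; exact hC x

lemma BC1.dir {F : 𝔼 → Y} (hF : BC1 F) (z : 𝔼) : BC (fun y => fderiv ℝ F y z) := hF.bcd.clm z

lemma BC1.of_compact {F : 𝔼 → Y} (hF : ContDiff ℝ (⊤ : ℕ∞) F) (h : HasCompactSupport F) : BC1 F :=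
  ⟨hF.of_le (by exact_mod_cast le_top), .of_compact hF.continuous h,
    .of_compact (hF.continuous_fderiv (by simp)) (h.fderiv ℝ)⟩

lemma dir_smooth {F : 𝔼 → Y} (hF : ContDiff ℝ (⊤ : ℕ∞) F) (z : 𝔼) :
    ContDiff ℝ (⊤ : ℕ∞) (fun y => fderiv ℝ F y z) :=
  (hF.fderiv_right (m := (⊤ : ℕ∞)) (by simp)).clm_apply contDiff_const

lemma dir_compact {F : 𝔼 → Y} (h : HasCompactSupport F) (z : 𝔼) :
    HasCompactSupport (fun y => fderiv ℝ F y z) := h.fderiv_apply ℝ z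

lemma PP_hasFDerivAt {F : 𝔼 → Y} (hF : BC1 F) (a : ℝ) (x : 𝔼) :
    HasFDerivAt (PP a F) (PP a (fderiv ℝ F) x) x := by
  obtain ⟨C, hC⟩ := hF.bcd.bdd
  have h1 := hF.bc.cont
  have h2 := hF.bcd.cont
  unfold PP
  refine hasFDerivAt_integral_of_dominated_of_fderiv_le (𝕜 := ℝ) (bound := fun _ => C)
    (F' := fun x w => fderiv ℝ F (x - a • w)) Filter.univ_mem
    (Filter.Eventually.of_forall fun y => Continuous.aestronglyMeasurable (by fun_prop))
    (hF.bc.integrable x a) (Continuous.aestronglyMeasurable (by fun_prop))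
    (Filter.Eventually.of_forall fun w y _ => hC _) (integrable_const _)
    (Filter.Eventually.of_forall fun w y _ => ?_)
  have := (hF.cd.differentiable one_ne_zero (y - a • w)).hasFDerivAt
  have h3 : HasFDerivAt (fun y : 𝔼 => y - a • w) (ContinuousLinearMap.id ℝ 𝔼) y :=
    (hasFDerivAt_id y).sub_const _
  have h4 := this.comp y h3
  rw [ContinuousLinearMap.comp_id] at h4
  exact h4

lemma PP_fderiv {F : 𝔼 → Y} (hF : BC1 F) (a : ℝ) : fderiv ℝ (PP a F) = PP a (fderiv ℝ F) := by
  ext1 x; exact (PP_hasFDerivAt hF a x).fderiv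

lemma PP_clm [CompleteSpace Y] {F : 𝔼 → 𝔼 →L[ℝ] Y} (hF : BC F) (a : ℝ) (x z : 𝔼) :
    PP a F x z = PP a (fun y => F y z) x :=
  ContinuousLinearMap.integral_apply (hF.integrable x a) z

lemma PP_dir [CompleteSpace Y] {F : 𝔼 → Y} (hF : BC1 F) (a : ℝ) (x z : 𝔼) :
    fderiv ℝ (PP a F) x z = PP a (fun y => fderiv ℝ F y z) x := by
  rw [PP_fderiv hF, PP_clm hF.bcd]

lemma PP_bc1 {F : 𝔼 → Y} (hF : BC1 F) (a : ℝ) : BC1 (PP a F) := by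
  refine ⟨?_, PP_bc hF.bc a, ?_⟩
  · rw [contDiff_one_iff_fderiv, PP_fderiv hF]
    exact ⟨fun x => (PP_hasFDerivAt hF a x).differentiableAt, (PP_bc hF.bcd a).cont⟩
  · rw [PP_fderiv hF]; exact PP_bc hF.bcd a

lemma PP_contDiff_two {F : 𝔼 → Y} (hF : BC1 F) (hF' : BC1 (fderiv ℝ F)) (a : ℝ) :
    ContDiff ℝ 2 (PP a F) := by
  rw [show (2 : WithTop ℕ∞) = 1 + 1 by norm_num, contDiff_succ_iff_fderiv]
  refine ⟨fun x => (PP_hasFDerivAt hF a x).differentiableAt, by simp, ?_⟩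
  rw [PP_fderiv hF]; exact (PP_bc1 hF' a).cd

lemma BC1.sub {F H : 𝔼 → Y} (hF : BC1 F) (hH : BC1 H) : BC1 (fun x => F x - H x) := by
  refine ⟨hF.cd.sub hH.cd, hF.bc.sub hH.bc, ?_⟩
  have : fderiv ℝ (fun x => F x - H x) = fun x => fderiv ℝ F x - fderiv ℝ H x := by
    ext1 x
    exact fderiv_fun_sub (hF.cd.differentiable one_ne_zero x) (hH.cd.differentiable one_ne_zero x)
  rw [this]; exact hF.bcd.sub hH.bcd

lemma heatKernel_fderiv (w z : 𝔼) :
    fderiv ℝ (heatKernel n 1) w z = -(1/2) * (inner ℝ w z : ℝ) * heatKernel n 1 w := by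
  have h1 : HasFDerivAt (fun x : 𝔼 => ‖x‖ ^ 2) (2 • (innerSL ℝ w)) w := (hasStrictFDerivAt_norm_sq w).hasFDerivAt
  have h2 : HasFDerivAt (fun x : 𝔼 => -‖x‖ ^ 2 / (4 * 1)) ((4:ℝ)⁻¹ • (-(2 • (innerSL ℝ w : 𝔼 →L[ℝ] ℝ)) : 𝔼 →L[ℝ] ℝ)) w := by
    have := h1.neg.const_smul ((4:ℝ)⁻¹)
    have e : (fun x : 𝔼 => -‖x‖ ^ 2 / (4 * 1)) = (4:ℝ)⁻¹ • -fun x : 𝔼 => ‖x‖ ^ 2 := by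
      ext x; simp; ring
    rw [e]; exact this
  have h3 := (h2.exp).const_mul ((4 * Real.pi * 1) ^ (-(n : ℝ) / 2))
  have h4 : fderiv ℝ (heatKernel n 1) w = _ := h3.fderiv
  rw [h4]
  simp [heatKernel]
  ring

lemma PP_ibp [CompleteSpace Y] {F : 𝔼 → Y} (hF : BC1 F) {a : ℝ} (ha : 0 < a) (x z : 𝔼) :
    PP a (fun y => fderiv ℝ F y z) x =
      (-(1 / (2 * a))) • ∫ w, (inner ℝ w z : ℝ) • F (x - a • w) ∂(GM n) := by
  have hg : ∀ w, HasFDerivAt (fun w : 𝔼 => F (x - a • w)) ((fderiv ℝ F (x - a • w)).comp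
      (-(a • ContinuousLinearMap.id ℝ 𝔼))) w := by
    intro w
    have h1 := (hF.cd.differentiable one_ne_zero (x - a • w)).hasFDerivAt
    have h3 : HasFDerivAt (fun w : 𝔼 => x - a • w) (-(a • ContinuousLinearMap.id ℝ 𝔼)) w :=
      ((hasFDerivAt_id w).const_smul a).const_sub x
    exact h1.comp w h3
  have hg' : ∀ w, fderiv ℝ (fun w : 𝔼 => F (x - a • w)) w z = -(a • fderiv ℝ F (x - a • w) z) := by
    intro w; rw [(hg w).fderiv]; simp
  have c1 := hF.bc.cont
  have c2 := hF.bcd.cont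
  have c3 : Continuous (heatKernel n 1) := heatKernel_contDiff.continuous
  obtain ⟨C, hC⟩ := hF.bc.bdd
  obtain ⟨D, hD⟩ := (hF.dir z).bdd
  have hi : Integrable (fun w : 𝔼 => (inner ℝ w z : ℝ) * heatKernel n 1 w) := by
    have h := (GM_inner_memLp z).integrable (by norm_num)
    rw [GM, integrable_withDensity_iff (c3.measurable.ennreal_ofReal) (by simp)] at h
    refine h.congr (Filter.Eventually.of_forall fun w => ?_)
    simp only
    rw [ENNReal.toReal_ofReal (heatKernel_pos w one_pos).le]
  have key := integral_smul_fderiv_eq_neg_fderiv_smul_of_integrable (μ := (volume : Measure 𝔼))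
    (f := heatKernel n 1) (g := fun w : 𝔼 => F (x - a • w)) (v := z) ?_ ?_ ?_ ?_ ?_
  · simp_rw [hg', heatKernel_fderiv] at key
    rw [PP, GM_integral, GM_integral]
    have e1 : ∀ w : 𝔼, heatKernel n 1 w • -(a • (fderiv ℝ F (x - a • w)) z) =
        (-a) • (heatKernel n 1 w • (fderiv ℝ F (x - a • w)) z) := fun w => by
      rw [neg_smul, smul_neg, smul_comm]
    have e2 : ∀ w : 𝔼, (-(1 / 2) * (inner ℝ w z : ℝ) * heatKernel n 1 w) • F (x - a • w) =
        (-(1/2) : ℝ) • (heatKernel n 1 w • (inner ℝ w z : ℝ) • F (x - a • w)) := fun w => by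
      rw [smul_smul, smul_smul]; congr 1; ring
    simp_rw [e1, e2] at key
    rw [integral_smul, integral_smul] at key
    have := congrArg (fun y => (-(1/a)) • y) key
    rw [smul_smul, smul_neg, smul_smul] at this
    rw [show -(1/a) * -a = 1 by field_simp, one_smul] at this
    rw [this, ← neg_smul]
    congr 1; field_simp
  · simp_rw [heatKernel_fderiv]
    have h := (hi.const_mul (-(1/2))).smul_bdd (f := fun w => F (x - a • w)) C
      (Continuous.aestronglyMeasurable (by fun_prop)) (Filter.Eventually.of_forall fun w => hC _)
    refine h.congr (Filter.Eventually.of_forall fun w => ?_)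
    simp only [mul_assoc]; rfl
  · simp_rw [hg']
    have h := (heatKernel_integrable (n := n)).smul_bdd (f := fun w => -(a • fderiv ℝ F (x - a • w) z)) (a * D)
      (Continuous.aestronglyMeasurable (by fun_prop)) (Filter.Eventually.of_forall fun w => by
        rw [norm_neg, norm_smul, Real.norm_of_nonneg ha.le]; gcongr; exact hD _)
    exact h
  · exact (heatKernel_integrable (n := n)).smul_bdd (f := fun w => F (x - a • w)) C
      (Continuous.aestronglyMeasurable (by fun_prop)) (Filter.Eventually.of_forall fun w => hC _)
  · exact fun w _ => (heatKernel_contDiff.differentiable (by simp)) w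
  · exact fun w _ => (hg w).differentiableAt

lemma Nq_PP_dir [CompleteSpace Y] {q : ℝ} (hq : 2 ≤ q) {F : 𝔼 → Y} (hF : BC1 F) {a : ℝ} (ha : 0 < a) (z : 𝔼) :
    Nq q (PP a (fun y => fderiv ℝ F y z)) ≤ ENNReal.ofReal (‖z‖ / a) * Nq q F := by
  have c1 := hF.bc.cont
  have e : PP a (fun y => fderiv ℝ F y z) = fun x =>
      (-(1 / (2 * a))) • ∫ w, (inner ℝ w z : ℝ) • F (x - a • w) ∂(GM n) := by
    ext x; exact PP_ibp hF ha x z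
  rw [e, Nq_smul hq]
  have h1 := Nq_integral_le hq (GM n) (F := fun x w => (inner ℝ w z : ℝ) • F (x - a • w))
    (Continuous.measurable (by fun_prop))
  simp_rw [Nq_smul hq _ (fun x => F (x - _)), Nq_translate_sub] at h1
  rw [lintegral_mul_const _ (Continuous.measurable (by fun_prop))] at h1
  calc _ ≤ ‖-(1 / (2 * a))‖ₑ * (ENNReal.ofReal (2 * ‖z‖) * Nq q F) := by
        gcongr
        refine h1.trans ?_
        gcongr
        exact GM_lint_inner z
    _ = _ := by
        rw [← mul_assoc, ← ofReal_norm, ← ENNReal.ofReal_mul (norm_nonneg _), norm_neg,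
          Real.norm_of_nonneg (by positivity)]
        congr 2
        field_simp

lemma Nq_PP_diff [CompleteSpace Y] {q : ℝ} (hq : 2 ≤ q) {F : 𝔼 → Y} (hF : BC1 F) (a b : ℝ) :
    Nq q (fun x => PP a F x - PP b F x) ≤
      ENNReal.ofReal |b - a| * ∫⁻ w, Nq q (fun y => fderiv ℝ F y w) ∂(GM n) := by
  have c1 := hF.bc.cont
  have e : (fun x => PP a F x - PP b F x) = fun x => ∫ w, (F (x - a • w) - F (x - b • w)) ∂(GM n) := by
    ext x
    exact (integral_sub (hF.bc.integrable x a) (hF.bc.integrable x b)).symm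
  rw [e]
  refine (Nq_integral_le hq (GM n) (F := fun x w => F (x - a • w) - F (x - b • w))
    (Continuous.measurable (by fun_prop))).trans ?_
  rw [← lintegral_const_mul' _ _ ENNReal.ofReal_ne_top]
  refine lintegral_mono fun w => ?_
  have h1 := transl_bound hq hF.cd ((b - a) • w)
  have h2 := Nq_translate_sub (q := q) (fun x => F (x + (b - a) • w) - F x) (b • w)
  have h3 : (fun x => F (x - b • w + (b - a) • w) - F (x - b • w)) = fun x => F (x - a • w) - F (x - b • w) := by
    ext x; congr 2; rw [sub_smul]; abel
  rw [h3] at h2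
  rw [h2]
  refine h1.trans (le_of_eq ?_)
  simp_rw [map_smul]
  rw [Nq_smul hq, ← ofReal_norm, Real.norm_eq_abs]

end

section
open ProbabilityTheory
variable {n : ℕ}
local notation "𝔼" => EuclideanSpace ℝ (Fin n)

/-- infinite product Gaussian measure -/
def IM (n : ℕ) : Measure (ℕ → EuclideanSpace ℝ (Fin n)) := Measure.infinitePi (fun _ => GM n)

instance IM_prob : IsProbabilityMeasure (IM n) := by unfold IM; infer_instance

lemma coord_sm (i : ℕ) : StronglyMeasurable (fun ω : ℕ → 𝔼 => ω i) :=
  (measurable_pi_apply i).stronglyMeasurable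

/-- natural filtration of the coordinates -/
def IF (n : ℕ) : Filtration ℕ (inferInstance : MeasurableSpace (ℕ → EuclideanSpace ℝ (Fin n))) :=
  Filtration.natural (fun i ω => ω i) coord_sm

lemma coord_IF {i j : ℕ} (h : i ≤ j) : Measurable[IF n j] (fun ω : ℕ → 𝔼 => ω i) := by
  have h1 : MeasurableSpace.comap (fun ω : ℕ → 𝔼 => ω i) inferInstance ≤ IF n j :=
    le_iSup₂ (f := fun k (_ : k ≤ j) => MeasurableSpace.comap (fun ω : ℕ → 𝔼 => ω k) inferInstance) i h
  exact Measurable.mono (comap_measurable _) h1 le_rfl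

/-- partial sums -/
def SS (a : ℕ → ℝ) (j : ℕ) (ω : ℕ → 𝔼) : 𝔼 := ∑ i ∈ Finset.range j, a (i + 1) • ω (i + 1)

lemma SS_succ (a : ℕ → ℝ) (j : ℕ) (ω : ℕ → 𝔼) :
    SS a (j + 1) ω = SS a j ω + a (j + 1) • ω (j + 1) := Finset.sum_range_succ _ _

lemma SS_meas (a : ℕ → ℝ) (j : ℕ) : Measurable[IF n j] (SS a j : (ℕ → 𝔼) → 𝔼) := by
  unfold SS
  refine Finset.measurable_sum _ fun i hi => ?_
  have hi' : i + 1 ≤ j := by simpa using hi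
  exact (coord_IF hi').const_smul (a (i + 1))

lemma SS_meas' (a : ℕ → ℝ) (j : ℕ) : Measurable (SS a j : (ℕ → 𝔼) → 𝔼) :=
  (SS_meas a j).mono ((IF n).le j) le_rfl

lemma IM_map {β : Type*} [MeasurableSpace β] {Z : (ℕ → 𝔼) → β} {j : ℕ} (hZ : Measurable[IF n j] Z) :
    (IM n).map (fun ω => (Z ω, ω (j + 1))) = ((IM n).map Z).prod (GM n) := by
  have h1 : iIndepFun (fun i (ω : ℕ → 𝔼) => ω i) (IM n) :=
    iIndepFun_infinitePi (X := fun _ => id) (fun _ => measurable_id)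
  have h2 := h1.indep_comap_natural_of_lt coord_sm (Nat.lt_succ_self j)
  have h3 : IndepFun Z (fun ω => ω (j + 1)) (IM n) := by
    rw [IndepFun_iff_Indep]
    exact indep_of_indep_of_le_left h2.symm hZ.comap_le
  have hZ' : Measurable Z := hZ.mono ((IF n).le j) le_rfl
  rw [(indepFun_iff_map_prod_eq_prod_map_map hZ'.aemeasurable
    (measurable_pi_apply _).aemeasurable).1 h3]
  congr 1
  exact Measure.infinitePi_map_eval (fun _ => GM n) (j + 1)

lemma IM_lint {a : ℕ → ℝ} (j : ℕ) {φ : 𝔼 × 𝔼 → ℝ≥0∞} (hφ : Measurable φ) :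
    ∫⁻ ω, φ (SS a j ω, ω (j + 1)) ∂(IM n) = ∫⁻ ω, ∫⁻ v, φ (SS a j ω, v) ∂(GM n) ∂(IM n) := by
  have h := IM_map (SS_meas (n := n) a j)
  have h2 : Measurable (fun ω : ℕ → 𝔼 => (SS a j ω, ω (j + 1))) :=
    (SS_meas' a j).prodMk (measurable_pi_apply _)
  rw [← lintegral_map hφ h2, h, lintegral_prod _ hφ.aemeasurable,
    lintegral_map hφ.lintegral_prod_right' (SS_meas' a j)]

variable {Y : Type*} [NormedAddCommGroup Y] [NormedSpace ℝ Y] [CompleteSpace Y]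

/-- the heat martingale -/
def MM (g : 𝔼 → Y) (a : ℕ → ℝ) (x : 𝔼) (j : ℕ) (ω : ℕ → 𝔼) : Y := PP (a j) g (x - SS a j ω)

lemma MM_mart {g : 𝔼 → Y} (hg : BC g) {a : ℕ → ℝ} (ha : ∀ j, a j ^ 2 = 2 * a (j + 1) ^ 2) (x : 𝔼) :
    Martingale (MM g a x) (IF n) (IM n) := by
  have hc : ∀ j, Continuous (PP (a j) g) := fun j => (PP_bc hg _).cont
  have hsm : ∀ j, StronglyMeasurable[IF n j] (MM g a x j) := fun j => by
    have h1 : StronglyMeasurable[IF n j] (SS a j : (ℕ → 𝔼) → 𝔼) := (SS_meas a j).stronglyMeasurable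
    have h2 : Continuous (fun s : 𝔼 => PP (a j) g (x - s)) := (hc j).comp (by fun_prop)
    exact h2.comp_stronglyMeasurable h1
  have hint : ∀ j, Integrable (MM g a x j) (IM n) := fun j => by
    obtain ⟨C, hC⟩ := (PP_bc hg (a j)).bdd
    exact Integrable.of_bound ((hsm j).mono ((IF n).le j)).aestronglyMeasurable C
      (Filter.Eventually.of_forall fun ω => hC _)
  refine martingale_nat hsm hint fun j => ?_
  refine ae_eq_condExp_of_forall_setIntegral_eq ((IF n).le j) (hint _)
    (fun s _ _ => (hint j).integrableOn) ?_ (hsm j).aestronglyMeasurable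
  intro s hs _
  have hs' := (IF n).le j s hs
  let Z : (ℕ → 𝔼) → ℝ × 𝔼 := fun ω => (s.indicator (fun _ => (1 : ℝ)) ω, SS a j ω)
  have hZ : Measurable[IF n j] Z := Measurable.prodMk (measurable_const.indicator hs) (SS_meas a j)
  have hZ' : Measurable Z := hZ.mono ((IF n).le j) le_rfl
  have hm := IM_map hZ
  let G : (ℝ × 𝔼) × 𝔼 → Y := fun p => p.1.1 • PP (a (j + 1)) g (x - (p.1.2 + a (j + 1) • p.2))
  have hG : Continuous G := by
    have := hc (j + 1)
    fun_prop
  have hZW : Measurable (fun ω : ℕ → 𝔼 => (Z ω, ω (j + 1))) := hZ'.prodMk (measurable_pi_apply _)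
  have e1 : ∫ ω in s, MM g a x (j + 1) ω ∂(IM n) = ∫ ω, G (Z ω, ω (j + 1)) ∂(IM n) := by
    rw [← integral_indicator hs']
    congr 1 with ω
    by_cases h : ω ∈ s <;> simp [G, Z, h, MM, SS_succ]
  have hb : Integrable (fun ω => G (Z ω, ω (j + 1))) (IM n) := by
    obtain ⟨C, hC⟩ := (PP_bc hg (a (j + 1))).bdd
    refine Integrable.of_bound (hG.stronglyMeasurable.comp_measurable hZW).aestronglyMeasurable C
      (Filter.Eventually.of_forall fun ω => ?_)
    have hC0 : 0 ≤ C := (norm_nonneg _).trans (hC 0)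
    by_cases h : ω ∈ s
    · simpa [G, Z, h] using hC _
    · simpa [G, Z, h] using hC0
  have e2 : ∫ ω, G (Z ω, ω (j + 1)) ∂(IM n) = ∫ ω, ∫ v, G (Z ω, v) ∂(GM n) ∂(IM n) := by
    rw [← integral_map hZW.aemeasurable hG.aestronglyMeasurable, hm, integral_prod,
      integral_map hZ'.aemeasurable]
    · exact (hG.aestronglyMeasurable (μ := ((IM n).map Z).prod (GM n))).integral_prod_right'
    · rw [← hm]
      exact (integrable_map_measure hG.aestronglyMeasurable hZW.aemeasurable).2 hb
  rw [e1, e2, ← integral_indicator hs']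
  congr 1 with ω
  have e3 : PP (a j) g (x - SS a j ω) = PP (a (j+1)) (PP (a (j+1)) g) (x - SS a j ω) := by
    rw [PP_PP hg (c := a j)]; rw [ha j]; ring
  by_cases h : ω ∈ s
  · simp only [h, indicator_of_mem, MM, e3]
    simp only [G, Z, h, indicator_of_mem, one_smul, ← sub_sub]
    rfl
  · simp [G, Z, h]

lemma MM_bound {q : ℝ} (hq : 2 ≤ q) {g : 𝔼 → Y} (hg : BC g) {a : ℕ → ℝ}
    (ha : ∀ j, a j ^ 2 = 2 * a (j + 1) ^ 2) (x : 𝔼) (j : ℕ) :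
    ∫⁻ ω, ‖MM g a x j ω‖ₑ ^ q ∂(IM n) ≤ ∫⁻ w, ‖g (x - a 0 • w)‖ₑ ^ q ∂(GM n) := by
  have hq0 : 0 < q := by linarith
  have c1 := hg.cont
  have hΦ : ∀ j, ∫⁻ ω, ∫⁻ w, ‖g (x - SS a j ω - a j • w)‖ₑ ^ q ∂(GM n) ∂(IM n) =
      ∫⁻ w, ‖g (x - a 0 • w)‖ₑ ^ q ∂(GM n) := by
    intro j
    induction j with
    | zero => simp [SS]
    | succ j ih =>
      rw [← ih]
      have hφ : Measurable (fun p : 𝔼 × 𝔼 =>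
          ∫⁻ w, ‖g (x - (p.1 + a (j + 1) • p.2) - a (j + 1) • w)‖ₑ ^ q ∂(GM n)) := by
        have hh : Measurable (fun p : (𝔼 × 𝔼) × 𝔼 =>
            ‖g (x - (p.1.1 + a (j + 1) • p.1.2) - a (j + 1) • p.2)‖ₑ ^ q) := by
          refine Measurable.pow_const (Continuous.measurable ?_) q
          fun_prop
        exact hh.lintegral_prod_right'
      have h1 := IM_lint (a := a) j hφ
      simp only [SS_succ]
      rw [h1]
      refine lintegral_congr fun ω => ?_
      have hψ : Measurable fun v : 𝔼 => ‖g (x - SS a j ω - v)‖ₑ ^ q :=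
        Measurable.pow_const (Continuous.measurable (by fun_prop)) q
      have h2 : ∫⁻ w, ‖g (x - SS a j ω - a j • w)‖ₑ ^ q ∂(GM n) =
          ∫⁻ v, ‖g (x - SS a j ω - v)‖ₑ ^ q ∂((GM n).map (fun w => a j • w)) := by
        rw [lintegral_map hψ (by fun_prop)]
      rw [h2, ← GM_law (a := a (j+1)) (b := a (j+1)) (by rw [ha j]; ring), lintegral_map hψ (by fun_prop),
        lintegral_prod]
      swap
      · exact (hψ.comp (by fun_prop : Measurable fun p : 𝔼 × 𝔼 => a (j + 1) • p.1 + a (j + 1) • p.2)).aemeasurable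
      refine lintegral_congr fun v => lintegral_congr fun w => ?_
      congr 3; abel
  rw [← hΦ j]
  refine lintegral_mono fun ω => ?_
  have hm : Measurable fun w : 𝔼 => ‖g (x - SS a j ω - a j • w)‖ₑ := Continuous.measurable (by fun_prop)
  refine le_trans ?_ (jensen_lint (GM n) hm.aemeasurable hq)
  gcongr
  exact enorm_integral_le_lintegral_enorm _

lemma mart_lemma {q : ℝ} (hq : 2 ≤ q) {m : ℝ} (hm : MartCotypeBound q Y m) {g : 𝔼 → Y} (hg : BC g)
    {a : ℕ → ℝ} (ha : ∀ j, a j ^ 2 = 2 * a (j + 1) ^ 2) :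
    ∑' j, Nq q (fun x => PP (a (j + 1)) g x - PP (√3 * a (j + 1)) g x) ^ q ≤
      ENNReal.ofReal m ^ q * Nq q g ^ q := by
  have hq0 : 0 < q := by linarith
  have c1 := hg.cont
  have hc : ∀ j, Continuous (PP (a j) g) := fun j => (PP_bc hg _).cont
  have h1 : ∀ x, ∑' j, ∫⁻ ω, ‖MM g a x (j + 1) ω - MM g a x j ω‖ₑ ^ q ∂(IM n) ≤
      ENNReal.ofReal m ^ q * ∫⁻ w, ‖g (x - a 0 • w)‖ₑ ^ q ∂(GM n) := fun x =>
    hm _ (IM n) (IF n) (MM g a x) (MM_mart hg ha x) _ (MM_bound hq hg ha x)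
  have h2 : ∫⁻ x, ∫⁻ w, ‖g (x - a 0 • w)‖ₑ ^ q ∂(GM n) = Nq q g ^ q := by
    rw [lintegral_lintegral_swap]
    · have : ∀ w : 𝔼, ∫⁻ x, ‖g (x - a 0 • w)‖ₑ ^ q = Nq q g ^ q := fun w => by
        rw [Nq_rpow hq, lintegral_sub_right_eq_self (fun x => ‖g x‖ₑ ^ q)]
      simp [this]
    · have hh : Measurable (fun p : 𝔼 × 𝔼 => ‖g (p.1 - a 0 • p.2)‖ₑ ^ q) :=
        Measurable.pow_const (Continuous.measurable (by fun_prop)) q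
      exact hh.aemeasurable
  have hD : ∀ j, Measurable fun p : 𝔼 × (ℕ → 𝔼) => ‖MM g a p.1 (j + 1) p.2 - MM g a p.1 j p.2‖ₑ ^ q := fun j => by
    have hh : Continuous fun s : 𝔼 × 𝔼 × 𝔼 =>
        ‖PP (a (j + 1)) g (s.1 - s.2.1) - PP (a j) g (s.1 - s.2.2)‖ₑ := by
      have := hc j; have := hc (j + 1); fun_prop
    exact (hh.measurable.comp (measurable_fst.prodMk (((SS_meas' a (j + 1)).comp measurable_snd).prodMk
      ((SS_meas' a j).comp measurable_snd)))).pow_const q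
  have h3 := lintegral_mono (μ := (volume : Measure 𝔼)) h1
  rw [lintegral_const_mul' _ _ (ENNReal.rpow_ne_top_of_nonneg hq0.le ENNReal.ofReal_ne_top), h2,
    lintegral_tsum (fun j => ((hD j).lintegral_prod_right' (ν := IM n)).aemeasurable)] at h3
  refine le_trans (ENNReal.tsum_le_tsum fun j => ?_) h3
  rw [lintegral_lintegral_swap (hD j).aemeasurable]
  -- translate
  have h4 : ∀ ω : ℕ → 𝔼, ∫⁻ x, ‖MM g a x (j + 1) ω - MM g a x j ω‖ₑ ^ q =
      ∫⁻ y, ‖PP (a (j + 1)) g y - PP (a j) g (y + a (j + 1) • ω (j + 1))‖ₑ ^ q := fun ω => by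
    rw [← lintegral_sub_right_eq_self (fun y : 𝔼 => ‖PP (a (j + 1)) g y - PP (a j) g (y + a (j + 1) • ω (j + 1))‖ₑ ^ q)
      (SS a (j + 1) ω)]
    refine lintegral_congr fun x => ?_
    simp only [MM]
    congr 4
    rw [SS_succ]; abel
  simp_rw [h4]
  have hψ : Measurable fun p : 𝔼 × 𝔼 => ‖PP (a (j + 1)) g p.1 - PP (a j) g (p.1 + a (j + 1) • p.2)‖ₑ ^ q := by
    refine Measurable.pow_const (Continuous.measurable ?_) q
    have := hc j; have := hc (j + 1); fun_prop
  have hφ : Measurable fun v : 𝔼 =>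
      ∫⁻ y, ‖PP (a (j + 1)) g y - PP (a j) g (y + a (j + 1) • v)‖ₑ ^ q := hψ.lintegral_prod_left'
  have h5 := IM_lint (a := a) j (hφ.comp measurable_snd)
  simp only [Function.comp_apply, lintegral_const, measure_univ, mul_one] at h5
  rw [h5, ← lintegral_lintegral_swap hψ.aemeasurable, Nq_rpow hq]
  refine lintegral_mono fun y => ?_
  have h6 : PP (√3 * a (j + 1)) g = PP (-a (j + 1)) (PP (a j) g) := by
    rw [PP_PP hg (c := √3 * a (j + 1))]
    rw [ha j, mul_pow, Real.sq_sqrt (by norm_num)]; ring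
  have hmv : Measurable fun v : 𝔼 => ‖PP (a (j + 1)) g y - PP (a j) g (y + a (j + 1) • v)‖ₑ := by
    refine Continuous.measurable ?_
    have := hc j; fun_prop
  refine le_trans ?_ (jensen_lint (GM n) hmv.aemeasurable hq)
  gcongr
  refine le_trans (le_of_eq ?_) (enorm_integral_le_lintegral_enorm _)
  have h7 : Integrable (fun v : 𝔼 => PP (a j) g (y + a (j + 1) • v)) (GM n) := by
    have := (PP_bc hg (a j)).integrable y (-a (j + 1))
    simpa using this
  rw [integral_sub (integrable_const _) h7, h6]
  simp [PP]

end

section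
variable {n : ℕ} {Y : Type*} [NormedAddCommGroup Y] [NormedSpace ℝ Y]
local notation "𝔼" => EuclideanSpace ℝ (Fin n)

/-- square function building block -/
def Th (q : ℝ) (g : 𝔼 → Y) (b : ℝ) : ℝ≥0∞ := Nq q (fun x => PP b g x - PP (√3 * b) g x)

lemma Nq_meas {q : ℝ} {T : Type*} [MeasurableSpace T] {G : T → 𝔼 → Y}
    (hG : Measurable fun p : T × 𝔼 => ‖G p.1 p.2‖ₑ) : Measurable fun t => Nq q (G t) := by
  unfold Nq
  exact ((hG.pow_const q).lintegral_prod_right').pow_const _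

lemma Th_meas {q : ℝ} {g : 𝔼 → Y} (hg : BC g) : Measurable (Th q g) := by
  have h := PP_cont hg
  have h1 : Continuous fun p : ℝ × 𝔼 => PP p.1 g p.2 - PP (√3 * p.1) g p.2 :=
    h.sub (h.comp (by fun_prop : Continuous fun p : ℝ × 𝔼 => (√3 * p.1, p.2)))
  exact Nq_meas (G := fun b x => PP b g x - PP (√3 * b) g x) h1.enorm.measurable

lemma Th_int [CompleteSpace Y] {q : ℝ} (hq : 2 ≤ q) {m : ℝ} (hm : MartCotypeBound q Y m) {g : 𝔼 → Y} (hg : BC g) :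
    (∫⁻ u, Th q g (Real.exp u) ^ q) ^ (1 / q) ≤ ENNReal.ofReal m * Nq q g := by
  have hq0 : 0 < q := by linarith
  have hL : 0 < Real.log 2 / 2 := by have := Real.log_pos one_lt_two; positivity
  have h2 : Real.exp (2 * (Real.log 2 / 2)) = 2 := by
    rw [mul_div_cancel₀ _ two_ne_zero, Real.exp_log two_pos]
  have h := lintegral_le_of_tsum (φ := fun u => Th q g (Real.exp u) ^ q) hL
    (((Th_meas hg).comp Real.measurable_exp).pow_const q) (M := ENNReal.ofReal m ^ q * Nq q g ^ q) ?_
  · have h3 : ∫⁻ u, Th q g (Real.exp u) ^ q ≤ (ENNReal.ofReal m * Nq q g) ^ q := by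
      rw [ENNReal.mul_rpow_of_nonneg _ _ hq0.le]
      refine h.trans ?_
      refine (mul_le_mul_left ?_ _).trans (one_mul _).le
      rw [ENNReal.ofReal_le_one]
      have := Real.log_two_lt_d9
      linarith
    calc _ ≤ ((ENNReal.ofReal m * Nq q g) ^ q) ^ (1 / q) := by gcongr
      _ = _ := by rw [← ENNReal.rpow_mul, mul_one_div_cancel hq0.ne', ENNReal.rpow_one]
  · intro u K
    let a : ℕ → ℝ := fun j => Real.exp (u + Real.log 2 / 2 - j * (Real.log 2 / 2))
    have ha : ∀ j, a j ^ 2 = 2 * a (j + 1) ^ 2 := by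
      intro j
      simp only [a]
      rw [← Real.exp_nat_mul, ← Real.exp_nat_mul]
      have h2' : ∀ y, 2 * y = Real.exp (2 * (Real.log 2 / 2)) * y := fun y => by rw [h2]
      rw [h2' (Real.exp _), ← Real.exp_add]
      congr 1; push_cast; ring
    refine le_trans ?_ (mart_lemma hq hm hg ha)
    refine le_trans (le_of_eq ?_) (ENNReal.sum_le_tsum (Finset.range K))
    refine Finset.sum_congr rfl fun k _ => ?_
    have : a (k + 1) = Real.exp (u - k * (Real.log 2 / 2)) := by
      simp only [a]; congr 1; push_cast; ring
    rw [this]; rfl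

lemma geo_sum : ∑' k : ℕ, ENNReal.ofReal (√2 / √2 ^ k) ≤ 5 := by
  have h1 : (1 : ℝ) < √2 := by rw [Real.lt_sqrt] <;> norm_num
  have hs : √2 ^ 2 = 2 := Real.sq_sqrt (by norm_num)
  have hs2 : √2 ≤ 1.5 := by rw [Real.sqrt_le_left (by norm_num)]; norm_num
  have e : ∀ k : ℕ, √2 / √2 ^ k = √2 * (1 / √2) ^ k := fun k => by rw [one_div, inv_pow]; rfl
  simp_rw [e]
  have hr : (1 / √2) < 1 := by rw [div_lt_one (by positivity)]; exact h1
  have hsum : HasSum (fun k : ℕ => √2 * (1 / √2) ^ k) (√2 * (1 - 1 / √2)⁻¹) :=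
    (hasSum_geometric_of_lt_one (by positivity) hr).mul_left _
  rw [← ENNReal.ofReal_tsum_of_nonneg (fun k => by positivity) hsum.summable, hsum.tsum_eq]
  rw [show (5 : ℝ≥0∞) = ENNReal.ofReal 5 by simp]
  apply ENNReal.ofReal_le_ofReal
  have h3 : 0 < 1 - 1 / √2 := by linarith
  rw [← div_eq_mul_inv, div_le_iff₀ h3]
  have h4 : √2 * (1 / √2) = 1 := by field_simp
  have h5 : 1 / √2 = √2 / 2 := by field_simp; linarith
  rw [h5]; nlinarith

lemma two_step [CompleteSpace Y] {G : 𝔼 → Y} (hG : BC G) (b s : ℝ) {c d : ℝ}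
    (hc : s ^ 2 + b ^ 2 = c ^ 2) (hd : s ^ 2 + 3 * b ^ 2 = d ^ 2) (x : 𝔼) :
    PP c G x - PP d G x = PP s (fun y => PP b G y - PP (√3 * b) G y) x := by
  rw [PP_sub (PP_bc hG _) (PP_bc hG _), PP_PP hG hc, PP_PP hG (c := d)]
  rw [mul_pow, Real.sq_sqrt (by norm_num), hd]

lemma dir_diff [CompleteSpace Y] {g : 𝔼 → Y} (hg : BC1 g) (b c : ℝ) (z y : 𝔼) :
    fderiv ℝ (fun y => PP b g y - PP c g y) y z =
      PP b (fun y => fderiv ℝ g y z) y - PP c (fun y => fderiv ℝ g y z) y := by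
  rw [fderiv_fun_sub ((PP_bc1 hg b).cd.differentiable one_ne_zero y)
    ((PP_bc1 hg c).cd.differentiable one_ne_zero y), sub_apply, PP_dir hg, PP_dir hg]

lemma sqrt2_tendsto (c : ℝ) : Filter.Tendsto (fun k : ℕ => c / √2 ^ k) Filter.atTop (nhds 0) := by
  have h1 : (1 : ℝ) < √2 := by rw [Real.lt_sqrt] <;> norm_num
  exact tendsto_const_nhds.div_atTop (tendsto_pow_atTop_atTop_of_one_lt h1)

lemma ofReal_tendsto_zero {c : ℕ → ℝ} (hc : Filter.Tendsto c Filter.atTop (nhds 0)) {M : ℝ≥0∞} (hM : M ≠ ∞)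
    {X : ℕ → ℝ≥0∞} (h : ∀ k, X k ≤ ENNReal.ofReal (c k) * M) :
    Filter.Tendsto X Filter.atTop (nhds 0) := by
  have h1 : Filter.Tendsto (fun k => ENNReal.ofReal (c k) * M) Filter.atTop (nhds 0) := by
    have := ENNReal.Tendsto.mul_const (ENNReal.tendsto_ofReal hc) (b := M) (Or.inr hM)
    simpa using this
  exact tendsto_of_tendsto_of_tendsto_of_le_of_le tendsto_const_nhds h1 (fun _ => zero_le) h

lemma key_pt [CompleteSpace Y] {q : ℝ} (hq : 2 ≤ q) {g : 𝔼 → Y} (hg : BC1 g) (hfin : Nq q g ≠ ∞) {a : ℝ} (ha : 0 < a) (z : 𝔼) :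
    ENNReal.ofReal a * Nq q (PP a (fun y => fderiv ℝ g y z)) ≤
      ∑' k : ℕ, ENNReal.ofReal ‖z‖ * ENNReal.ofReal (√2 / √2 ^ k) * Th q g (a * (√2 ^ k / √2)) := by
  have hs : √2 ^ 2 = 2 := Real.sq_sqrt (by norm_num)
  have hp : 0 < √2 := by positivity
  let X : ℕ → 𝔼 → Y := fun k => PP (√2 ^ k * a) (fun y => fderiv ℝ g y z)
  have h := Nq_telescope hq X (fun k => (PP_bc (hg.dir z) _).cont) ?_
  · have e0 : X 0 = PP a (fun y => fderiv ℝ g y z) := by simp [X]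
    rw [e0] at h
    refine (mul_le_mul_right h _).trans ?_
    rw [← ENNReal.tsum_mul_left]
    refine ENNReal.tsum_le_tsum fun k => ?_
    obtain ⟨b, hb⟩ : ∃ b, b = a * (√2 ^ k / √2) := ⟨_, rfl⟩
    rw [← hb]
    have hb0 : 0 < b := by rw [hb]; positivity
    have hbe : √2 ^ k * a = √2 * b := by rw [hb]; field_simp
    have e1 : (fun x => X k x - X (k + 1) x) =
        PP b (fun y => fderiv ℝ (fun y => PP b g y - PP (√3 * b) g y) y z) := by
      ext x
      have := two_step (hg.dir z) b b (c := √2 ^ k * a) (d := √2 ^ (k + 1) * a)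
        (by rw [hbe, mul_pow √2 b, hs]; ring) (by rw [pow_succ' √2 k, mul_assoc, hbe, ← mul_assoc, ← pow_two √2, hs]; ring) x
      simp only [X]
      rw [this]
      congr 1
      ext y
      rw [dir_diff hg]
    rw [e1]
    have h2 := Nq_PP_dir hq ((PP_bc1 hg b).sub (PP_bc1 hg (√3 * b))) hb0 z
    refine (mul_le_mul_right h2 _).trans (le_of_eq ?_)
    rw [← mul_assoc, ← ENNReal.ofReal_mul ha.le, ← ENNReal.ofReal_mul (norm_nonneg _)]
    unfold Th
    congr 2
    rw [hb]; field_simp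
  · refine ofReal_tendsto_zero (sqrt2_tendsto (‖z‖ / a)) hfin fun k => ?_
    refine (Nq_PP_dir hq hg (by positivity : 0 < √2 ^ k * a) z).trans (le_of_eq ?_)
    congr 2
    field_simp

lemma key_int [CompleteSpace Y] {q : ℝ} (hq : 2 ≤ q) {m : ℝ} (hm : MartCotypeBound q Y m) {g : 𝔼 → Y} (hg : BC1 g)
    (hfin : Nq q g ≠ ∞) (z : 𝔼) :
    (∫⁻ u, (ENNReal.ofReal (Real.exp u) * Nq q (PP (Real.exp u) (fun y => fderiv ℝ g y z))) ^ q) ^ (1 / q) ≤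
      5 * ENNReal.ofReal m * (ENNReal.ofReal ‖z‖ * Nq q g) := by
  have hp : 0 < √2 := by positivity
  have h := shift_sum hq (A := fun u => ENNReal.ofReal (Real.exp u) * Nq q (PP (Real.exp u) (fun y => fderiv ℝ g y z)))
    (B := fun u => Th q g (Real.exp u)) ((Th_meas hg.bc).comp Real.measurable_exp)
    (fun k => ENNReal.ofReal ‖z‖ * ENNReal.ofReal (√2 / √2 ^ k)) (fun k => Real.log (√2 ^ k / √2)) ?_
  · refine h.trans ?_
    rw [ENNReal.tsum_mul_left]
    calc _ ≤ (ENNReal.ofReal ‖z‖ * 5) * (ENNReal.ofReal m * Nq q g) := by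
          gcongr
          · exact geo_sum
          · exact Th_int hq hm hg.bc
      _ = _ := by ring
  · intro u
    refine (key_pt hq hg hfin (Real.exp_pos u) z).trans (le_of_eq ?_)
    congr 1 with k
    rw [Real.exp_add, Real.exp_log (by positivity)]

/-- Gaussian average of directional derivative norms. -/
def II (q : ℝ) (f : 𝔼 → Y) : ℝ≥0∞ := ∫⁻ w, Nq q (fun y => fderiv ℝ f y w) ∂(GM n)

/-- Gaussian average of square function blocks -/
def EE (q : ℝ) (f : 𝔼 → Y) (b : ℝ) : ℝ≥0∞ := ∫⁻ w, Th q (fun y => fderiv ℝ f y w) b ∂(GM n)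

lemma ThD_meas [CompleteSpace Y] {q : ℝ} {f : 𝔼 → Y} (hf : BC1 f) :
    Measurable fun p : ℝ × 𝔼 => Th q (fun y => fderiv ℝ f y p.2) (Real.exp p.1) := by
  have h := PP_cont hf.bcd
  have h1 : Continuous fun p : (ℝ × 𝔼) × 𝔼 => PP (Real.exp p.1.1) (fderiv ℝ f) p.2 p.1.2 -
      PP (√3 * Real.exp p.1.1) (fderiv ℝ f) p.2 p.1.2 := by
    have h2 := h.comp (by fun_prop : Continuous fun p : (ℝ × 𝔼) × 𝔼 => (Real.exp p.1.1, p.2))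
    have h3 := h.comp (by fun_prop : Continuous fun p : (ℝ × 𝔼) × 𝔼 => (√3 * Real.exp p.1.1, p.2))
    simp only [Function.comp_def] at h2 h3
    fun_prop
  simp only [PP_clm hf.bcd] at h1
  exact Nq_meas (G := fun (p : ℝ × 𝔼) x => PP (Real.exp p.1) (fun y => fderiv ℝ f y p.2) x
    - PP (√3 * Real.exp p.1) (fun y => fderiv ℝ f y p.2) x) h1.enorm.measurable

lemma EE_int [CompleteSpace Y] {q : ℝ} (hq : 2 ≤ q) {m : ℝ} (hm : MartCotypeBound q Y m) {f : 𝔼 → Y} (hf : BC1 f) :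
    (∫⁻ u, EE q f (Real.exp u) ^ q) ^ (1 / q) ≤ ENNReal.ofReal m * II q f := by
  refine (minkowski_lint volume (GM n) (F := fun u w => Th q (fun y => fderiv ℝ f y w) (Real.exp u))
    (ThD_meas hf) hq).trans ?_
  unfold II
  rw [← lintegral_const_mul' _ _ ENNReal.ofReal_ne_top]
  exact lintegral_mono fun w => Th_int hq hm (hf.dir w)

lemma sqrt_diff_le {a b : ℝ} (ha : 0 < a) (hb : 0 < b) : |√(b ^ 2 + a ^ 2) - b| ≤ a ^ 2 / b := by
  have h1 : b ≤ √(b ^ 2 + a ^ 2) := by apply Real.le_sqrt_of_sq_le; nlinarith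
  rw [abs_of_nonneg (by linarith)]
  have h2 : √(b ^ 2 + a ^ 2) ≤ b + a ^ 2 / b := by
    rw [Real.sqrt_le_left (by positivity)]
    have h3 : 0 < a ^ 2 / b := by positivity
    have h4 : b * (a ^ 2 / b) = a ^ 2 := by field_simp
    nlinarith
  linarith

/-- dyadic differences -/
def DD (q : ℝ) (f : 𝔼 → Y) (a : ℝ) : ℝ≥0∞ := Nq q (fun x => PP a f x - PP (√2 * a) f x)

lemma DD_pt [CompleteSpace Y] {q : ℝ} (hq : 2 ≤ q) {f : 𝔼 → Y} (hf : BC1 f) (hfin : II q f ≠ ∞) {a : ℝ} (ha : 0 < a) :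
    DD q f a ≤ ∑' k : ℕ, ENNReal.ofReal a * ENNReal.ofReal (√2 / √2 ^ k) * EE q f (a * (√2 ^ k / √2)) := by
  have hs : √2 ^ 2 = 2 := Real.sq_sqrt (by norm_num)
  have hp : 0 < √2 := by positivity
  let X : ℕ → 𝔼 → Y := fun k x => PP (√2 ^ k * a) f x - PP (√((√2 ^ k * a) ^ 2 + a ^ 2)) f x
  have h := Nq_telescope hq X (fun k => (PP_bc hf.bc _).cont.sub (PP_bc hf.bc _).cont) ?_
  · have e0 : X 0 = (fun x => PP a f x - PP (√2 * a) f x) := by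
      ext x
      simp only [X, pow_zero, one_mul]
      rw [← two_mul, Real.sqrt_mul (by norm_num), Real.sqrt_sq ha.le]
    rw [e0] at h
    refine h.trans ?_
    refine ENNReal.tsum_le_tsum fun k => ?_
    obtain ⟨b, hb⟩ : ∃ b, b = a * (√2 ^ k / √2) := ⟨_, rfl⟩
    rw [← hb]
    have hb0 : 0 < b := by rw [hb]; positivity
    have hbe : √2 ^ k * a = √2 * b := by rw [hb]; field_simp
    have hbe2 : √2 ^ (k + 1) * a = 2 * b := by rw [pow_succ' √2 k, mul_assoc, hbe, ← mul_assoc, ← pow_two √2, hs]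
    have e1 : (fun x => X k x - X (k + 1) x) = fun x =>
        PP b (fun y => PP b f y - PP (√3 * b) f y) x -
        PP (√(b ^ 2 + a ^ 2)) (fun y => PP b f y - PP (√3 * b) f y) x := by
      ext x
      rw [← two_step hf.bc b b (c := √2 ^ k * a) (d := √2 ^ (k + 1) * a)
        (by rw [hbe, mul_pow √2 b, hs]; ring) (by rw [hbe2]; ring) x,
        ← two_step hf.bc b (√(b ^ 2 + a ^ 2)) (c := √((√2 ^ k * a) ^ 2 + a ^ 2))
          (d := √((√2 ^ (k + 1) * a) ^ 2 + a ^ 2))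
        (by rw [Real.sq_sqrt (by positivity), Real.sq_sqrt (by positivity), hbe, mul_pow √2 b, hs]; ring)
        (by rw [Real.sq_sqrt (by positivity), Real.sq_sqrt (by positivity), hbe2]; ring) x]
      simp only [X]
      abel
    rw [e1]
    refine (Nq_PP_diff hq ((PP_bc1 hf b).sub (PP_bc1 hf (√3 * b))) _ _).trans ?_
    have e2 : ∀ w : 𝔼, Nq q (fun y => fderiv ℝ (fun y => PP b f y - PP (√3 * b) f y) y w) =
        Th q (fun y => fderiv ℝ f y w) b := by
      intro w; simp_rw [dir_diff hf]; rfl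
    simp_rw [e2]
    change _ * EE q f b ≤ _
    rw [← ENNReal.ofReal_mul ha.le]
    gcongr
    refine (sqrt_diff_le ha hb0).trans (le_of_eq ?_)
    rw [hb]; field_simp
  · refine ofReal_tendsto_zero (sqrt2_tendsto a) hfin fun k => ?_
    refine (Nq_PP_diff hq hf _ _).trans ?_
    change _ * II q f ≤ _
    gcongr
    refine (sqrt_diff_le ha (by positivity)).trans (le_of_eq ?_)
    field_simp

lemma RR_pt [CompleteSpace Y] {q : ℝ} (hq : 2 ≤ q) {f : 𝔼 → Y} (hf : BC1 f) (hfin : II q f ≠ ∞) {s : ℝ} (hs : 0 < s) :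
    Nq q (fun x => f x - PP s f x) ≤ ∑' k : ℕ, DD q f (s * (1 / √2 ^ (k + 1))) := by
  have hp : 0 < √2 := by positivity
  let X : ℕ → 𝔼 → Y := fun k x => f x - PP (s / √2 ^ k) f x
  have h := Nq_telescope hq X (fun k => hf.bc.cont.sub (PP_bc hf.bc _).cont) ?_
  · have e0 : X 0 = (fun x => f x - PP s f x) := by simp [X]
    rw [e0] at h
    refine h.trans (ENNReal.tsum_le_tsum fun k => le_of_eq ?_)
    refine Nq_congr fun x => ?_
    have e1 : √2 * (s * (1 / √2 ^ (k + 1))) = s / √2 ^ k := by rw [pow_succ]; field_simp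
    have e2 : s * (1 / √2 ^ (k + 1)) = s / √2 ^ (k + 1) := by field_simp
    simp only [X, e1]
    rw [e2]
    congr 1; abel
  · refine ofReal_tendsto_zero (sqrt2_tendsto s) hfin fun k => ?_
    have := Nq_PP_diff hq hf 0 (s / √2 ^ k)
    rw [PP_zero, sub_zero, abs_of_nonneg (by positivity)] at this
    exact this

lemma RR_int [CompleteSpace Y] {q : ℝ} (hq : 2 ≤ q) {m : ℝ} (hm : MartCotypeBound q Y m) {f : 𝔼 → Y} (hf : BC1 f)
    (hfin : II q f ≠ ∞) :
    (∫⁻ u, (ENNReal.ofReal (Real.exp (-u)) * Nq q (fun x => f x - PP (Real.exp u) f x)) ^ q) ^ (1 / q) ≤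
      25 * ENNReal.ofReal m * II q f := by
  have hp : 0 < √2 := by positivity
  have hEm : Measurable fun u => EE q f (Real.exp u) := (ThD_meas hf).lintegral_prod_right'
  have hDm : Measurable fun u => ENNReal.ofReal (Real.exp (-u)) * DD q f (Real.exp u) := by
    refine Measurable.mul (by fun_prop) ?_
    have h := PP_cont hf.bc
    have h1 : Continuous fun p : ℝ × 𝔼 => PP (Real.exp p.1) f p.2 - PP (√2 * Real.exp p.1) f p.2 :=
      (h.comp (by fun_prop : Continuous fun p : ℝ × 𝔼 => (Real.exp p.1, p.2))).sub
        (h.comp (by fun_prop : Continuous fun p : ℝ × 𝔼 => (√2 * Real.exp p.1, p.2)))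
    exact Nq_meas (G := fun b x => PP (Real.exp b) f x - PP (√2 * Real.exp b) f x) h1.enorm.measurable
  have h1 := shift_sum hq (A := fun u => ENNReal.ofReal (Real.exp (-u)) * DD q f (Real.exp u))
    (B := fun u => EE q f (Real.exp u)) hEm
    (fun k => ENNReal.ofReal (√2 / √2 ^ k)) (fun k => Real.log (√2 ^ k / √2)) ?_
  · have h2 := shift_sum hq (A := fun u => ENNReal.ofReal (Real.exp (-u)) * Nq q (fun x => f x - PP (Real.exp u) f x))
      (B := fun u => ENNReal.ofReal (Real.exp (-u)) * DD q f (Real.exp u)) hDm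
      (fun k => ENNReal.ofReal (√2 / √2 ^ k)) (fun k => Real.log (1 / √2 ^ (k + 1))) ?_
    · calc _ ≤ _ := h2
        _ ≤ 5 * (5 * (ENNReal.ofReal m * II q f)) := by
          gcongr
          · exact geo_sum
          · refine h1.trans ?_
            gcongr
            · exact geo_sum
            · exact EE_int hq hm hf
        _ = _ := by ring
    · intro u
      refine (mul_le_mul_right (RR_pt hq hf hfin (Real.exp_pos u)) _).trans ?_
      rw [← ENNReal.tsum_mul_left]
      refine ENNReal.tsum_le_tsum fun k => ?_
      rw [Real.exp_add, neg_add, Real.exp_add, Real.exp_neg (Real.log _), Real.exp_log (by positivity), ← mul_assoc,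
        ← ENNReal.ofReal_mul (by positivity)]
      gcongr
      rw [one_div, inv_inv, mul_left_comm]
      refine le_mul_of_one_le_right (by positivity) ?_
      rw [div_mul_eq_mul_div, one_le_div (by positivity), pow_succ, mul_comm √2, mul_assoc]
      refine le_mul_of_one_le_right (by positivity) ?_
      rw [Real.mul_self_sqrt (by norm_num)]; norm_num
  · intro u
    refine (mul_le_mul_right (DD_pt hq hf hfin (Real.exp_pos u)) _).trans (le_of_eq ?_)
    rw [← ENNReal.tsum_mul_left]
    congr 1 with k
    rw [Real.exp_add, Real.exp_log (by positivity), ← mul_assoc, ← mul_assoc, ← ENNReal.ofReal_mul (by positivity),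
      ← Real.exp_add]
    simp

end

section
variable {n : ℕ} {Y : Type*} [NormedAddCommGroup Y] [NormedSpace ℝ Y]
local notation "𝔼" => EuclideanSpace ℝ (Fin n)

lemma polar_hom (hn : 0 < n) {ψ : 𝔼 → ℝ≥0∞} (hψ : Measurable ψ) {K : ℝ → ℝ≥0∞} (hK : Measurable K)
    (hh : ∀ (r : ℝ) (w : 𝔼), 0 < r → ψ (r • w) = ENNReal.ofReal r * ψ w) :
    ∫⁻ w, K ‖w‖ * ψ w = (∫⁻ σ : sphere (0 : 𝔼) 1, ψ σ ∂((volume : Measure 𝔼).toSphere)) *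
      ∫⁻ r : Ioi (0 : ℝ), K r * ENNReal.ofReal r ∂(Measure.volumeIoiPow (Module.finrank ℝ 𝔼 - 1)) := by
  have : Nonempty (Fin n) := ⟨⟨0, hn⟩⟩
  have h1 := (Measure.measurePreserving_homeomorphUnitSphereProd (volume : Measure 𝔼))
  have hm1 : Measurable fun σ : sphere (0 : 𝔼) 1 => ψ σ := hψ.comp measurable_subtype_coe
  have hm2 : Measurable fun r : Ioi (0 : ℝ) => K r * ENNReal.ofReal r :=
    (hK.comp measurable_subtype_coe).mul (measurable_subtype_coe.ennreal_ofReal)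
  have hm3 : Measurable fun z : sphere (0 : 𝔼) 1 × Ioi (0 : ℝ) => ψ z.1 * (K z.2 * ENNReal.ofReal z.2) :=
    (hm1.comp measurable_fst).mul (hm2.comp measurable_snd)
  rw [← lintegral_prod_mul hm1.aemeasurable hm2.aemeasurable, ← h1.lintegral_comp hm3]
  have e : ∀ x : ({0}ᶜ : Set 𝔼), ψ ((homeomorphUnitSphereProd 𝔼 x).1 : 𝔼) *
      (K (homeomorphUnitSphereProd 𝔼 x).2 * ENNReal.ofReal (homeomorphUnitSphereProd 𝔼 x).2) = K ‖(x : 𝔼)‖ * ψ x := by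
    intro x
    have hx : 0 < ‖(x : 𝔼)‖ := norm_pos_iff.2 x.2
    have e1 : ((homeomorphUnitSphereProd 𝔼 x).1 : 𝔼) = ‖(x : 𝔼)‖⁻¹ • (x : 𝔼) := by simp
    have e2 : ((homeomorphUnitSphereProd 𝔼 x).2 : ℝ) = ‖(x : 𝔼)‖ := by simp
    rw [e1, e2, hh _ _ (by positivity), mul_comm (ENNReal.ofReal _), mul_left_comm, mul_assoc, ← ENNReal.ofReal_mul (by positivity),
      inv_mul_cancel₀ hx.ne', ENNReal.ofReal_one, mul_one]
  simp_rw [e]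
  rw [lintegral_subtype_comap (measurableSet_singleton _).compl (fun x : 𝔼 => K ‖x‖ * ψ x)]
  rw [restrict_compl_singleton]

lemma dir_meas {q : ℝ} {f : 𝔼 → Y} (hf : BC1 f) : Measurable fun w => Nq q (fun y => fderiv ℝ f y w) := by
  have := hf.bcd.cont
  exact Nq_meas (G := fun w y => fderiv ℝ f y w) (Continuous.measurable (by fun_prop))

lemma dir_smul {q : ℝ} (hq : 2 ≤ q) {f : 𝔼 → Y} (r : ℝ) (w : 𝔼) :
    Nq q (fun y => fderiv ℝ f y (r • w)) = ‖r‖ₑ * Nq q (fun y => fderiv ℝ f y w) := by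
  simp_rw [map_smul]
  rw [Nq_smul hq]

lemma II_le (hn : 0 < n) {q : ℝ} (hq : 2 ≤ q) {f : 𝔼 → Y} (hf : BC1 f) :
    II q f ≤ ENNReal.ofReal (2 * √n) *
      ((∫⁻ σ : sphere (0 : 𝔼) 1, Nq q (fun y => fderiv ℝ f y σ) ∂((volume : Measure 𝔼).toSphere)) /
        (volume : Measure 𝔼).toSphere univ) := by
  have : Nonempty (Fin n) := ⟨⟨0, hn⟩⟩
  let K : ℝ → ℝ≥0∞ := fun r => ENNReal.ofReal ((4 * Real.pi * 1) ^ (-(n : ℝ) / 2) * Real.exp (-r ^ 2 / (4 * 1)))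
  have hK : Measurable K := by
    apply Measurable.ennreal_ofReal; fun_prop
  have hd : ∀ φ : 𝔼 → ℝ≥0∞, Measurable φ → ∫⁻ w, φ w ∂(GM n) = ∫⁻ w, K ‖w‖ * φ w := by
    intro φ hφ
    rw [GM, lintegral_withDensity_eq_lintegral_mul _ (heatKernel_contDiff.continuous.measurable.ennreal_ofReal) hφ]
    rfl
  have h1 : II q f = _ := hd _ (dir_meas hf)
  rw [polar_hom hn (dir_meas hf) hK (fun r w hr => by
    rw [dir_smul hq, Real.enorm_of_nonneg hr.le])] at h1
  have h2 := GM_lint_norm (n := n)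
  rw [hd _ measurable_enorm, polar_hom hn measurable_enorm hK (fun r w hr => by
    rw [enorm_smul, Real.enorm_of_nonneg hr.le])] at h2
  have h3 : ∀ σ : sphere (0 : 𝔼) 1, ‖(σ : 𝔼)‖ₑ = 1 := fun σ => by
    rw [← ofReal_norm, norm_eq_of_mem_sphere]; simp
  simp only [h3, lintegral_one] at h2
  rw [h1]
  have hT0 : (volume : Measure 𝔼).toSphere univ ≠ 0 := by
    rw [Ne, Measure.measure_univ_eq_zero]; exact Measure.toSphere_ne_zero _
  have hT1 : (volume : Measure 𝔼).toSphere univ ≠ ∞ := measure_ne_top _ _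
  generalize (volume : Measure 𝔼).toSphere univ = T at *
  generalize ∫⁻ r : Ioi (0 : ℝ), K r * ENNReal.ofReal r ∂(Measure.volumeIoiPow (Module.finrank ℝ 𝔼 - 1)) = A at *
  refine le_trans ?_ (mul_le_mul_left h2 _)
  rw [mul_right_comm, ENNReal.mul_div_cancel hT0 hT1]

lemma Nq_fin {q : ℝ} (hq : 2 ≤ q) {Z : Type*} [NormedAddCommGroup Z] {f : 𝔼 → Z} (hf : Continuous f) (h : HasCompactSupport f) :
    Nq q f ≠ ∞ := by
  rw [← Nq_eq hq]
  exact (hf.memLp_of_hasCompactSupport h).eLpNorm_ne_top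

lemma II_fin {q : ℝ} (hq : 2 ≤ q) {f : 𝔼 → Y} (hf : BC1 f) (h : HasCompactSupport f) : II q f ≠ ∞ := by
  have h1 : ∀ w : 𝔼, Nq q (fun y => fderiv ℝ f y w) ≤ ‖w‖ₑ * Nq q (fderiv ℝ f) := by
    intro w
    have h2 := Nq_smul hq ‖w‖ (fderiv ℝ f)
    rw [enorm_norm] at h2
    rw [← h2]
    unfold Nq
    have : 0 < q := by linarith
    gcongr with y
    rw [enorm_smul, enorm_norm, mul_comm]
    exact (fderiv ℝ f y).le_opENorm w
  have h3 : II q f ≤ ENNReal.ofReal (2 * √n) * Nq q (fderiv ℝ f) := by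
    refine (lintegral_mono h1).trans ?_
    rw [lintegral_mul_const _ measurable_enorm]
    gcongr
    exact GM_lint_norm
  exact ne_top_of_le_ne_top (ENNReal.mul_ne_top ENNReal.ofReal_ne_top
    (Nq_fin hq hf.bcd.cont (h.fderiv ℝ))) h3

end

section
variable {n : ℕ} {Y : Type*} [NormedAddCommGroup Y] [NormedSpace ℝ Y]
local notation "𝔼" => EuclideanSpace ℝ (Fin n)

/-- normalized measure on the unit ball of `N` -/
def AV (N : 𝔼 → ℝ) : Measure 𝔼 := (volume {z : 𝔼 | N z ≤ 1})⁻¹ • volume.restrict {z : 𝔼 | N z ≤ 1}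

instance AV_sfinite (N : 𝔼 → ℝ) : SFinite (AV N) := by unfold AV; infer_instance

lemma AV_lint (N : 𝔼 → ℝ) (φ : 𝔼 → ℝ≥0∞) :
    ∫⁻ z, φ z ∂(AV N) = (∫⁻ z in {z : 𝔼 | N z ≤ 1}, φ z) / volume {z : 𝔼 | N z ≤ 1} := by
  rw [AV, lintegral_smul_measure, smul_eq_mul, mul_comm]; rfl

lemma AV_univ (N : 𝔼 → ℝ) : AV N univ ≤ 1 := by
  rw [AV]; simp [ENNReal.inv_mul_le_one]

lemma avg_change {N : 𝔼 → ℝ} (hN : IsNorm N) {t : ℝ} (ht : 0 < t) (x : 𝔼) (φ : 𝔼 → ℝ≥0∞) :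
    (∫⁻ y in {y : 𝔼 | N (y - x) ≤ t}, φ y) / volume {y : 𝔼 | N (y - x) ≤ t} =
      ∫⁻ z, φ (x + t • z) ∂(AV N) := by
  let T : 𝔼 ≃ₜ 𝔼 := (Homeomorph.smulOfNeZero t ht.ne').trans (Homeomorph.addLeft x)
  have hT : ∀ z, T z = x + t • z := fun z => rfl
  have hpre : T ⁻¹' {y : 𝔼 | N (y - x) ≤ t} = {z : 𝔼 | N z ≤ 1} := by
    ext z
    simp only [mem_preimage, mem_setOf_eq, hT, add_sub_cancel_left]
    rw [hN.2.1, abs_of_pos ht]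
    constructor
    · intro h; nlinarith
    · intro h; nlinarith
  have hmap : Measure.map T (volume : Measure 𝔼) = ENNReal.ofReal |(t ^ n)⁻¹| • volume := by
    have h1 : (T : 𝔼 → 𝔼) = (fun y => x + y) ∘ (fun z => t • z) := rfl
    rw [h1, ← Measure.map_map (by fun_prop) (by fun_prop), Measure.map_addHaar_smul volume ht.ne',
      Measure.map_smul, map_add_left_eq_self]
    simp
  have hc : ENNReal.ofReal |(t ^ n)⁻¹| ≠ 0 := by
    simp; positivity
  have key : ∀ φ : 𝔼 → ℝ≥0∞, ENNReal.ofReal |(t ^ n)⁻¹| * ∫⁻ y in {y : 𝔼 | N (y - x) ≤ t}, φ y =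
      ∫⁻ z in {z : 𝔼 | N z ≤ 1}, φ (x + t • z) := by
    intro φ
    rw [← smul_eq_mul, ← lintegral_smul_measure, ← Measure.restrict_smul, ← hmap,
      T.measurableEmbedding.restrict_map, T.measurableEmbedding.lintegral_map, hpre]
    rfl
  have hv := key (fun _ => 1)
  simp only [lintegral_one, Measure.restrict_apply_univ] at hv
  rw [AV_lint, ← key, ← hv, ENNReal.mul_div_mul_left _ _ hc ENNReal.ofReal_ne_top]

lemma exp_subst (h : ℝ → ℝ≥0∞) :
    ∫⁻ t in Ioi (0 : ℝ), h t = ∫⁻ u, ENNReal.ofReal (Real.exp u) * h (Real.exp u) := by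
  have := lintegral_image_eq_lintegral_abs_deriv_mul (s := univ) (f := Real.exp) (f' := Real.exp) MeasurableSet.univ
    (fun x _ => (Real.hasDerivAt_exp x).hasDerivWithinAt) Real.exp_injective.injOn h
  rw [image_univ, Real.range_exp] at this
  simpa using this

lemma lp_const {α : Type*} [MeasurableSpace α] (μ : Measure α) {q : ℝ} (hq : 2 ≤ q) {c : ℝ≥0∞} (hc : c ≠ ∞)
    (F : α → ℝ≥0∞) : (∫⁻ u, (c * F u) ^ q ∂μ) ^ (1 / q) = c * (∫⁻ u, F u ^ q ∂μ) ^ (1 / q) := by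
  have hq0 : 0 < q := by linarith
  simp_rw [ENNReal.mul_rpow_of_nonneg _ _ hq0.le]
  rw [lintegral_const_mul' _ _ (ENNReal.rpow_ne_top_of_nonneg hq0.le hc),
    ENNReal.mul_rpow_of_nonneg _ _ (by positivity), ← ENNReal.rpow_mul, mul_one_div_cancel hq0.ne', ENNReal.rpow_one]

lemma alpha_int [CompleteSpace Y] {q : ℝ} (hq : 2 ≤ q) {m : ℝ} (hm : MartCotypeBound q Y m) {f : 𝔼 → Y} (hf : BC1 f)
    (hfin : II q f ≠ ∞) {s : ℝ} (hs : 0 < s) :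
    (∫⁻ u, (ENNReal.ofReal (Real.exp (-u)) * Nq q (fun x => f x - PP (s * Real.exp u) f x)) ^ q) ^ (1 / q) ≤
      ENNReal.ofReal s * (25 * ENNReal.ofReal m * II q f) := by
  have h := RR_int hq hm hf hfin
  rw [← lintegral_add_right_eq_self _ (Real.log s)] at h
  have h2 := mul_le_mul_right h (ENNReal.ofReal s)
  rw [← lp_const volume hq ENNReal.ofReal_ne_top] at h2
  refine le_trans (le_of_eq ?_) h2
  congr 2 with u
  rw [← mul_assoc, ← ENNReal.ofReal_mul hs.le, neg_add, Real.exp_add, Real.exp_add, Real.exp_neg (Real.log s), Real.exp_log hs,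
    mul_comm s (Real.exp u)]
  congr 3
  field_simp

lemma beta_int [CompleteSpace Y] {q : ℝ} (hq : 2 ≤ q) {m : ℝ} (hm : MartCotypeBound q Y m) {g : 𝔼 → Y} (hg : BC1 g)
    (hfin : Nq q g ≠ ∞) (z : 𝔼) {s : ℝ} (hs : 0 < s) :
    (∫⁻ u, (ENNReal.ofReal (Real.exp u) * Nq q (PP (s * Real.exp u) (fun y => fderiv ℝ g y z))) ^ q) ^ (1 / q) ≤
      ENNReal.ofReal s⁻¹ * (5 * ENNReal.ofReal m * (ENNReal.ofReal ‖z‖ * Nq q g)) := by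
  have h := key_int hq hm hg hfin z
  rw [← lintegral_add_right_eq_self _ (Real.log s)] at h
  have h2 := mul_le_mul_right h (ENNReal.ofReal s⁻¹)
  rw [← lp_const volume hq ENNReal.ofReal_ne_top] at h2
  refine le_trans (le_of_eq ?_) h2
  congr 2 with u
  rw [← mul_assoc, ← ENNReal.ofReal_mul (by positivity), Real.exp_add, Real.exp_log hs,
    mul_comm s (Real.exp u)]
  congr 3
  field_simp

lemma dir_eq (g : 𝔼 → Y) (x h : 𝔼) :
    ∑ j, h j • fderiv ℝ g x (EuclideanSpace.single j 1) = fderiv ℝ g x h := by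
  have : h = ∑ j, h j • EuclideanSpace.single j (1 : ℝ) := by
    have := (EuclideanSpace.basisFun (Fin n) ℝ).sum_repr h
    simpa using this.symm
  conv_rhs => rw [this, map_sum]
  simp_rw [map_smul]

lemma dirDeriv_eq (f : 𝔼 → Y) (z : 𝔼) : dirDeriv z f = fun y => fderiv ℝ f y z := by
  ext y; exact dir_eq f y z

lemma taylor1_eq (g : 𝔼 → Y) (x h : 𝔼) : taylor1 g x (x + h) = g x + fderiv ℝ g x h := by
  unfold taylor1
  rw [add_sub_cancel_left, dir_eq]

/-- second directional derivative -/
def D2 (f : 𝔼 → Y) (z y : 𝔼) : Y := fderiv ℝ (fun y => fderiv ℝ f y z) y z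

lemma D2_eq {f : 𝔼 → Y} (hf : ContDiff ℝ (⊤ : ℕ∞) f) (z y : 𝔼) :
    D2 f z y = fderiv ℝ (fderiv ℝ f) y z z := by
  have h : DifferentiableAt ℝ (fderiv ℝ f) y :=
    ((hf.fderiv_right (m := (⊤ : ℕ∞)) (by simp)).differentiable (by simp)) y
  unfold D2
  rw [fderiv_clm_apply h (differentiableAt_const z)]
  simp

/-- the error term -/
lemma G_bound [CompleteSpace Y] {q : ℝ} (hq : 2 ≤ q) {f : 𝔼 → Y} (hf : ContDiff ℝ (⊤ : ℕ∞) f) (hc : HasCompactSupport f)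
    (s u : ℝ) (z : 𝔼) :
    ENNReal.ofReal (Real.exp (-u)) * Nq q (fun x => f (x + Real.exp u • z) -
      (PP s f x + fderiv ℝ (PP s f) x (Real.exp u • z))) ≤
    ENNReal.ofReal (Real.exp (-u)) * Nq q (fun x => f x - PP s f x) +
      ENNReal.ofReal (Real.exp u) * Nq q (PP s (D2 f z)) := by
  have hb : BC1 f := .of_compact hf hc
  have hf1 : ContDiff ℝ (⊤ : ℕ∞) (fderiv ℝ f) := hf.fderiv_right (by simp)
  have hb' : BC1 (fderiv ℝ f) := .of_compact hf1 (hc.fderiv ℝ)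
  have hP1 := hb.bc.cont
  have hP2 := (PP_bc1 hb s).bc.cont
  have hP3 := (PP_bc1 hb s).bcd.cont
  set h := Real.exp u • z with hh
  have h1 : Nq q (fun x => f (x + h) - (PP s f x + fderiv ℝ (PP s f) x h)) ≤
      Nq q (fun x => f x - PP s f x) + Nq q (fun x => PP s f (x + h) - PP s f x - fderiv ℝ (PP s f) x h) := by
    rw [← Nq_translate (fun x => f x - PP s f x) h]
    refine le_trans (le_of_eq ?_) (Nq_add_le hq (Continuous.aestronglyMeasurable (by fun_prop))
      (Continuous.aestronglyMeasurable (by fun_prop)))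
    refine Nq_congr fun x => ?_
    congr 1; abel
  have h2 := taylor_bound hq (PP_contDiff_two hb hb' s) h
  have h3 : ∀ x, fderiv ℝ (fun y => fderiv ℝ (PP s f) y h) x h = (Real.exp u * Real.exp u) • PP s (D2 f z) x := by
    intro x
    have e1 : (fun y => fderiv ℝ (PP s f) y h) = PP s (fun y => fderiv ℝ f y h) := by
      ext y; exact PP_dir hb s y h
    have hb2 : BC1 (fun y => fderiv ℝ f y h) := .of_compact (dir_smooth hf h) (dir_compact hc h)
    rw [e1, PP_dir hb2]
    have e2 : (fun y => fderiv ℝ (fun y => fderiv ℝ f y h) y h) = fun y => (Real.exp u * Real.exp u) • D2 f z y := by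
      ext y
      change D2 f h y = _
      rw [D2_eq hf, D2_eq hf, hh]
      simp [smul_smul]
    rw [e2]
    simp only [PP]
    rw [integral_smul]
  simp_rw [h3] at h2
  rw [Nq_smul hq, Real.enorm_of_nonneg (by positivity)] at h2
  calc _ ≤ ENNReal.ofReal (Real.exp (-u)) * (Nq q (fun x => f x - PP s f x) +
        ENNReal.ofReal (Real.exp u * Real.exp u) * Nq q (PP s (D2 f z))) := by
        gcongr; exact h1.trans (by gcongr)
    _ = _ := by
        rw [mul_add, ← mul_assoc, ← ENNReal.ofReal_mul (by positivity), ← mul_assoc, ← Real.exp_add]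
        simp

end

section
variable {n : ℕ} {Y : Type*} [NormedAddCommGroup Y] [NormedSpace ℝ Y]
local notation "𝔼" => EuclideanSpace ℝ (Fin n)

/-- the error function -/
def GG (f : 𝔼 → Y) (r : ℝ) (u : ℝ) (z x : 𝔼) : Y :=
  f (x + Real.exp u • z) - (PP (r * Real.exp u) f x + fderiv ℝ (PP (r * Real.exp u) f) x (Real.exp u • z))

lemma GG_cont {f : 𝔼 → Y} (hf : BC1 f) (r : ℝ) :
    Continuous fun p : (ℝ × 𝔼) × 𝔼 => GG f r p.1.1 p.1.2 p.2 := by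
  have h1 := (PP_cont hf.bc).comp (by fun_prop : Continuous fun p : (ℝ × 𝔼) × 𝔼 => (r * Real.exp p.1.1, p.2))
  have h2 := (PP_cont hf.bcd).comp (by fun_prop : Continuous fun p : (ℝ × 𝔼) × 𝔼 => (r * Real.exp p.1.1, p.2))
  have h3 := hf.bc.cont
  simp only [Function.comp_def] at h1 h2
  unfold GG
  simp only [PP_fderiv hf]
  fun_prop

lemma lhs_point {q : ℝ} (hq : 2 ≤ q) {N : 𝔼 → ℝ} (hN : IsNorm N) {γ : ℝ} (hγ : 0 < γ) (f : 𝔼 → Y) (x : 𝔼) :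
    (∫⁻ t in Set.Ioi (0 : ℝ),
            ((∫⁻ y in {y : 𝔼 | N (y - x) ≤ t},
                (‖f y - taylor1 (heat (γ * t ^ 2) f) x y‖₊ : ℝ≥0∞) ^ q)
              / volume {y : 𝔼 | N (y - x) ≤ t})
              / ENNReal.ofReal (t ^ (q + 1))) =
    ∫⁻ u, ∫⁻ z, (ENNReal.ofReal (Real.exp (-u)) * ‖GG f (√γ) u z x‖ₑ) ^ q ∂(AV N) := by
  have hq0 : 0 < q := by linarith
  rw [exp_subst]
  refine lintegral_congr fun u => ?_
  have hu := Real.exp_pos u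
  rw [avg_change hN hu]
  have hh : heat (γ * Real.exp u ^ 2) f = PP (√γ * Real.exp u) f := by
    rw [← heat_eq (by positivity), mul_pow, Real.sq_sqrt hγ.le]
  simp_rw [ENNReal.mul_rpow_of_nonneg _ _ hq0.le]
  rw [lintegral_const_mul' _ _ (ENNReal.rpow_ne_top_of_nonneg hq0.le ENNReal.ofReal_ne_top)]
  have e : ∀ z, (‖f (x + Real.exp u • z) - taylor1 (heat (γ * Real.exp u ^ 2) f) x (x + Real.exp u • z)‖₊ : ℝ≥0∞) = ‖GG f (√γ) u z x‖ₑ := by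
    intro z
    rw [taylor1_eq, hh]; rfl
  simp_rw [e]
  rw [ENNReal.div_eq_inv_mul, ← mul_assoc]
  congr 1
  rw [← ENNReal.ofReal_inv_of_pos (by positivity), ← ENNReal.ofReal_mul hu.le,
    ENNReal.ofReal_rpow_of_pos (Real.exp_pos _)]
  congr 1
  rw [← Real.exp_mul, ← Real.exp_mul, ← Real.exp_neg, ← Real.exp_add]
  congr 1; ring

lemma lhs_swap {q : ℝ} (hq : 2 ≤ q) {N : 𝔼 → ℝ} {f : 𝔼 → Y} (hf : BC1 f) (r : ℝ) :
    ∫⁻ x, ∫⁻ u, ∫⁻ z, (ENNReal.ofReal (Real.exp (-u)) * ‖GG f r u z x‖ₑ) ^ q ∂(AV N) =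
    ∫⁻ p : ℝ × 𝔼, (ENNReal.ofReal (Real.exp (-p.1)) * Nq q (GG f r p.1 p.2)) ^ q ∂(volume.prod (AV N)) := by
  have hq0 : 0 < q := by linarith
  have hm : Measurable fun p : (ℝ × 𝔼) × 𝔼 => (ENNReal.ofReal (Real.exp (-p.1.1)) * ‖GG f r p.1.1 p.1.2 p.2‖ₑ) ^ q := by
    have := (GG_cont hf r).enorm.measurable
    fun_prop
  have h1 : ∀ x, ∫⁻ u, ∫⁻ z, (ENNReal.ofReal (Real.exp (-u)) * ‖GG f r u z x‖ₑ) ^ q ∂(AV N) =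
      ∫⁻ p : ℝ × 𝔼, (ENNReal.ofReal (Real.exp (-p.1)) * ‖GG f r p.1 p.2 x‖ₑ) ^ q ∂(volume.prod (AV N)) := by
    intro x
    rw [lintegral_prod]
    exact (hm.comp (by fun_prop : Measurable fun p : ℝ × 𝔼 => (p, x))).aemeasurable
  simp_rw [h1]
  rw [lintegral_lintegral_swap]
  · refine lintegral_congr fun p => ?_
    simp_rw [ENNReal.mul_rpow_of_nonneg _ _ hq0.le]
    rw [lintegral_const_mul' _ _ (ENNReal.rpow_ne_top_of_nonneg hq0.le ENNReal.ofReal_ne_top), Nq_rpow hq]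
  · exact (hm.comp measurable_swap).aemeasurable

lemma alpha_meas {q : ℝ} {f : 𝔼 → Y} (hf : BC1 f) (r : ℝ) :
    Measurable fun u : ℝ => ENNReal.ofReal (Real.exp (-u)) * Nq q (fun x => f x - PP (r * Real.exp u) f x) := by
  have h1 := (PP_cont hf.bc).comp (by fun_prop : Continuous fun p : ℝ × 𝔼 => (r * Real.exp p.1, p.2))
  have h3 := hf.bc.cont
  simp only [Function.comp_def] at h1
  have h4 : Continuous fun p : ℝ × 𝔼 => f p.2 - PP (r * Real.exp p.1) f p.2 := by fun_prop
  have := Nq_meas (q := q) (G := fun u x => f x - PP (r * Real.exp u) f x) h4.enorm.measurable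
  fun_prop

lemma beta_meas [CompleteSpace Y] {q : ℝ} {f : 𝔼 → Y} (hf : ContDiff ℝ (⊤ : ℕ∞) f) (hc : HasCompactSupport f) (r : ℝ) :
    Measurable fun p : ℝ × 𝔼 => ENNReal.ofReal (Real.exp p.1) * Nq q (PP (r * Real.exp p.1) (D2 f p.2)) := by
  have hf1 : ContDiff ℝ (⊤ : ℕ∞) (fderiv ℝ f) := hf.fderiv_right (by simp)
  have hb : BC1 (fderiv ℝ f) := .of_compact hf1 (hc.fderiv ℝ)
  have h1 := (PP_cont hb.bcd).comp (by fun_prop : Continuous fun p : (ℝ × 𝔼) × 𝔼 => (r * Real.exp p.1.1, p.2))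
  simp only [Function.comp_def] at h1
  have h2 : Continuous fun p : (ℝ × 𝔼) × 𝔼 => PP (r * Real.exp p.1.1) (fderiv ℝ (fderiv ℝ f)) p.2 p.1.2 p.1.2 := by
    fun_prop
  have h3 : ∀ (s : ℝ) (x z : 𝔼), PP s (fderiv ℝ (fderiv ℝ f)) x z z = PP s (D2 f z) x := by
    intro s x z
    rw [PP_clm hb.bcd, PP_clm (hb.bcd.clm z)]
    congr 1
    ext y; rw [D2_eq hf]
  simp only [h3] at h2
  have := Nq_meas (q := q) (G := fun (p : ℝ × 𝔼) x => PP (r * Real.exp p.1) (D2 f p.2) x) h2.enorm.measurable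
  fun_prop

lemma main_ineq [CompleteSpace Y] {q : ℝ} (hq : 2 ≤ q) (hn : 0 < n) {N : 𝔼 → ℝ} (hN : IsNorm N)
    {m : ℝ} (hm0 : 0 ≤ m) (hm : MartCotypeBound q Y m) {γ : ℝ} (hγ : 0 < γ) {f : 𝔼 → Y}
    (hf : ContDiff ℝ (⊤ : ℕ∞) f) (hc : HasCompactSupport f) :
    (∫⁻ x, ∫⁻ t in Set.Ioi (0 : ℝ),
            ((∫⁻ y in {y : 𝔼 | N (y - x) ≤ t},
                (‖f y - taylor1 (heat (γ * t ^ 2) f) x y‖₊ : ℝ≥0∞) ^ q)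
              / volume {y : 𝔼 | N (y - x) ≤ t})
              / ENNReal.ofReal (t ^ (q + 1))) ^ (1 / q)
          ≤ ENNReal.ofReal (50 * m / Real.sqrt γ) *
              (((∫⁻ x in {x : 𝔼 | N x ≤ 1},
                  ENNReal.ofReal (‖x‖ ^ q) *
                    eLpNorm (dirDeriv x f) (ENNReal.ofReal q) volume ^ q)
                / volume {x : 𝔼 | N x ≤ 1}) ^ (1 / q))
            + ENNReal.ofReal (50 * m * Real.sqrt (γ * n)) *
                ((∫⁻ σ : sphere (0 : 𝔼) 1,
                    eLpNorm (dirDeriv (σ : 𝔼) f)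
                      (ENNReal.ofReal q) volume
                    ∂((volume : Measure 𝔼).toSphere))
                  / (volume : Measure 𝔼).toSphere Set.univ) := by
  have hq0 : 0 < q := by linarith
  have hb : BC1 f := .of_compact hf hc
  have hr : 0 < √γ := Real.sqrt_pos.2 hγ
  simp_rw [lhs_point hq hN hγ f]
  rw [lhs_swap hq hb]
  set r := √γ with hrdef
  set α : ℝ → ℝ≥0∞ := fun u => ENNReal.ofReal (Real.exp (-u)) * Nq q (fun x => f x - PP (r * Real.exp u) f x) with hα
  set β : ℝ × 𝔼 → ℝ≥0∞ := fun p => ENNReal.ofReal (Real.exp p.1) * Nq q (PP (r * Real.exp p.1) (D2 f p.2)) with hβ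
  have hαm : Measurable α := alpha_meas hb r
  have hβm : Measurable β := beta_meas hf hc r
  have step1 : (∫⁻ p : ℝ × 𝔼, (ENNReal.ofReal (Real.exp (-p.1)) * Nq q (GG f r p.1 p.2)) ^ q ∂(volume.prod (AV N))) ^ (1/q)
      ≤ (∫⁻ p : ℝ × 𝔼, (α p.1) ^ q ∂(volume.prod (AV N))) ^ (1/q) + (∫⁻ p : ℝ × 𝔼, (β p) ^ q ∂(volume.prod (AV N))) ^ (1/q) := by
    refine le_trans ?_ (ENNReal.lintegral_Lp_add_le (f := fun p : ℝ × 𝔼 => α p.1) (g := β)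
      (hαm.comp measurable_fst).aemeasurable hβm.aemeasurable (by linarith))
    gcongr with p
    exact G_bound hq hf hc (r * Real.exp p.1) p.1 p.2
  have hA : (∫⁻ p : ℝ × 𝔼, (α p.1) ^ q ∂(volume.prod (AV N))) ^ (1/q) ≤
      ENNReal.ofReal (50 * m * Real.sqrt (γ * n)) *
                ((∫⁻ σ : sphere (0 : 𝔼) 1,
                    eLpNorm (dirDeriv (σ : 𝔼) f)
                      (ENNReal.ofReal q) volume
                    ∂((volume : Measure 𝔼).toSphere))
                  / (volume : Measure 𝔼).toSphere Set.univ) := by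
    have h1 : ∫⁻ p : ℝ × 𝔼, (α p.1) ^ q ∂(volume.prod (AV N)) ≤ ∫⁻ u, α u ^ q := by
      have h0 : Measurable fun p : ℝ × 𝔼 => α p.1 ^ q := (hαm.comp measurable_fst).pow_const q
      rw [lintegral_prod _ h0.aemeasurable]
      refine lintegral_mono fun u => ?_
      simp only [lintegral_const]
      exact mul_le_of_le_one_right' (AV_univ N)
    have h2 := alpha_int hq hm hb (II_fin hq hb hc) hr
    have h3 := II_le hn hq hb
    simp_rw [dirDeriv_eq, Nq_eq hq]
    set A := (∫⁻ σ : sphere (0:𝔼) 1, Nq q (fun y => fderiv ℝ f y σ) ∂(volume : Measure 𝔼).toSphere) / (volume : Measure 𝔼).toSphere univ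
    calc _ ≤ (∫⁻ u, α u ^ q) ^ (1/q) := by gcongr
      _ ≤ ENNReal.ofReal r * (25 * ENNReal.ofReal m * II q f) := h2
      _ ≤ ENNReal.ofReal r * (25 * ENNReal.ofReal m * (ENNReal.ofReal (2*√n) * A)) := by gcongr
      _ = _ := by
        rw [show (25 : ℝ≥0∞) = ENNReal.ofReal 25 by simp, ← ENNReal.ofReal_mul (by norm_num), ← mul_assoc, ← mul_assoc, ← ENNReal.ofReal_mul hr.le,
          ← ENNReal.ofReal_mul (by positivity), Real.sqrt_mul hγ.le]
        congr 2; ring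
  have hB : (∫⁻ p : ℝ × 𝔼, (β p) ^ q ∂(volume.prod (AV N))) ^ (1/q) ≤
      ENNReal.ofReal (50 * m / r) *
              (((∫⁻ x in {x : 𝔼 | N x ≤ 1},
                  ENNReal.ofReal (‖x‖ ^ q) *
                    eLpNorm (dirDeriv x f) (ENNReal.ofReal q) volume ^ q)
                / volume {x : 𝔼 | N x ≤ 1}) ^ (1 / q)) := by
    have h1 : ∫⁻ p : ℝ × 𝔼, (β p) ^ q ∂(volume.prod (AV N)) ≤
        ∫⁻ z, (ENNReal.ofReal (50 * m / r) * (ENNReal.ofReal ‖z‖ * Nq q (fun y => fderiv ℝ f y z))) ^ q ∂(AV N) := by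
      rw [lintegral_prod_symm _ (hβm.pow_const q).aemeasurable]
      refine lintegral_mono fun z => ?_
      have hg : BC1 (fun y => fderiv ℝ f y z) := .of_compact (dir_smooth hf z) (dir_compact hc z)
      have h2 := beta_int hq hm hg (Nq_fin hq hg.bc.cont (dir_compact hc z)) z hr
      rw [← ENNReal.rpow_le_rpow_iff (z := 1/q) (by positivity), ← ENNReal.rpow_mul, mul_one_div_cancel hq0.ne', ENNReal.rpow_one]
      refine le_trans h2 ?_
      rw [← mul_assoc]
      refine mul_le_mul_left ?_ _
      rw [← mul_assoc]
      rw [show (5 : ℝ≥0∞) = ENNReal.ofReal 5 by simp, ← ENNReal.ofReal_mul (by positivity), ← ENNReal.ofReal_mul (by positivity)]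
      apply ENNReal.ofReal_le_ofReal
      have : 0 ≤ m / r := by positivity
      calc r⁻¹ * 5 * m = 5 * (m / r) := by ring
        _ ≤ 50 * (m / r) := by linarith
        _ = _ := by ring
    refine (ENNReal.rpow_le_rpow h1 (by positivity)).trans ?_
    rw [lp_const _ hq ENNReal.ofReal_ne_top, AV_lint]
    simp_rw [dirDeriv_eq, Nq_eq hq, ENNReal.mul_rpow_of_nonneg _ _ hq0.le, ENNReal.ofReal_rpow_of_nonneg (norm_nonneg _) hq0.le]
    exact le_rfl
  rw [add_comm]
  exact step1.trans (add_le_add hA hB)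

end

/-- **Theorem (Sobolev-type Dorronsoro estimate via the heat semigroup).** -/
theorem statement9 :
    ∃ C : ℝ, 0 < C ∧
      ∀ (q : ℝ), 2 ≤ q → ∀ (n : ℕ), 0 < n →
      ∀ (N : EuclideanSpace ℝ (Fin n) → ℝ), IsNorm N →
      ∀ (Y : Type u) [NormedAddCommGroup Y] [NormedSpace ℝ Y] [CompleteSpace Y],
      ∀ m : ℝ, 0 ≤ m → MartCotypeBound q Y m →
      ∀ γ : ℝ, 0 < γ →
      ∀ f : EuclideanSpace ℝ (Fin n) → Y, ContDiff ℝ (⊤ : ℕ∞) f → HasCompactSupport f →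
        (∫⁻ x, ∫⁻ t in Set.Ioi (0 : ℝ),
            ((∫⁻ y in {y : EuclideanSpace ℝ (Fin n) | N (y - x) ≤ t},
                (‖f y - taylor1 (heat (γ * t ^ 2) f) x y‖₊ : ℝ≥0∞) ^ q)
              / volume {y : EuclideanSpace ℝ (Fin n) | N (y - x) ≤ t})
              / ENNReal.ofReal (t ^ (q + 1))) ^ (1 / q)
          ≤ ENNReal.ofReal (C * m / Real.sqrt γ) *
              (((∫⁻ x in {x : EuclideanSpace ℝ (Fin n) | N x ≤ 1},
                  ENNReal.ofReal (‖x‖ ^ q) *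
                    eLpNorm (dirDeriv x f) (ENNReal.ofReal q) volume ^ q)
                / volume {x : EuclideanSpace ℝ (Fin n) | N x ≤ 1}) ^ (1 / q))
            + ENNReal.ofReal (C * m * Real.sqrt (γ * n)) *
                ((∫⁻ σ : sphere (0 : EuclideanSpace ℝ (Fin n)) 1,
                    eLpNorm (dirDeriv (σ : EuclideanSpace ℝ (Fin n)) f)
                      (ENNReal.ofReal q) volume
                    ∂((volume : Measure (EuclideanSpace ℝ (Fin n))).toSphere))
                  / (volume : Measure (EuclideanSpace ℝ (Fin n))).toSphere Set.univ) := by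
  refine ⟨50, by norm_num, ?_⟩
  intro q hq n hn N hN Y _ _ _ m hm0 hm γ hγ f hf hc
  exact main_ineq hq hn hN hm0 hm hγ hf hc
end
end

section
/- There exists a universal constant C ∈ (0,∞) with the following property. Fix n ∈ ℕ, an n-dimensional normed space (X,‖·‖_X), a Banach space (Y,‖·‖_Y), and L ∈ [1,∞). Let |·| be a Hilbertian norm on X, identifying X with ℝ^n. Suppose f:ℝ^n→Y satisfies ‖f‖_{Lip(B_X,Y)} ≤ 1 and ‖f‖_{Lip(X,Y)} ≤ L. Then for every x ∈ B_X and every t with 0 < t ≤ (1−‖x‖_X)² / (C·(M(X)√n + b(X)√(log L))²), the affine map Taylor¹_x(H_t f) satisfies ‖Taylor¹_x(H_t f)‖_{Lip(X,Y)} ≤ 2. -/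
open MeasureTheory Metric Set ENNReal

noncomputable section

universe u

/-- The average of `N` over the Euclidean unit sphere (the quantity `M(X)`). -/
def MX {n : ℕ} (N : EuclideanSpace ℝ (Fin n) → ℝ) : ℝ :=
  ⨍ σ : sphere (0 : EuclideanSpace ℝ (Fin n)) 1, N σ
    ∂((volume : Measure (EuclideanSpace ℝ (Fin n))).toSphere)

/-- The quantity `b(X) = sup_{σ ∈ S^{n-1}} ‖σ‖_X`. -/
def bX {n : ℕ} (N : EuclideanSpace ℝ (Fin n) → ℝ) : ℝ :=
  sSup (N '' sphere (0 : EuclideanSpace ℝ (Fin n)) 1)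

namespace HeatAux

section norm
variable {n : ℕ} {N : EuclideanSpace ℝ (Fin n) → ℝ}

local notation "𝔼" => EuclideanSpace ℝ (Fin n)

lemma N_zero (hN : IsNorm N) : N 0 = 0 := by
  have := hN.2.1 0 0
  simpa using this

lemma N_neg (hN : IsNorm N) (x : 𝔼) : N (-x) = N x := by
  have := hN.2.1 (-1) x
  simpa using this

lemma N_nonneg (hN : IsNorm N) (x : 𝔼) : 0 ≤ N x := by
  have := hN.2.2 x (-x)
  rw [N_neg hN, add_neg_cancel, N_zero hN] at this
  linarith

lemma N_sum (hN : IsNorm N) {ι : Type*} (s : Finset ι) (g : ι → 𝔼) :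
    N (∑ i ∈ s, g i) ≤ ∑ i ∈ s, N (g i) := by
  classical
  induction s using Finset.induction_on with
  | empty => simp [N_zero hN]
  | insert a s ha ih =>
    rw [Finset.sum_insert ha, Finset.sum_insert ha]
    exact (hN.2.2 _ _).trans (by linarith)

lemma N_bound0 (hN : IsNorm N) :
    ∀ x : 𝔼, N x ≤ (∑ i, N (EuclideanSpace.single i 1)) * ‖x‖ := by
  intro x
  have hx : x = ∑ i, x i • (EuclideanSpace.single i (1:ℝ) : 𝔼) := by
    ext j
    simp [Finset.sum_apply, Pi.single_apply]
  conv_lhs => rw [hx]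
  refine (N_sum hN _ _).trans ?_
  rw [Finset.sum_mul]
  refine Finset.sum_le_sum fun i _ => ?_
  rw [hN.2.1, mul_comm]
  exact mul_le_mul_of_nonneg_left (by simpa using PiLp.norm_apply_le x i) (N_nonneg hN _)

lemma N_bdd (hN : IsNorm N) : BddAbove (N '' sphere (0 : 𝔼) 1) := by
  refine ⟨(∑ i, N (EuclideanSpace.single i 1)), ?_⟩
  rintro _ ⟨x, hx, rfl⟩
  have := N_bound0 hN x
  simp at hx
  simpa [hx] using this

lemma N_le_b (hN : IsNorm N) (x : 𝔼) : N x ≤ bX N * ‖x‖ := by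
  by_cases hx : x = 0
  · simp [hx, N_zero hN]
  have hx' : 0 < ‖x‖ := norm_pos_iff.2 hx
  have h1 : N (‖x‖⁻¹ • x) ≤ bX N :=
    le_csSup (N_bdd hN) ⟨_, by simp [norm_smul, hx'.ne'], rfl⟩
  rw [hN.2.1, abs_of_pos (inv_pos.2 hx'), inv_mul_le_iff₀ hx'] at h1
  linarith

lemma b_pos (hn : 0 < n) (hN : IsNorm N) : 0 < bX N := by
  let e : 𝔼 := EuclideanSpace.single ⟨0, hn⟩ 1
  have he : e ≠ 0 := by simp [e]
  have h1 : 0 < N e := lt_of_le_of_ne (N_nonneg hN _) fun h => he (hN.1 _ h.symm)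
  have h2 := N_le_b hN e
  have : ‖e‖ = 1 := by simp [e]
  rw [this] at h2
  linarith

lemma N_sub_abs (hN : IsNorm N) (x y : 𝔼) : |N x - N y| ≤ N (x - y) := by
  rw [abs_le]
  have h1 := hN.2.2 (x - y) y
  have h2 := hN.2.2 (y - x) x
  have h3 := N_neg hN (x - y)
  simp at h1 h2 h3
  rw [h3] at h2
  constructor <;> linarith

lemma N_cont (hn : 0 < n) (hN : IsNorm N) : Continuous N := by
  have : LipschitzWith (bX N).toNNReal N := by
    refine LipschitzWith.of_dist_le_mul fun x y => ?_
    rw [Real.dist_eq, dist_eq_norm, Real.coe_toNNReal _ (b_pos hn hN).le]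
    exact (N_sub_abs hN x y).trans (N_le_b hN _)
  exact this.continuous

lemma subgrad (hn : 0 < n) (hN : IsNorm N) (x : 𝔼) :
    ∃ g : 𝔼, inner ℝ g x = N x ∧ (∀ y, inner ℝ g y ≤ N y) ∧ ‖g‖ ≤ bX N := by
  have key : ∃ g : 𝔼, inner ℝ g x = N x ∧ (∀ y, inner ℝ g y ≤ N y) := by
    by_cases hx : x = 0
    · exact ⟨0, by simp [hx, N_zero hN], fun y => by simpa using N_nonneg hN y⟩
    obtain ⟨g, hg1, hg2⟩ := exists_extension_of_le_sublinear
      (LinearPMap.mkSpanSingleton (K := ℝ) x (N x) hx) N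
      (fun c hc y => by rw [hN.2.1, abs_of_pos hc]) hN.2.2 (by
        rintro ⟨y, hy⟩
        obtain ⟨c, rfl⟩ := Submodule.mem_span_singleton.1 hy
        unfold LinearPMap.mkSpanSingleton
        rw [LinearPMap.mkSpanSingleton'_apply]
        simp only [smul_eq_mul, hN.2.1]
        exact mul_le_mul_of_nonneg_right (le_abs_self c) (N_nonneg hN _))
    refine ⟨(InnerProductSpace.toDual ℝ 𝔼).symm (LinearMap.toContinuousLinearMap g), ?_, ?_⟩
    · rw [InnerProductSpace.toDual_symm_apply]
      have := hg1 ⟨x, Submodule.mem_span_singleton_self x⟩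
      simp only [LinearMap.coe_toContinuousLinearMap']
      rw [this, LinearPMap.mkSpanSingleton_apply]
    · intro y
      rw [InnerProductSpace.toDual_symm_apply]
      exact hg2 y
  obtain ⟨g, h1, h2⟩ := key
  refine ⟨g, h1, h2, ?_⟩
  have h3 := (h2 g).trans (N_le_b hN g)
  rw [real_inner_self_eq_norm_sq] at h3
  by_contra h
  push Not at h
  nlinarith [norm_nonneg g, b_pos hn hN]

end norm

section gauss
open ProbabilityTheory
variable {n : ℕ}

local notation "𝔼" => EuclideanSpace ℝ (Fin n)

/-- heat measure -/
def gam (n : ℕ) (t : ℝ) : Measure (EuclideanSpace ℝ (Fin n)) :=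
  volume.withDensity (fun z => ENNReal.ofReal (heatKernel n t z))

lemma heatKernel_nonneg {t : ℝ} (ht : 0 < t) (z : 𝔼) : 0 ≤ heatKernel n t z := by
  unfold heatKernel; positivity

lemma heatKernel_cont (t : ℝ) : Continuous (heatKernel n t) := by
  unfold heatKernel; fun_prop

lemma gam_integral {F : Type*} [NormedAddCommGroup F] [NormedSpace ℝ F] {t : ℝ} (ht : 0 < t)
    (g : 𝔼 → F) : ∫ z, g z ∂(gam n t) = ∫ z, heatKernel n t z • g z := by
  unfold gam
  rw [integral_withDensity_eq_integral_toReal_smul]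
  · simp_rw [ENNReal.toReal_ofReal (heatKernel_nonneg ht _)]
  · exact (heatKernel_cont t).measurable.ennreal_ofReal
  · simp

lemma gam_integrable {F : Type*} [NormedAddCommGroup F] [NormedSpace ℝ F] {t : ℝ} (ht : 0 < t)
    (g : 𝔼 → F) : Integrable g (gam n t) ↔ Integrable (fun z => heatKernel n t z • g z) := by
  unfold gam
  rw [integrable_withDensity_iff_integrable_smul']
  · simp_rw [ENNReal.toReal_ofReal (heatKernel_nonneg ht _)]
  · exact (heatKernel_cont t).measurable.ennreal_ofReal
  · simp

lemma const_eq {t : ℝ} (ht : 0 < t) :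
   (4 * Real.pi * t) ^ (-(n : ℝ) / 2) * (Real.pi / (1 / (4 * t))) ^ ((n : ℝ) / 2) = 1 := by
  have : Real.pi / (1 / (4 * t)) = 4 * Real.pi * t := by field_simp
  have h : 0 < 4 * Real.pi * t := by positivity
  rw [this, ← Real.rpow_add h]
  simp [neg_div]

lemma gam_cmgf {t : ℝ} (ht : 0 < t) (c : ℂ) (w : 𝔼) :
    ∫ z, Complex.exp (c * inner ℝ w z) ∂(gam n t) = Complex.exp (t * c ^ 2 * ‖w‖ ^ 2) := by
  rw [gam_integral ht]
  have hb : 0 < ((1 / (4 * t) : ℝ) : ℂ).re := by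
    rw [Complex.ofReal_re]; positivity
  have key := GaussianFourier.integral_cexp_neg_mul_sq_norm_add (V := 𝔼) hb c w
  have e1 : ∀ z : 𝔼, heatKernel n t z • Complex.exp (c * inner ℝ w z) =
     (((4 * Real.pi * t) ^ (-(n : ℝ) / 2) : ℝ) : ℂ) *
       Complex.exp (-((1 / (4 * t) : ℝ) : ℂ) * ‖z‖ ^ 2 + c * inner ℝ w z) := by
    intro z
    unfold heatKernel
    rw [Complex.real_smul, Complex.exp_add]
    push_cast
    rw [mul_assoc]
    congr 3
    field_simp
  simp_rw [e1]
  rw [integral_const_mul, key, ← mul_assoc]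
  have e2 : ((Real.pi : ℂ) / ((1 / (4 * t) : ℝ) : ℂ)) ^ ((Module.finrank ℝ 𝔼 : ℂ) / 2) =
      (((Real.pi / (1 / (4 * t))) ^ ((n : ℝ) / 2) : ℝ) : ℂ) := by
    rw [Complex.ofReal_cpow (by positivity)]
    simp
  rw [e2, ← Complex.ofReal_mul, const_eq ht]
  simp only [Complex.ofReal_one, one_mul]
  congr 1
  have : (t : ℂ) ≠ 0 := by exact_mod_cast ht.ne'
  push_cast
  field_simp

lemma gam_sq {t a : ℝ} (ht : 0 < t) (ha : 4 * t * a < 1) :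
    ∫ z, Real.exp (a * ‖z‖ ^ 2) ∂(gam n t) = (1 / (1 - 4 * t * a)) ^ ((n : ℝ) / 2) := by
  rw [gam_integral ht]
  have hb : 0 < 1 / (4 * t) - a := by
    rw [sub_pos, lt_div_iff₀ (by positivity)]; linarith
  have key := GaussianFourier.integral_rexp_neg_mul_sq_norm (V := 𝔼) hb
  have e1 : ∀ z : 𝔼, heatKernel n t z • Real.exp (a * ‖z‖ ^ 2) =
     ((4 * Real.pi * t) ^ (-(n : ℝ) / 2) : ℝ) *
       Real.exp (-(1 / (4 * t) - a) * ‖z‖ ^ 2) := by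
    intro z
    unfold heatKernel
    rw [smul_eq_mul, mul_assoc, ← Real.exp_add]
    congr 2
    field_simp
    ring
  simp_rw [e1]
  have h : 0 < 4 * Real.pi * t := by positivity
  rw [integral_const_mul, key, neg_div, Real.rpow_neg h.le, ← Real.inv_rpow h.le]
  simp only [finrank_euclideanSpace, Fintype.card_fin]
  rw [← Real.mul_rpow (by positivity) (by positivity)]
  congr 1
  have : 1 - 4 * t * a ≠ 0 := by linarith
  have : 1 / (4 * t) - a ≠ 0 := hb.ne'
  field_simp

lemma gam_sq_integrable {t a : ℝ} (ht : 0 < t) (ha : 4 * t * a < 1) :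
    Integrable (fun z : 𝔼 => Real.exp (a * ‖z‖ ^ 2)) (gam n t) := by
  by_contra h
  have h1 := gam_sq (n := n) ht ha
  rw [integral_undef h] at h1
  have : 0 < 1 - 4 * t * a := by linarith
  have : 0 < (1 / (1 - 4 * t * a)) ^ ((n : ℝ) / 2) := by positivity
  linarith

lemma gam_prob {t : ℝ} (ht : 0 < t) : IsProbabilityMeasure (gam n t) := by
  have h1 := gam_sq (n := n) (t := t) (a := 0) ht (by simp)
  have h2 := gam_sq_integrable (n := n) (t := t) (a := 0) ht (by simp)
  simp only [zero_mul, Real.exp_zero] at h1 h2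
  have : IsFiniteMeasure (gam n t) := by
    simpa [integrable_const_iff] using h2
  constructor
  simp at h1
  rw [measureReal_def] at h1
  rw [← ENNReal.ofReal_toReal (measure_ne_top (gam n t) univ), h1]
  simp

lemma gam_integrable_exp {t : ℝ} (ht : 0 < t) (k : ℝ) :
    Integrable (fun z : 𝔼 => Real.exp (k * ‖z‖)) (gam n t) := by
  have h := (gam_sq_integrable (n := n) (t := t) (a := 1 / (8 * t)) ht
    (by field_simp; norm_num)).const_mul (Real.exp (2 * t * k ^ 2))
  refine h.mono' (by fun_prop) (Filter.Eventually.of_forall fun z => ?_)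
  rw [Real.norm_eq_abs, Real.abs_exp, ← Real.exp_add, Real.exp_le_exp]
  have : 0 ≤ 2 * t * (k - ‖z‖ / (4 * t)) ^ 2 := by positivity
  have e : 2 * t * (k - ‖z‖ / (4 * t)) ^ 2 = 2 * t * k ^ 2 + 1 / (8 * t) * ‖z‖ ^ 2 - k * ‖z‖ := by
    field_simp; ring
  linarith

lemma gam_mgf {t : ℝ} (ht : 0 < t) (w : 𝔼) :
    ∫ z, Real.exp (inner ℝ w z) ∂(gam n t) = Real.exp (t * ‖w‖ ^ 2) := by
  have := gam_cmgf (n := n) ht 1 w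
  rw [← Complex.ofReal_inj, ← integral_complex_ofReal]
  push_cast
  simpa using this

lemma gam_mgf_integrable {t : ℝ} (ht : 0 < t) (w : 𝔼) :
    Integrable (fun z : 𝔼 => Real.exp (inner ℝ w z)) (gam n t) := by
  by_contra h
  have h1 := gam_mgf (n := n) ht w
  rw [integral_undef h] at h1
  exact (Real.exp_pos _).ne h1

lemma gam_eq {t : ℝ} (ht : 0 < t) :
    gam n t = (stdGaussian 𝔼).map (fun x => Real.sqrt (2 * t) • x) := by
  have := gam_prob (n := n) ht
  have : IsProbabilityMeasure ((stdGaussian 𝔼).map (fun x => Real.sqrt (2 * t) • x)) :=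
    Measure.isProbabilityMeasure_map (by fun_prop)
  apply Measure.ext_of_charFun
  ext s
  rw [charFun_map_smul, charFun_stdGaussian, charFun_apply]
  have := gam_cmgf (n := n) ht Complex.I s
  simp_rw [real_inner_comm s, mul_comm _ Complex.I]
  rw [this]
  congr 1
  rw [norm_smul, Real.norm_eq_abs, abs_of_nonneg (Real.sqrt_nonneg _)]
  rw [Complex.I_sq]
  have h : ((Real.sqrt (2 * t) : ℝ) : ℂ) ^ 2 = 2 * t := by
    rw [← Complex.ofReal_pow, Real.sq_sqrt (by positivity)]
    simp
  push_cast
  rw [mul_pow, h]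
  ring

lemma gam_rot {t : ℝ} (ht : 0 < t) (θ : ℝ) :
    ((gam n t).prod (gam n t)).map (ContinuousLinearMap.rotation θ) =
      (gam n t).prod (gam n t) := by
  have e : gam n t = (stdGaussian 𝔼).map (Real.sqrt (2 * t) • ContinuousLinearMap.id ℝ 𝔼) := by
    rw [gam_eq ht]; rfl
  have : IsGaussian (gam n t) := by rw [e]; infer_instance
  apply IsGaussian.map_rotation_eq_self_of_forall_strongDual_eq_zero
  intro L
  rw [e, integral_map (by fun_prop) (by fun_prop)]
  simp [integral_const_mul]

end gauss

section conc
open ProbabilityTheory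
variable {n : ℕ} {N : EuclideanSpace ℝ (Fin n) → ℝ}

local notation "𝔼" => EuclideanSpace ℝ (Fin n)

lemma norm_integrable {t : ℝ} (ht : 0 < t) :
    Integrable (fun z : 𝔼 => ‖z‖) (gam n t) := by
  refine (gam_integrable_exp (n := n) ht 1).mono' (by fun_prop)
    (Filter.Eventually.of_forall fun z => ?_)
  rw [norm_norm, one_mul]
  linarith [Real.add_one_le_exp ‖z‖]

lemma norm_mean (hn : 0 < n) {t : ℝ} (ht : 0 < t) :
    ∫ z : 𝔼, ‖z‖ ∂(gam n t) ≤ 4 * Real.sqrt t * Real.sqrt n := by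
  have hn1 : (1 : ℝ) ≤ n := by exact_mod_cast hn
  have hn' : (0 : ℝ) < n := by positivity
  set a : ℝ := 1 / (8 * t * n) with ha
  have ha0 : 0 < a := by positivity
  have h4 : 4 * t * a = 1 / (2 * n) := by rw [ha]; field_simp; norm_num
  have h5 : 1 / (2 * (n : ℝ)) ≤ 1 / 2 := by
    apply one_div_le_one_div_of_le <;> linarith
  have h6 : 4 * t * a < 1 := by rw [h4]; linarith
  have hI := gam_sq_integrable (n := n) ht h6
  have hV := gam_sq (n := n) ht h6
  have hB : (1 / (1 - 4 * t * a)) ^ ((n : ℝ) / 2) ≤ Real.sqrt 2 := by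
    have hq : 0 < 1 - 4 * t * a := by linarith
    have hbern : (1 / 2 : ℝ) ≤ (1 - 4 * t * a) ^ n := by
      have := one_add_mul_le_pow (a := -(4 * t * a)) (by linarith) n
      have e : 1 + (n : ℝ) * -(4 * t * a) = 1 / 2 := by
        rw [h4]; field_simp; norm_num
      rw [e] at this
      simpa [sub_eq_add_neg] using this
    rw [show (n : ℝ) / 2 = n * (1 / 2) by ring, Real.rpow_mul (by positivity), Real.rpow_natCast,
      ← Real.sqrt_eq_rpow]
    apply Real.sqrt_le_sqrt
    rw [div_pow, one_pow, div_le_iff₀ (by positivity)]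
    linarith
  have hpt : ∀ z : 𝔼, ‖z‖ ≤ Real.sqrt (8 * t * n) * Real.exp (a * ‖z‖ ^ 2) := by
    intro z
    have hs : 0 < Real.sqrt (8 * t * n) := Real.sqrt_pos.2 (by positivity)
    have hs2 : Real.sqrt (8 * t * n) ^ 2 = 8 * t * n := Real.sq_sqrt (by positivity)
    have e : a * ‖z‖ ^ 2 = (‖z‖ / Real.sqrt (8 * t * n)) ^ 2 := by
      rw [div_pow, hs2, ha]; ring
    set y := ‖z‖ / Real.sqrt (8 * t * n) with hy
    have hz : ‖z‖ = Real.sqrt (8 * t * n) * y := by rw [hy]; field_simp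
    rw [e]
    rw [hz]
    apply mul_le_mul_of_nonneg_left _ hs.le
    nlinarith [Real.add_one_le_exp (y ^ 2), sq_nonneg (y - 1)]
  have h8 : Real.sqrt (8 * t * n) * Real.sqrt 2 = 4 * Real.sqrt t * Real.sqrt n := by
    rw [← Real.sqrt_mul (by positivity), show 8 * t * n * 2 = 4 ^ 2 * t * n by ring,
      Real.sqrt_mul (by positivity), Real.sqrt_mul (by positivity), Real.sqrt_sq (by norm_num)]
  calc ∫ z : 𝔼, ‖z‖ ∂(gam n t)
      ≤ ∫ z : 𝔼, Real.sqrt (8 * t * n) * Real.exp (a * ‖z‖ ^ 2) ∂(gam n t) :=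
        integral_mono (norm_integrable ht) (hI.const_mul _) hpt
    _ = Real.sqrt (8 * t * n) * (1 / (1 - 4 * t * a)) ^ ((n : ℝ) / 2) := by
        rw [integral_const_mul, hV]
    _ ≤ Real.sqrt (8 * t * n) * Real.sqrt 2 := by gcongr
    _ = _ := h8

lemma polar (g : sphere (0 : 𝔼) 1 → ℝ) (k : ℝ → ℝ) (F : 𝔼 → ℝ)
    (hF : ∀ (σ : sphere (0 : 𝔼) 1) (r : ℝ), 0 < r → F (r • (σ : 𝔼)) = g σ * k r)
    (hn : 0 < n) :
    ∫ z, F z = (∫ σ, g σ ∂((volume : Measure 𝔼).toSphere)) *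
      ∫ r : Ioi (0 : ℝ), k r ∂(Measure.volumeIoiPow (n - 1)) := by
  have : Nonempty (Fin n) := ⟨⟨0, hn⟩⟩
  have h1 : ∫ z, F z = ∫ x : ({(0)}ᶜ : Set 𝔼), F x.1 ∂(volume.comap Subtype.val) := by
    rw [integral_subtype_comap (measurableSet_singleton _).compl fun x ↦ F x,
        restrict_compl_singleton]
  have hmp := (volume : Measure 𝔼).measurePreserving_homeomorphUnitSphereProd
  have h2 := hmp.integral_comp (Homeomorph.measurableEmbedding _)
    (fun p : sphere (0 : 𝔼) 1 × Ioi (0 : ℝ) => g p.1 * k p.2)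
  rw [integral_prod_mul g (fun r : Ioi (0 : ℝ) => k r)] at h2
  simp only [finrank_euclideanSpace, Fintype.card_fin] at h2
  rw [h1]
  rw [← h2]
  congr 1
  ext x
  have := hF (homeomorphUnitSphereProd 𝔼 x).1 (homeomorphUnitSphereProd 𝔼 x).2
    (homeomorphUnitSphereProd 𝔼 x).2.2
  rw [← this]
  congr 1
  have h3 := (homeomorphUnitSphereProd 𝔼).symm_apply_apply x
  conv_lhs => rw [← h3]
  rw [homeomorphUnitSphereProd_symm_apply_coe]

lemma N_mean (hn : 0 < n) (hN : IsNorm N) {t : ℝ} (ht : 0 < t) :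
    ∫ z, N z ∂(gam n t) = MX N * ∫ z : 𝔼, ‖z‖ ∂(gam n t) := by
  have : Nonempty (Fin n) := ⟨⟨0, hn⟩⟩
  rw [gam_integral ht, gam_integral ht]
  set k : ℝ → ℝ := fun r => (4 * Real.pi * t) ^ (-(n : ℝ) / 2) * Real.exp (-r ^ 2 / (4 * t)) * r
    with hk
  rw [polar (fun σ => N σ) k _ _ hn, polar (fun _ => 1) k _ _ hn]
  · unfold MX
    rw [average_eq, smul_eq_mul]
    have hne : ((volume : Measure 𝔼).toSphere).real univ ≠ 0 := by
      rw [measureReal_ne_zero_iff]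
      rw [Ne, Measure.measure_univ_eq_zero]
      exact Measure.toSphere_ne_zero _
    simp only [integral_const, smul_eq_mul, mul_one]
    field_simp
  · intro σ r hr
    have hσ : ‖(σ : 𝔼)‖ = 1 := by simp
    simp [heatKernel, hk, norm_smul, hσ, abs_of_pos hr]
  · intro σ r hr
    have hσ : ‖(σ : 𝔼)‖ = 1 := by simp
    simp only [heatKernel, hk, norm_smul, hσ, hN.2.1, abs_of_pos hr, Real.norm_eq_abs,
      smul_eq_mul, mul_one]
    ring

lemma M_nonneg (hN : IsNorm N) : 0 ≤ MX N := by
  unfold MX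
  rw [average_eq, smul_eq_mul]
  exact mul_nonneg (by positivity) (integral_nonneg fun σ => N_nonneg hN _)

lemma expN_integrable (hn : 0 < n) (hN : IsNorm N) {t : ℝ} (ht : 0 < t) {k : ℝ} (hk : 0 ≤ k) :
    Integrable (fun z : 𝔼 => Real.exp (k * N z)) (gam n t) := by
  have hc := N_cont hn hN
  refine (gam_integrable_exp (n := n) ht (k * bX N)).mono' (by fun_prop)
    (Filter.Eventually.of_forall fun z => ?_)
  rw [Real.norm_eq_abs, Real.abs_exp, Real.exp_le_exp, mul_assoc]
  exact mul_le_mul_of_nonneg_left (N_le_b hN z) hk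

lemma N_integrable (hn : 0 < n) (hN : IsNorm N) {t : ℝ} (ht : 0 < t) :
    Integrable N (gam n t) := by
  have hc := N_cont hn hN
  refine (expN_integrable (n := n) hn hN ht (k := 1) zero_le_one).mono' (by fun_prop)
    (Filter.Eventually.of_forall fun z => ?_)
  rw [Real.norm_eq_abs, abs_of_nonneg (N_nonneg hN z), one_mul]
  linarith [Real.add_one_le_exp (N z)]

lemma step_bound (hn : 0 < n) (hN : IsNorm N) {t : ℝ} (ht : 0 < t) {l k : ℝ} (hl : 0 ≤ l)
    (hk : 0 ≤ k) (hk2 : k ^ 2 = 1 / 2) (hk1 : k ≤ 1) :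
    Integrable (fun p : 𝔼 × 𝔼 => Real.exp (2 * l * (N p.1 - N (k • p.1 + k • p.2))))
      ((gam n t).prod (gam n t)) ∧
    ∫ p, Real.exp (2 * l * (N p.1 - N (k • p.1 + k • p.2))) ∂((gam n t).prod (gam n t)) ≤
      Real.exp (2 * t * l ^ 2 * bX N ^ 2) * ∫ z, Real.exp (2 * (1 - k) * l * N z) ∂(gam n t) := by
  have := gam_prob (n := n) ht
  have hc := N_cont hn hN
  have hint : Integrable (fun p : 𝔼 × 𝔼 => Real.exp (2 * l * (N p.1 - N (k • p.1 + k • p.2))))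
      ((gam n t).prod (gam n t)) := by
    have h1 := (expN_integrable hn hN ht (k := 2 * l) (by positivity)).comp_fst (gam n t)
    refine h1.mono' (by fun_prop) (Filter.Eventually.of_forall fun p => ?_)
    rw [Real.norm_eq_abs, Real.abs_exp, Real.exp_le_exp]
    have := N_nonneg hN (k • p.1 + k • p.2)
    apply mul_le_mul_of_nonneg_left _ (by positivity)
    linarith
  refine ⟨hint, ?_⟩
  rw [integral_prod _ hint, ← integral_const_mul]
  refine integral_mono hint.integral_prod_left
    ((expN_integrable hn hN ht (by have : 0 ≤ 1 - k := by linarith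
                                   positivity)).const_mul _) fun x => ?_
  obtain ⟨g, hg1, hg2, hg3⟩ := subgrad hn hN x
  have hpt : ∀ y : 𝔼, Real.exp (2 * l * (N x - N (k • x + k • y))) ≤
      Real.exp (2 * (1 - k) * l * N x) * Real.exp (inner ℝ (-(2 * l * k) • g) y) := by
    intro y
    rw [← Real.exp_add, Real.exp_le_exp]
    have h := hg2 (k • x + k • y)
    rw [inner_add_right, inner_smul_right, inner_smul_right, hg1] at h
    rw [real_inner_smul_left]
    have := mul_le_mul_of_nonneg_left h (show 0 ≤ 2 * l by positivity)
    linarith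
  have hI2 := (gam_mgf_integrable (n := n) ht (-(2 * l * k) • g)).const_mul
    (Real.exp (2 * (1 - k) * l * N x))
  have hI1 : Integrable (fun y : 𝔼 => Real.exp (2 * l * (N x - N (k • x + k • y)))) (gam n t) := by
    refine hI2.mono' (by fun_prop) (Filter.Eventually.of_forall fun y => ?_)
    rw [Real.norm_eq_abs, Real.abs_exp]
    exact hpt y
  refine (integral_mono hI1 hI2 hpt).trans ?_
  rw [integral_const_mul, gam_mgf ht, mul_comm]
  apply mul_le_mul_of_nonneg_right _ (Real.exp_pos _).le
  rw [Real.exp_le_exp, norm_smul, mul_pow, Real.norm_eq_abs, sq_abs]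
  have : ‖g‖ ^ 2 ≤ bX N ^ 2 := by gcongr
  have e : t * ((-(2 * l * k)) ^ 2 * ‖g‖ ^ 2) = 2 * t * l ^ 2 * ‖g‖ ^ 2 := by
    rw [neg_sq, mul_pow, hk2]; ring
  rw [e]
  gcongr

lemma mgf_bound (hn : 0 < n) (hN : IsNorm N) {t : ℝ} (ht : 0 < t) {l : ℝ} (hl : 0 ≤ l) :
    ∫ z, Real.exp (l * N z) ∂(gam n t) ≤
      Real.exp (5 / 2 * (l * ∫ z, N z ∂(gam n t)) + 5 * t * l ^ 2 * bX N ^ 2) := by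
  have := gam_prob (n := n) ht
  have hc := N_cont hn hN
  set a := ∫ z, N z ∂(gam n t) with ha
  set A := ∫ z, Real.exp (l * N z) ∂(gam n t) with hA
  have hAint := expN_integrable hn hN ht hl
  have hA1 : 1 ≤ A := by
    have : ∫ z : 𝔼, (1 : ℝ) ∂(gam n t) ≤ A := by
      refine integral_mono (integrable_const _) hAint fun z => ?_
      exact Real.one_le_exp (mul_nonneg hl (N_nonneg hN z))
    simpa using this
  set τ := Real.log A with hτ
  have hτ0 : 0 ≤ τ := Real.log_nonneg hA1
  have hAτ : A = Real.exp τ := (Real.exp_log (by linarith)).symm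
  set k := (Real.sqrt 2)⁻¹ with hk
  have hs2 : Real.sqrt 2 ^ 2 = 2 := Real.sq_sqrt (by norm_num)
  have hk0 : 0 ≤ k := by positivity
  have hk2 : k ^ 2 = 1 / 2 := by rw [hk, inv_pow, hs2]; norm_num
  have hkl : 7 / 10 ≤ k := by nlinarith
  have hk1 : k ≤ 1 := by nlinarith
  obtain ⟨hF1, hF2⟩ := step_bound hn hN ht hl hk0 hk2 hk1
  set F : 𝔼 × 𝔼 → ℝ := fun p => Real.exp (2 * l * (N p.1 - N (k • p.1 + k • p.2))) with hF
  have hFc : Continuous F := by fun_prop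
  set R := ContinuousLinearMap.rotation (E := 𝔼) (Real.pi / 4) with hR
  have hcos : Real.cos (Real.pi / 4) = k := by
    rw [Real.cos_pi_div_four, hk]; field_simp; exact hs2
  have hsin : Real.sin (Real.pi / 4) = k := by
    rw [Real.sin_pi_div_four, hk]; field_simp; exact hs2
  have hFR : ∀ p : 𝔼 × 𝔼, F (R p) = Real.exp (2 * l * (N (k • p.1 + k • p.2) - N p.2)) := by
    intro p
    simp only [hF, hR, ContinuousLinearMap.rotation_apply, hcos, hsin]
    have : k • (k • p.1 + k • p.2) + k • (-k • p.1 + k • p.2) = p.2 := by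
      have : k • (k • p.1 + k • p.2) + k • (-k • p.1 + k • p.2) = (2 * k ^ 2) • p.2 := by module
      rw [this, hk2]; norm_num
    rw [this]
  have hRot := gam_rot (n := n) ht (Real.pi / 4)
  have hIR : ∫ p, F (R p) ∂((gam n t).prod (gam n t)) = ∫ p, F p ∂((gam n t).prod (gam n t)) := by
    conv_rhs => rw [← hRot]
    rw [integral_map (by fun_prop) hFc.aestronglyMeasurable]
  have hFRint : Integrable (fun p => F (R p)) ((gam n t).prod (gam n t)) := by
    have h := hF1
    rw [← hRot] at h
    exact (integrable_map_measure hFc.aestronglyMeasurable (by fun_prop)).1 h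
  -- the decoupled integral
  have hBint : Integrable (fun z : 𝔼 => Real.exp (-(l * N z))) (gam n t) := by
    refine (integrable_const (1 : ℝ)).mono' (by fun_prop) (Filter.Eventually.of_forall fun z => ?_)
    rw [Real.norm_eq_abs, Real.abs_exp, Real.exp_le_one_iff]
    have := mul_nonneg hl (N_nonneg hN z)
    linarith
  have hprod : A * ∫ z, Real.exp (-(l * N z)) ∂(gam n t) ≤ ∫ p, F p ∂((gam n t).prod (gam n t)) := by
    rw [hA, ← integral_prod_mul (fun z : 𝔼 => Real.exp (l * N z))
      (fun z : 𝔼 => Real.exp (-(l * N z)))]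
    have h1 : ∫ p, F p ∂((gam n t).prod (gam n t)) =
        ∫ p, (1 / 2 * F p + 1 / 2 * F (R p)) ∂((gam n t).prod (gam n t)) := by
      rw [integral_add (hF1.const_mul _) (hFRint.const_mul _), integral_const_mul,
        integral_const_mul, hIR]
      ring
    rw [h1]
    refine integral_mono (hAint.mul_prod hBint)
      ((hF1.const_mul _).add (hFRint.const_mul _)) fun p => ?_
    simp only [hFR]
    simp only [hF]
    set x := l * (N p.1 - N (k • p.1 + k • p.2)) with hx
    set y := l * (N (k • p.1 + k • p.2) - N p.2) with hy
    rw [← Real.exp_add, show l * N p.1 + -(l * N p.2) = x + y by rw [hx, hy]; ring, Real.exp_add,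
      show 2 * l * (N p.1 - N (k • p.1 + k • p.2)) = x + x by rw [hx]; ring,
      show 2 * l * (N (k • p.1 + k • p.2) - N p.2) = y + y by rw [hy]; ring,
      Real.exp_add x x, Real.exp_add y y]
    nlinarith [sq_nonneg (Real.exp x - Real.exp y)]
  have hB : Real.exp (-(l * a)) ≤ ∫ z, Real.exp (-(l * N z)) ∂(gam n t) := by
    have hNi := N_integrable hn hN ht
    have h1 : ∫ z, Real.exp (-(l * a)) * (1 + l * a - l * N z) ∂(gam n t) = Real.exp (-(l * a)) := by
      rw [integral_const_mul, integral_sub (integrable_const _) (hNi.const_mul _),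
        integral_const_mul, ← ha]
      simp
    rw [← h1]
    refine integral_mono (((integrable_const _).sub (hNi.const_mul _)).const_mul _) hBint
      fun z => ?_
    have h2 := Real.add_one_le_exp (l * a - l * N z)
    have h3 : Real.exp (-(l * N z)) = Real.exp (-(l * a)) * Real.exp (l * a - l * N z) := by
      rw [← Real.exp_add]; congr 1; ring
    simp only
    rw [h3]
    apply mul_le_mul_of_nonneg_left _ (Real.exp_pos _).le
    linarith
  set θ := 2 * (1 - k) with hθ
  have hθ0 : 0 ≤ θ := by rw [hθ]; linarith
  have hθ1 : θ ≤ 3 / 5 := by rw [hθ]; linarith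
  have hY : ∫ z, Real.exp (θ * l * N z) ∂(gam n t) ≤ Real.exp (θ * τ) := by
    have hpt : ∀ z : 𝔼, Real.exp (θ * l * N z) ≤
        Real.exp (-((1 - θ) * τ)) * (θ * Real.exp (l * N z) + (1 - θ) * Real.exp τ) := by
      intro z
      have h := convexOn_exp.2 (mem_univ (l * N z)) (mem_univ τ) hθ0
        (show 0 ≤ 1 - θ by linarith) (by ring)
      simp only [smul_eq_mul] at h
      have h' := mul_le_mul_of_nonneg_left h (Real.exp_pos (-((1 - θ) * τ))).le
      rw [← Real.exp_add] at h'
      rwa [show -((1 - θ) * τ) + (θ * (l * N z) + (1 - θ) * τ) = θ * l * N z by ring] at h'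
    refine (integral_mono (expN_integrable hn hN ht (by positivity))
      ((((hAint.const_mul θ)).add (integrable_const _)).const_mul _) hpt).trans ?_
    simp only [Pi.add_apply]
    rw [integral_const_mul, integral_add (hAint.const_mul θ) (integrable_const _),
      integral_const_mul, ← hA, hAτ]
    simp only [integral_const, probReal_univ, one_smul]
    rw [show θ * Real.exp τ + (1 - θ) * Real.exp τ = Real.exp τ by ring, ← Real.exp_add,
      Real.exp_le_exp]
    linarith
  have hfin : Real.exp (τ + -(l * a)) ≤ Real.exp (2 * t * l ^ 2 * bX N ^ 2 + θ * τ) := by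
    rw [Real.exp_add, Real.exp_add, ← hAτ]
    calc A * Real.exp (-(l * a)) ≤ A * ∫ z, Real.exp (-(l * N z)) ∂(gam n t) := by gcongr
      _ ≤ _ := hprod
      _ ≤ _ := hF2
      _ ≤ _ := by gcongr
  rw [Real.exp_le_exp] at hfin
  rw [hAτ, Real.exp_le_exp]
  have : θ * τ ≤ 3 / 5 * τ := by gcongr
  linarith

lemma tail (hn : 0 < n) (hN : IsNorm N) {t : ℝ} (ht : 0 < t) {L r : ℝ} (hL : 1 ≤ L)
    (hr : Real.sqrt t * (10 * (MX N * Real.sqrt n + bX N * Real.sqrt (Real.log L))) ≤ r) :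
    L * (gam n t).real {z | r ≤ N z} ≤ 1 := by
  have := gam_prob (n := n) ht
  have hlog := Real.log_nonneg hL
  have hb := b_pos hn hN
  rcases eq_or_lt_of_le hlog with h0 | hlpos
  · have : L = 1 := by
      have := Real.exp_log (show 0 < L by linarith)
      rw [← h0, Real.exp_zero] at this
      exact this.symm
    rw [this, one_mul]
    exact measureReal_le_one
  set s := Real.sqrt t with hs
  set q := Real.sqrt (Real.log L) with hq
  have hs0 : 0 < s := Real.sqrt_pos.2 ht
  have hq0 : 0 < q := Real.sqrt_pos.2 hlpos
  have hs2 : t = s ^ 2 := (Real.sq_sqrt ht.le).symm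
  have hq2 : Real.log L = q ^ 2 := (Real.sq_sqrt hlpos.le).symm
  set l := q / (s * bX N) with hl
  have hl0 : 0 < l := by positivity
  have hmgf := mgf_bound hn hN ht hl0.le
  have hmean : ∫ z, N z ∂(gam n t) ≤ MX N * (4 * s * Real.sqrt n) := by
    rw [N_mean hn hN ht]
    exact mul_le_mul_of_nonneg_left (norm_mean hn ht) (M_nonneg hN)
  have hmk := mul_meas_ge_le_integral_of_nonneg (μ := gam n t)
    (f := fun z : 𝔼 => Real.exp (l * N z)) (Filter.Eventually.of_forall fun z => (Real.exp_pos _).le)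
    (expN_integrable hn hN ht hl0.le) (Real.exp (l * r))
  have hset : {z : 𝔼 | Real.exp (l * r) ≤ Real.exp (l * N z)} = {z | r ≤ N z} := by
    ext z
    simp only [mem_ofPred_eq, Real.exp_le_exp]
    exact mul_le_mul_iff_right₀ hl0
  rw [hset] at hmk
  have hLe : L = Real.exp (q ^ 2) := by rw [← hq2, Real.exp_log (by linarith)]
  have hexp : q ^ 2 + (5 / 2 * (l * ∫ z, N z ∂(gam n t)) + 5 * t * l ^ 2 * bX N ^ 2) ≤ l * r := by
    have e1 : 5 * t * l ^ 2 * bX N ^ 2 = 5 * q ^ 2 := by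
      rw [hs2, hl]; field_simp
    have e2 : l * (s * (10 * (bX N * q))) = 10 * q ^ 2 := by
      rw [hl]; field_simp
    have e3 := mul_le_mul_of_nonneg_left hr hl0.le
    have e4 := mul_le_mul_of_nonneg_left hmean hl0.le
    nlinarith [sq_nonneg q]
  have : L * (gam n t).real {z | r ≤ N z} * Real.exp (l * r) ≤ 1 * Real.exp (l * r) := by
    calc L * (gam n t).real {z | r ≤ N z} * Real.exp (l * r)
        = L * (Real.exp (l * r) * (gam n t).real {z | r ≤ N z}) := by ring
      _ ≤ L * Real.exp (5 / 2 * (l * ∫ z, N z ∂(gam n t)) + 5 * t * l ^ 2 * bX N ^ 2) := by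
          gcongr; exact hmk.trans hmgf
      _ = Real.exp (q ^ 2 + (5 / 2 * (l * ∫ z, N z ∂(gam n t)) + 5 * t * l ^ 2 * bX N ^ 2)) := by
          rw [Real.exp_add (q ^ 2), ← hLe]
      _ ≤ Real.exp (l * r) := Real.exp_le_exp.2 hexp
      _ = _ := by ring
  exact le_of_mul_le_mul_right this (Real.exp_pos _)

end conc

section main
variable {n : ℕ} {N : EuclideanSpace ℝ (Fin n) → ℝ}
  {Y : Type*} [NormedAddCommGroup Y] [NormedSpace ℝ Y]

local notation "𝔼" => EuclideanSpace ℝ (Fin n)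

lemma f_cont (hn : 0 < n) (hN : IsNorm N) {L : ℝ} (hL : 1 ≤ L) {f : 𝔼 → Y}
    (hf : ∀ x y, ‖f x - f y‖ ≤ L * N (x - y)) : Continuous f := by
  have : LipschitzWith (L * bX N).toNNReal f := by
    refine LipschitzWith.of_dist_le_mul fun x y => ?_
    have hb := b_pos hn hN
    rw [dist_eq_norm, dist_eq_norm, Real.coe_toNNReal _ (by positivity), mul_assoc]
    exact (hf x y).trans (mul_le_mul_of_nonneg_left (N_le_b hN _) (by linarith))
  exact this.continuous

lemma f_int (hn : 0 < n) (hN : IsNorm N) {L t : ℝ} (hL : 1 ≤ L) (ht : 0 < t) {f : 𝔼 → Y}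
    (hf : ∀ x y, ‖f x - f y‖ ≤ L * N (x - y)) (x : 𝔼) :
    Integrable (fun z => f (x - z)) (gam n t) := by
  have := gam_prob (n := n) ht
  have hc := f_cont hn hN hL hf
  refine ((integrable_const ‖f x‖).add ((N_integrable hn hN ht).const_mul L)).mono'
    (Continuous.aestronglyMeasurable (by fun_prop)) (Filter.Eventually.of_forall fun z => ?_)
  have h1 := hf (x - z) x
  rw [show x - z - x = -z by abel, N_neg hN] at h1
  have h2 := norm_add_le (f (x - z) - f x) (f x)
  rw [sub_add_cancel] at h2
  simp only [Pi.add_apply]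
  linarith

lemma heat_diff (hn : 0 < n) (hN : IsNorm N) {L t r : ℝ} (hL : 1 ≤ L) (ht : 0 < t) {f : 𝔼 → Y}
    (hf1 : ∀ x, N x ≤ 1 → ∀ y, N y ≤ 1 → ‖f x - f y‖ ≤ N (x - y))
    (hf : ∀ x y, ‖f x - f y‖ ≤ L * N (x - y)) (x w : 𝔼)
    (hx : N x + 2 * r ≤ 1) (hw : N w ≤ r)
    (htail : L * (gam n t).real {z | r ≤ N z} ≤ 1) :
    ‖heat t f (x + w) - heat t f x‖ ≤ 2 * N w := by
  have := gam_prob (n := n) ht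
  have hNc := N_cont hn hN
  have hw0 := N_nonneg hN w
  have e : ∀ y, heat t f y = ∫ z, f (y - z) ∂(gam n t) := fun y => by
    rw [gam_integral ht]; rfl
  rw [e, e, ← integral_sub (f_int hn hN hL ht hf _) (f_int hn hN hL ht hf _)]
  have hms : MeasurableSet {z : 𝔼 | r ≤ N z} := (isClosed_le continuous_const hNc).measurableSet
  have hI : Integrable (({z : 𝔼 | r ≤ N z}).indicator fun _ => L * N w) (gam n t) :=
    (integrable_const _).indicator hms
  have hI2 : Integrable (fun z => N w + ({z : 𝔼 | r ≤ N z}).indicator (fun _ => L * N w) z)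
    (gam n t) := (integrable_const _).add hI
  refine (norm_integral_le_of_norm_le hI2 (Filter.Eventually.of_forall fun z => ?_)).trans ?_
  · by_cases hz : r ≤ N z
    · rw [indicator_of_mem (by exact hz)]
      have := hf (x + w - z) (x - z)
      rw [show x + w - z - (x - z) = w by abel] at this
      linarith
    · rw [indicator_of_notMem (by exact hz)]
      push Not at hz
      have h1 : N (x - z) ≤ N x + N z := by
        have := hN.2.2 x (-z)
        rwa [N_neg hN, ← sub_eq_add_neg] at this
      have h2 : N (x + w - z) ≤ N (x - z) + N w := by
        have := hN.2.2 (x - z) w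
        rwa [show x - z + w = x + w - z by abel] at this
      have := hf1 (x + w - z) (by linarith) (x - z) (by linarith)
      rw [show x + w - z - (x - z) = w by abel] at this
      linarith
  · rw [integral_add (integrable_const _) hI, integral_indicator_const _ hms]
    simp only [integral_const, probReal_univ, one_smul, smul_eq_mul]
    nlinarith

lemma fderiv_bound (hN : IsNorm N) {g : 𝔼 → Y} {x : 𝔼} {r : ℝ} (hr : 0 < r)
    (hg : ∀ w, N w ≤ r → ‖g (x + w) - g x‖ ≤ 2 * N w) (w : 𝔼) :
    ‖fderiv ℝ g x w‖ ≤ 2 * N w := by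
  have hw0 := N_nonneg hN w
  by_cases hd : DifferentiableAt ℝ g x
  swap
  · rw [fderiv_zero_of_not_differentiableAt hd]
    simpa using hw0
  have h1 : HasDerivAt (fun s : ℝ => g (x + s • w)) (fderiv ℝ g x w) 0 := by
    have h2 : HasDerivAt (fun s : ℝ => x + s • w) w 0 := by
      simpa using ((hasDerivAt_id (0 : ℝ)).smul_const w).const_add x
    have h3 : HasFDerivAt g (fderiv ℝ g x) (x + (0 : ℝ) • w) := by
      simpa using hd.hasFDerivAt
    exact h3.comp_hasDerivAt 0 h2
  have h4 := h1.hasFDerivAt.le_of_lip' (C := 2 * N w) (by positivity) (by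
    have hev : ∀ᶠ s : ℝ in nhds 0, |s| * N w < r := by
      have hc : Continuous fun s : ℝ => |s| * N w := by fun_prop
      have := hc.tendsto 0
      simp only [abs_zero, zero_mul] at this
      exact this.eventually_lt_const hr
    filter_upwards [hev] with s hs
    have := hg (s • w) (by rw [hN.2.1]; exact hs.le)
    rw [hN.2.1] at this
    simp only [zero_smul, add_zero, sub_zero, Real.norm_eq_abs]
    linarith)
  simpa using h4

end main

end HeatAux

/-- **Lemma (Lipschitz constant of the Taylor polynomial of heat evolutes).** -/
theorem statement15 :
    ∃ C : ℝ, 0 < C ∧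
      ∀ (n : ℕ), 0 < n →
      ∀ (N : EuclideanSpace ℝ (Fin n) → ℝ), IsNorm N →
      ∀ (Y : Type u) [NormedAddCommGroup Y] [NormedSpace ℝ Y] [CompleteSpace Y],
      ∀ L : ℝ, 1 ≤ L →
      ∀ f : EuclideanSpace ℝ (Fin n) → Y,
        (∀ x, N x ≤ 1 → ∀ y, N y ≤ 1 → ‖f x - f y‖ ≤ N (x - y)) →
        (∀ x y, ‖f x - f y‖ ≤ L * N (x - y)) →
        ∀ x : EuclideanSpace ℝ (Fin n), N x ≤ 1 →
        ∀ t : ℝ, 0 < t →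
          t ≤ (1 - N x) ^ 2 /
              (C * (MX N * Real.sqrt n + bX N * Real.sqrt (Real.log L)) ^ 2) →
          ∀ u v : EuclideanSpace ℝ (Fin n),
            ‖taylor1 (heat t f) x u - taylor1 (heat t f) x v‖ ≤ 2 * N (u - v) := by
  refine ⟨400, by norm_num, ?_⟩
  intro n hn N hN Y _ _ _ L hL f hf1 hf x hx t ht htb u v
  set D := MX N * Real.sqrt n + bX N * Real.sqrt (Real.log L) with hD
  have hD0 : 0 ≤ D := by
    have := HeatAux.M_nonneg hN
    have := HeatAux.b_pos hn hN
    positivity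
  have hDpos : 0 < D := by
    rcases hD0.eq_or_lt with h | h
    · rw [← h] at htb
      norm_num at htb
      linarith
    · exact h
  have hkey : Real.sqrt t * (20 * D) ≤ 1 - N x := by
    rw [le_div_iff₀ (by positivity)] at htb
    apply le_of_sq_le_sq _ (by linarith)
    rw [mul_pow, Real.sq_sqrt ht.le]
    linarith
  have hs : 0 < Real.sqrt t := Real.sqrt_pos.2 ht
  have hpos : 0 < Real.sqrt t * (20 * D) := by positivity
  have htail := HeatAux.tail hn hN ht (r := (1 - N x) / 2) hL (by linarith)
  have hb := HeatAux.fderiv_bound (g := heat t f) (x := x) hN (r := (1 - N x) / 2) (by linarith)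
    (fun w hw => HeatAux.heat_diff hn hN hL ht hf1 hf x w (by linarith) hw htail) (u - v)
  have e : taylor1 (heat t f) x u - taylor1 (heat t f) x v = fderiv ℝ (heat t f) x (u - v) := by
    have hz : ∀ z : EuclideanSpace ℝ (Fin n),
        ∑ j, z j • fderiv ℝ (heat t f) x (EuclideanSpace.single j 1) =
          fderiv ℝ (heat t f) x z := by
      intro z
      have hx : z = ∑ i, z i • (EuclideanSpace.single i (1:ℝ) : EuclideanSpace ℝ (Fin n)) := by
        ext j
        simp [Finset.sum_apply, Pi.single_apply]
      conv_rhs => rw [hx]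
      rw [map_sum]
      simp only [map_smul]
    unfold taylor1
    rw [hz, hz, add_sub_add_left_eq_sub, ← map_sub]
    congr 1
    abel
  rw [e]
  exact hb
end
end

section
/- Fix p,q ∈ (0,∞) and n ∈ ℕ. Let (X,‖·‖_X) be an n-dimensional normed space and let |·| be a Hilbertian norm on X, identifying X with ℝ^n. Then I_q(X)·M_p(X) ≥ (n/(n+q))^{1/q}. -/
open MeasureTheory Metric Set ENNReal

noncomputable section

/-- The quantity `M_p(X) = (⨍_{S^{n-1}} ‖σ‖_X^p dσ)^{1/p}` (normalized surface measure). -/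
def MpX {n : ℕ} (p : ℝ) (N : EuclideanSpace ℝ (Fin n) → ℝ) : ℝ :=
  (⨍ σ : sphere (0 : EuclideanSpace ℝ (Fin n)) 1, N σ ^ p
    ∂((volume : Measure (EuclideanSpace ℝ (Fin n))).toSphere)) ^ (1 / p)

/-- The quantity `I_q(X) = (⨍_{B_X} |x|^q dx)^{1/q}`. -/
def IqX {n : ℕ} (q : ℝ) (N : EuclideanSpace ℝ (Fin n) → ℝ) : ℝ :=
  (⨍ x in {x : EuclideanSpace ℝ (Fin n) | N x ≤ 1}, ‖x‖ ^ q) ^ (1 / q)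


lemma aux_pt (p q n t : ℝ) (hp : 0 < p) (hq : 0 < q) (hn : 0 < n) (ht : 0 < t) :
    (q / p) * (1 - t ^ p) ≤ t ^ (-(n + q)) - t ^ (-n) := by
  have h1 : 1 + p * Real.log t ≤ t ^ p := by
    rw [Real.rpow_def_of_pos ht]
    linarith [Real.add_one_le_exp (Real.log t * p)]
  have h2 : 1 - q * Real.log t ≤ t ^ (-q) := by
    rw [Real.rpow_def_of_pos ht]
    linarith [Real.add_one_le_exp (Real.log t * (-q))]
  have h3 : t ^ (-(n + q)) = t ^ (-n) * t ^ (-q) := by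
    rw [← Real.rpow_add ht]; congr 1; ring
  have h4 : (q / p) * (1 - t ^ p) ≤ - (q * Real.log t) := by
    have : (q / p) * (1 - t ^ p) ≤ (q / p) * (- (p * Real.log t)) := by
      gcongr; linarith
    have e : (q / p) * (- (p * Real.log t)) = - (q * Real.log t) := by field_simp
    linarith
  rw [h3]
  have h5 : t ^ (-q) - 1 ≤ t ^ (-n) * t ^ (-q) - t ^ (-n) := by
    have : 0 ≤ (t ^ (-n) - 1) * (t ^ (-q) - 1) := by
      rcases le_total t 1 with h | h
      · have a1 := Real.one_le_rpow_of_pos_of_le_one_of_nonpos ht h (by linarith : -n ≤ 0)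
        have a2 := Real.one_le_rpow_of_pos_of_le_one_of_nonpos ht h (by linarith : -q ≤ 0)
        exact mul_nonneg (by linarith) (by linarith)
      · have a1 := Real.rpow_le_one_of_one_le_of_nonpos h (by linarith : -n ≤ 0)
        have a2 := Real.rpow_le_one_of_one_le_of_nonpos h (by linarith : -q ≤ 0)
        exact mul_nonneg_of_nonpos_of_nonpos (by linarith) (by linarith)
    linarith
  linarith

lemma aux_polar {E : Type*} [NormedAddCommGroup E] [NormedSpace ℝ E] [FiniteDimensional ℝ E]
    [Nontrivial E] [MeasurableSpace E] [BorelSpace E] (μ : Measure E) [μ.IsAddHaarMeasure]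
    {n : ℕ} (hd : Module.finrank ℝ E = n) (g : E → ℝ) (hg : Integrable g μ) :
    ∫ x, g x ∂μ = ∫ σ : sphere (0 : E) 1,
      (∫ r in Ioi (0 : ℝ), r ^ (n - 1) * g (r • (σ : E))) ∂μ.toSphere := by
  have hmp := μ.measurePreserving_homeomorphUnitSphereProd
  have hemb := (homeomorphUnitSphereProd E).measurableEmbedding
  let G : (sphere (0 : E) 1) × (Ioi (0 : ℝ)) → ℝ := fun z => g (z.2.1 • z.1.1)
  have hcomp : ∀ x : ({0}ᶜ : Set E), G (homeomorphUnitSphereProd E x) = g x := by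
    intro x
    have hx : ‖(x : E)‖ ≠ 0 := norm_ne_zero_iff.2 x.2
    have : ((homeomorphUnitSphereProd E).symm (homeomorphUnitSphereProd E x) : E) = x := by
      rw [Homeomorph.symm_apply_apply]
    have h2 : ∀ z, ((homeomorphUnitSphereProd E).symm z : E) = z.2.1 • z.1.1 := by
      intro z; simp [homeomorphUnitSphereProd]
    rw [h2] at this
    simp only [G, this]
  have hint : Integrable G (μ.toSphere.prod (.volumeIoiPow (Module.finrank ℝ E - 1))) := by
    rw [← hmp.integrable_comp_emb hemb]
    have e : G ∘ (homeomorphUnitSphereProd E) = g ∘ Subtype.val := by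
      funext x; exact hcomp x
    rw [e, ← integrableOn_iff_comap_subtypeVal (measurableSet_singleton _).compl]
    exact hg.integrableOn
  calc
    ∫ x, g x ∂μ = ∫ x : ({(0)}ᶜ : Set E), g x ∂(μ.comap (↑)) := by
      rw [integral_subtype_comap (measurableSet_singleton _).compl g,
        restrict_compl_singleton]
    _ = ∫ z, G z ∂(μ.toSphere.prod (.volumeIoiPow (Module.finrank ℝ E - 1))) := by
      rw [← hmp.integral_comp hemb]
      simp only [hcomp]
    _ = _ := by
      rw [integral_prod _ hint]
      congr 1; funext σ
      simp only [Measure.volumeIoiPow, ENNReal.ofReal]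
      rw [integral_withDensity_eq_integral_smul,
        integral_subtype_comap measurableSet_Ioi
          fun a : ℝ ↦ Real.toNNReal (a ^ (Module.finrank ℝ E - 1)) • g (a • (σ : E)),
        setIntegral_congr_fun measurableSet_Ioi fun x hx ↦ ?_]
      · simp only [hd]
        rw [NNReal.smul_def, Real.coe_toNNReal _ (pow_nonneg hx.out.le _), smul_eq_mul]
      · exact (measurable_subtype_coe.pow_const _).real_toNNReal

lemma aux_nonneg {V : Type*} [AddCommGroup V] [Module ℝ V] {N : V → ℝ} (hN : IsNorm N) (x : V) :
    0 ≤ N x := by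
  have h := hN.2.2 x ((-1 : ℝ) • x)
  rw [hN.2.1] at h
  have h0 : N 0 = 0 := by simpa using hN.2.1 0 0
  simp [h0] at h
  linarith

lemma aux_cont {n : ℕ} {N : EuclideanSpace ℝ (Fin n) → ℝ} (hN : IsNorm N) : Continuous N := by
  have hc : ConvexOn ℝ univ N := by
    refine ⟨convex_univ, ?_⟩
    intro x _ y _ a b ha hb _
    have := hN.2.2 (a • x) (b • y)
    rw [hN.2.1, hN.2.1, abs_of_nonneg ha, abs_of_nonneg hb] at this
    simpa using this
  exact continuousOn_univ.1 (hc.continuousOn isOpen_univ)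

lemma aux_inner (n : ℕ) (hn : 0 < n) (s c : ℝ) (hs : 0 ≤ s) (hc : 0 < c) :
    ∫ r in Ioi (0 : ℝ), r ^ (n - 1) * (if r * c ≤ 1 then r ^ s else 0)
      = c ^ (-((n : ℝ) + s)) / (n + s) := by
  have hn' : (0 : ℝ) < n := by exact_mod_cast hn
  have h1 : ∫ r in Ioi (0 : ℝ), r ^ (n - 1) * (if r * c ≤ 1 then r ^ s else 0)
      = ∫ r in Ioi (0 : ℝ), (Iic (c⁻¹)).indicator (fun r : ℝ => r ^ ((n : ℝ) + s - 1)) r := by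
    refine setIntegral_congr_fun measurableSet_Ioi fun r hr => ?_
    have hr' : 0 < r := hr
    have : r * c ≤ 1 ↔ r ≤ c⁻¹ := by rw [← one_div, le_div_iff₀ hc]
    simp only [this, indicator, mem_Iic]
    split_ifs
    · rw [← Real.rpow_natCast, ← Real.rpow_add hr', Nat.cast_sub hn]
      congr 1; push_cast; ring
    · simp
  rw [h1, setIntegral_indicator measurableSet_Iic, Ioi_inter_Iic,
    ← intervalIntegral.integral_of_le (by positivity), integral_rpow (Or.inl (by linarith))]
  have e : (n : ℝ) + s - 1 + 1 = n + s := by ring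
  rw [e, Real.zero_rpow (by positivity), sub_zero, Real.inv_rpow hc.le, Real.rpow_neg hc.le]

lemma aux_bound {n : ℕ} (hn : 0 < n) {N : EuclideanSpace ℝ (Fin n) → ℝ} (hN : IsNorm N) :
    ∃ R : ℝ, {x | N x ≤ 1} ⊆ closedBall 0 R := by
  have : Nonempty (Fin n) := ⟨⟨0, hn⟩⟩
  obtain ⟨z, hz, hmin⟩ := (isCompact_sphere (0 : EuclideanSpace ℝ (Fin n)) 1).exists_isMinOn
    (NormedSpace.sphere_nonempty.2 zero_le_one) (aux_cont hN).continuousOn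
  have hz0 : z ≠ 0 := by
    rintro rfl; simp at hz
  have hpos : 0 < N z := lt_of_le_of_ne (aux_nonneg hN z) fun h => hz0 (hN.1 z h.symm)
  refine ⟨(N z)⁻¹, fun x hx => ?_⟩
  rw [mem_closedBall_zero_iff]
  by_cases h0 : x = 0
  · subst h0; simp; exact hpos.le
  have hx0 : 0 < ‖x‖ := norm_pos_iff.2 h0
  have hm : (‖x‖⁻¹ • x) ∈ sphere (0 : EuclideanSpace ℝ (Fin n)) 1 := by
    simp [norm_smul, hx0.ne']
  have h1 := hmin hm
  simp only [mem_ofPred_eq] at h1 hx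
  rw [hN.2.1, abs_of_pos (by positivity)] at h1
  rw [← one_div, le_div_iff₀ hpos]
  calc ‖x‖ * N z ≤ ‖x‖ * (‖x‖⁻¹ * N x) := by gcongr
    _ = N x := by field_simp
    _ ≤ 1 := hx

lemma aux_ball {n : ℕ} (hn : 0 < n) {N : EuclideanSpace ℝ (Fin n) → ℝ} (hN : IsNorm N)
    (s : ℝ) (hs : 0 ≤ s) :
    ∫ x in {x | N x ≤ 1}, ‖x‖ ^ s
      = (∫ σ : sphere (0 : EuclideanSpace ℝ (Fin n)) 1, N σ ^ (-((n : ℝ) + s))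
      ∂((volume : Measure (EuclideanSpace ℝ (Fin n))).toSphere)) / (n + s) := by
  have hcl : IsClosed {x | N x ≤ 1} := isClosed_le (aux_cont hN) continuous_const
  have : Nonempty (Fin n) := ⟨⟨0, hn⟩⟩
  have hms := hcl.measurableSet
  obtain ⟨R, hR⟩ := aux_bound hn hN
  have hcomp : IsCompact {x | N x ≤ 1} := (isCompact_closedBall 0 R).of_isClosed_subset hcl hR
  have hio : IntegrableOn (fun x : EuclideanSpace ℝ (Fin n) => ‖x‖ ^ s) {x | N x ≤ 1} := by
    apply ContinuousOn.integrableOn_compact hcomp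
    exact (continuous_norm.rpow_const fun _ => Or.inr hs).continuousOn
  rw [← integral_indicator hms, aux_polar volume (n := n) (by simp) _ (hio.integrable_indicator hms),
    ← integral_div]
  congr 1; funext σ
  have hσ : ‖(σ : EuclideanSpace ℝ (Fin n))‖ = 1 := by simpa using σ.2
  have hσ0 : (σ : EuclideanSpace ℝ (Fin n)) ≠ 0 := by
    intro h; rw [h] at hσ; simp at hσ
  have hpos : 0 < N σ := lt_of_le_of_ne (aux_nonneg hN _) fun h => hσ0 (hN.1 _ h.symm)
  rw [← aux_inner n hn s (N σ) hs hpos]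
  refine setIntegral_congr_fun measurableSet_Ioi fun r hr => ?_
  have hr' : 0 < r := hr
  simp only [indicator, mem_ofPred_eq, hN.2.1, abs_of_pos hr', norm_smul, hσ, Real.norm_eq_abs,
    mul_one]

/-- **Corollary (lower bound on `I_q(X)·M_p(X)`).** -/
theorem statement17 (p q : ℝ) (hp : 0 < p) (hq : 0 < q) (n : ℕ) (hn : 0 < n)
    (N : EuclideanSpace ℝ (Fin n) → ℝ) (hN : IsNorm N) :
    ((n : ℝ) / ((n : ℝ) + q)) ^ (1 / q) ≤ IqX q N * MpX p N := by
  have : Nonempty (Fin n) := ⟨⟨0, hn⟩⟩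
  have hn' : (0 : ℝ) < n := by exact_mod_cast hn
  have hb := aux_ball hn hN q hq.le
  have ha := aux_ball hn hN 0 le_rfl
  simp only [Real.rpow_zero, add_zero, setIntegral_const, smul_eq_mul, mul_one] at ha
  unfold IqX MpX
  rw [setAverage_eq, average_eq, hb, ha]
  set T := (volume : Measure (EuclideanSpace ℝ (Fin n))).toSphere with hT
  have hTne : T ≠ 0 := Measure.toSphere_ne_zero _
  have : NeZero T := ⟨hTne⟩
  have hw : 0 < T.real univ := by
    rw [measureReal_def]
    exact ENNReal.toReal_pos (by simpa using hTne) (measure_ne_top _ _)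
  have hcont : Continuous fun σ : sphere (0 : EuclideanSpace ℝ (Fin n)) 1 => N σ :=
    (aux_cont hN).comp continuous_subtype_val
  have hpos : ∀ σ : sphere (0 : EuclideanSpace ℝ (Fin n)) 1, 0 < N σ := by
    intro σ
    have hσ : ‖(σ : EuclideanSpace ℝ (Fin n))‖ = 1 := by simpa using σ.2
    have hσ0 : (σ : EuclideanSpace ℝ (Fin n)) ≠ 0 := by
      intro h; rw [h] at hσ; simp at hσ
    exact lt_of_le_of_ne (aux_nonneg hN _) fun h => hσ0 (hN.1 _ h.symm)
  have hI : ∀ s : ℝ, Integrable (fun σ : sphere (0 : EuclideanSpace ℝ (Fin n)) 1 => N σ ^ s) T := by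
    intro s
    have : Continuous (fun σ : sphere (0 : EuclideanSpace ℝ (Fin n)) 1 => N σ ^ s) :=
      hcont.rpow_const fun σ => Or.inl (hpos σ).ne'
    exact this.integrable_of_hasCompactSupport (HasCompactSupport.of_compactSpace _)
  have hIpos : ∀ s : ℝ, 0 < ∫ σ : sphere (0 : EuclideanSpace ℝ (Fin n)) 1, N σ ^ s ∂T := by
    intro s
    rw [integral_pos_iff_support_of_nonneg (fun σ => (Real.rpow_pos_of_pos (hpos σ) s).le) (hI s)]
    have : Function.support (fun σ : sphere (0 : EuclideanSpace ℝ (Fin n)) 1 => N σ ^ s) = univ := by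
      ext σ; simp [(Real.rpow_pos_of_pos (hpos σ) s).ne']
    rw [this]
    simpa [pos_iff_ne_zero] using hTne
  have hA := hIpos (-(n : ℝ))
  have hB := hIpos (-((n : ℝ) + q))
  have hC := hIpos p
  have key : ∀ m : ℝ, 0 < m → (q / p) * (T.real univ - m ^ (-p) * ∫ σ, N σ ^ p ∂T) ≤
      m ^ ((n : ℝ) + q) * (∫ σ, N σ ^ (-((n : ℝ) + q)) ∂T)
        - m ^ (n : ℝ) * (∫ σ, N σ ^ (-(n : ℝ)) ∂T) := by
    intro m hm
    have hle : ∫ σ : sphere (0 : EuclideanSpace ℝ (Fin n)) 1,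
        (q / p) * (1 - m ^ (-p) * N σ ^ p) ∂T ≤
        ∫ σ : sphere (0 : EuclideanSpace ℝ (Fin n)) 1,
        (m ^ ((n : ℝ) + q) * N σ ^ (-((n : ℝ) + q)) - m ^ (n : ℝ) * N σ ^ (-(n : ℝ))) ∂T := by
      refine integral_mono (((integrable_const _).sub ((hI _).const_mul _)).const_mul _)
        (((hI _).const_mul _).sub ((hI _).const_mul _)) fun σ => ?_
      have h := aux_pt p q n (m⁻¹ * N σ) hp hq hn' (mul_pos (inv_pos.2 hm) (hpos σ))
      have hmi := (inv_pos.2 hm).le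
      simp only [Real.mul_rpow hmi (hpos σ).le, Real.inv_rpow hm.le, ← Real.rpow_neg hm.le,
        neg_neg] at h
      exact h
    rw [integral_const_mul, integral_sub (integrable_const _) ((hI _).const_mul _),
      integral_sub ((hI _).const_mul _) ((hI _).const_mul _), integral_const_mul,
      integral_const_mul, integral_const_mul, integral_const] at hle
    simpa using hle
  set A := ∫ σ, N σ ^ (-(n : ℝ)) ∂T
  set B := ∫ σ, N σ ^ (-((n : ℝ) + q)) ∂T
  set C := ∫ σ, N σ ^ p ∂T
  set w := T.real univ
  simp only [smul_eq_mul]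
  have hcw : 0 < w⁻¹ * C := by positivity
  set m := (w⁻¹ * C) ^ (1 / p) with hm
  have hmpos : 0 < m := Real.rpow_pos_of_pos hcw _
  have hmp : m ^ (-p) = w * C⁻¹ := by
    rw [hm, ← Real.rpow_mul hcw.le]
    have : 1 / p * -p = -1 := by field_simp
    rw [this, Real.rpow_neg_one, mul_inv, inv_inv]
  have hk := key m hmpos
  rw [hmp, Real.rpow_add hmpos] at hk
  have e : w - w * C⁻¹ * C = 0 := by field_simp; ring
  rw [e, mul_zero] at hk
  have hmn : 0 < m ^ (n : ℝ) := Real.rpow_pos_of_pos hmpos _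
  have hmq : 0 < m ^ q := Real.rpow_pos_of_pos hmpos _
  have hAB : A ≤ m ^ q * B := by
    by_contra! hlt
    have := mul_lt_mul_of_pos_left hlt hmn
    nlinarith
  have hm2 : m = (m ^ q) ^ (1 / q) := by
    rw [← Real.rpow_mul hmpos.le, mul_one_div_cancel hq.ne', Real.rpow_one]
  rw [hm2, ← Real.mul_rpow (by positivity) hmq.le]
  refine Real.rpow_le_rpow (by positivity) ?_ (by positivity)
  have : (A / n)⁻¹ * (B / (n + q)) * m ^ q = (n / (n + q)) * ((m ^ q * B) / A) := by
    field_simp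
  rw [this]
  refine le_mul_of_one_le_right (by positivity) ?_
  rwa [le_div_iff₀ hA, one_mul]
end
end
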